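/- Extension into a weighted Sobolev space (converse estimate): Let n, d ∈ ℕ, p ∈ (1,∞), r ∈ [1,p), l ∈ ℕ with l > d/r, and let γ be a weight on ℝ^{n+d} with γ^p ∈ A^{loc}_{p/r}(ℝ^{n+d}). Define γ̂_{k,m} := ‖γ‖_{L_p(Ξ^{d,n}_{k,m})} and γ_k(x) := 2^{k(l + n/p)}·Σ_{m∈ℤⁿ} χ_{Q̃^n_{k,m}}(x)·γ̂_{k,m}. Then for every φ ∈ B̃^l_{p,p,r}(ℝⁿ,{γ_k}) there exists f ∈ W^l_p(ℝ^{n+d},γ) such that φ = tr|_{y=0} f and ‖f | W^l_p(ℝ^{n+d},γ)‖ ≤ C·‖φ | B̃^l_{p,p,r}(ℝⁿ,{γ_k})‖ with C independent of φ. -/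

import Mathlib

open MeasureTheory ENNReal Filter
open scoped Classical

noncomputable section

/-- `ℓ_q` quasinorm of a family of extended nonnegative reals (supremum when `q = ∞`). -/
def lqNorm {ι : Type*} (q : ℝ≥0∞) (c : ι → ℝ≥0∞) : ℝ≥0∞ :=
  if q = ∞ then ⨆ i, c i else (∑' i, c i ^ q.toReal) ^ (1 / q.toReal)

/-- `L_p` quasinorm of an `ℝ≥0∞`-valued function (essential supremum when `p = ∞`). -/
def lpNormE {α : Type*} [MeasurableSpace α] (p : ℝ≥0∞) (μ : Measure α) (f : α → ℝ≥0∞) : ℝ≥0∞ :=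
  if p = ∞ then essSup f μ else (∫⁻ x, f x ^ p.toReal ∂μ) ^ (1 / p.toReal)

abbrev Rn (n : ℕ) := Fin n → ℝ

/-- Open cube centred at `x` of half-side `s` (i.e. `x + s·Iⁿ`). -/
def openCube {n : ℕ} (x : Rn n) (s : ℝ) : Set (Rn n) := {y | ∀ i, |y i - x i| < s}

/-- Open axis-parallel cube with lower corner `c` and side `s`. -/
def cubeAt {n : ℕ} (c : Rn n) (s : ℝ) : Set (Rn n) := {x | ∀ i, c i < x i ∧ x i < c i + s}

/-- Open dyadic cube `Q^n_{k,m}` of side `2^{-k}`. -/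
def dyadicCube (n k : ℕ) (m : Fin n → ℤ) : Set (Rn n) :=
  {x | ∀ i, (m i : ℝ) / 2 ^ k < x i ∧ x i < ((m i : ℝ) + 1) / 2 ^ k}

/-- Half-open dyadic cube `Q̃^n_{k,m}`. -/
def dyadicCubeHalf (n k : ℕ) (m : Fin n → ℤ) : Set (Rn n) :=
  {x | ∀ i, (m i : ℝ) / 2 ^ k ≤ x i ∧ x i < ((m i : ℝ) + 1) / 2 ^ k}

def dyadicCenter (n k : ℕ) (m : Fin n → ℤ) : Rn n := fun i => ((m i : ℝ) + 1 / 2) / 2 ^ k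

/-- The concentric dilate `c·Q^n_{k,m}` of a dyadic cube. -/
def dilatedCube (n k : ℕ) (m : Fin n → ℤ) (c : ℝ) : Set (Rn n) :=
  openCube (dyadicCenter n k m) (c / 2 ^ (k + 1))

def euclNorm {d : ℕ} (y : Rn d) : ℝ := Real.sqrt (∑ i, y i ^ 2)

/-- The difference `Δ^l(h)g(x)`. -/
def diffl {n : ℕ} (l : ℕ) (h : Rn n) (g : Rn n → ℝ) (x : Rn n) : ℝ :=
  ∑ j ∈ Finset.range (l + 1), ((l.choose j : ℝ) * (-1 : ℝ) ^ (l + j)) * g (x + (j : ℝ) • h)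

/-- The difference `Δ^l(h,Ω)g(x)`, vanishing unless the segment `[x, x + l·h]` lies in `Ω`. -/
def difflOn {n : ℕ} (l : ℕ) (Ω : Set (Rn n)) (h : Rn n) (g : Rn n → ℝ) (x : Rn n) : ℝ :=
  if ∀ τ ∈ Set.Icc (0 : ℝ) 1, x + (τ * l) • h ∈ Ω then diffl l h g x else 0

/-- `δ^l_r(Q)g`, where `s` is the side length of the cube `Q`. -/
def deltaE (n l : ℕ) (r : ℝ≥0∞) (s : ℝ) (Q : Set (Rn n)) (g : Rn n → ℝ) : ℝ≥0∞ :=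
  ENNReal.ofReal s ^ (-(2 * (n : ℝ)) / r.toReal) *
    eLpNorm (fun hx : Rn n × Rn n => diffl l hx.1 g hx.2) r
      ((volume.restrict (openCube (0 : Rn n) s)).prod (volume.restrict Q))

/-- `δ^l_r(Q,Ω)g`, where `s` is the side length of the cube `Q`. -/
def deltaEOn (n l : ℕ) (r : ℝ≥0∞) (s : ℝ) (Q Ω : Set (Rn n)) (g : Rn n → ℝ) : ℝ≥0∞ :=
  ENNReal.ofReal s ^ (-(2 * (n : ℝ)) / r.toReal) *
    eLpNorm (fun hx : Rn n × Rn n => difflOn l Ω hx.1 g hx.2) r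
      ((volume.restrict (openCube (0 : Rn n) s)).prod (volume.restrict Q))

/-- `Δ̄^l_r(s)g(x)`. -/
def barDelta (n l : ℕ) (r : ℝ≥0∞) (s : ℝ) (g : Rn n → ℝ) (x : Rn n) : ℝ≥0∞ :=
  ENNReal.ofReal s ^ (-(n : ℝ) / r.toReal) *
    eLpNorm (fun h : Rn n => diffl l h g x) r (volume.restrict (openCube (0 : Rn n) s))

/-- Membership in `L_r^{loc}(ℝⁿ)`. -/
def MemLrLoc (n : ℕ) (r : ℝ≥0∞) (φ : Rn n → ℝ) : Prop :=
  Measurable φ ∧ ∀ K : Set (Rn n), IsCompact K → eLpNorm φ r (volume.restrict K) < ∞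

def IsWeight {n : ℕ} (w : Rn n → ℝ) : Prop := Measurable w ∧ ∀ x, 0 < w x

/-- A `p`-admissible weight sequence. -/
def pAdmissible (n : ℕ) (p : ℝ≥0∞) (t : ℕ → Rn n → ℝ) : Prop :=
  ∀ k, IsWeight (t k) ∧ MemLrLoc n p (t k)

/-- The multiple sequence `t_{k,m} = ‖t_k‖_{L_p(Q^n_{k,m})}` associated with a weight sequence. -/
def tkm (n : ℕ) (p : ℝ≥0∞) (t : ℕ → Rn n → ℝ) (k : ℕ) (m : Fin n → ℤ) : ℝ≥0∞ :=
  eLpNorm (t k) p (volume.restrict (dyadicCube n k m))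

/-- The weight `t̄_k` built from a multiple sequence `T`. -/
def tbarOf (n : ℕ) (p : ℝ≥0∞) (T : ℕ → (Fin n → ℤ) → ℝ≥0∞) (k : ℕ) (x : Rn n) : ℝ≥0∞ :=
  (2 : ℝ≥0∞) ^ (((k * n : ℕ) : ℝ) / p.toReal) *
    ∑' m : Fin n → ℤ, (dyadicCubeHalf n k m).indicator (fun _ => T k m) x

/-- `(2^{kn} ∫_Q f^e)^{1/e}`, with the essential supremum modification for `e = ∞`. -/
def avgNorm (n k : ℕ) (e : ℝ≥0∞) (Q : Set (Rn n)) (f : Rn n → ℝ≥0∞) : ℝ≥0∞ :=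
  if e = ∞ then essSup f (volume.restrict Q)
  else ((2 : ℝ≥0∞) ^ (k * n) * ∫⁻ x in Q, f x ^ e.toReal) ^ (1 / e.toReal)

/-- Conditions (2.14)–(2.16) of the class `X^{α₃}_{α,σ,p}`, expressed for a multiple
sequence `T`. -/
def MemXseq (n : ℕ) (α₁ α₂ α₃ : ℝ) (σ₁ σ₂ p : ℝ≥0∞) (T : ℕ → (Fin n → ℤ) → ℝ≥0∞) : Prop :=
  (∃ C₁ : ℝ≥0∞, 0 < C₁ ∧ C₁ < ∞ ∧ ∀ k j : ℕ, k ≤ j → ∀ m : Fin n → ℤ,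
    avgNorm n k p (dyadicCube n k m) (tbarOf n p T k) *
      avgNorm n k σ₁ (dyadicCube n k m) (fun x => (tbarOf n p T j x)⁻¹) ≤
      C₁ * (2 : ℝ≥0∞) ^ (α₁ * ((k : ℝ) - (j : ℝ)))) ∧
  (∃ C₂ : ℝ≥0∞, 0 < C₂ ∧ C₂ < ∞ ∧ ∀ k j : ℕ, k ≤ j → ∀ m : Fin n → ℤ,
    (avgNorm n k p (dyadicCube n k m) (tbarOf n p T k))⁻¹ *
      avgNorm n k σ₂ (dyadicCube n k m) (tbarOf n p T j) ≤
      C₂ * (2 : ℝ≥0∞) ^ (α₂ * ((j : ℝ) - (k : ℝ)))) ∧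
  (∀ k : ℕ, ∀ m m' : Fin n → ℤ, (∀ i, |m i - m' i| ≤ 1) →
    0 < T k m ∧ T k m ≤ (2 : ℝ≥0∞) ^ (α₃ : ℝ) * T k m')

/-- The weighted class `X^{α₃}_{α,σ,p}` of weight sequences. -/
def MemX (n : ℕ) (α₁ α₂ α₃ : ℝ) (σ₁ σ₂ p : ℝ≥0∞) (t : ℕ → Rn n → ℝ) : Prop :=
  pAdmissible n p t ∧ MemXseq n α₁ α₂ α₃ σ₁ σ₂ p (tkm n p t)

/-- Quasinorm of `B̃^l_{p,q,r}(ℝⁿ, T)` with an `ℝ≥0∞`-valued weight sequence `T`. -/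
def tildeBnormE (n l : ℕ) (p q r : ℝ≥0∞) (T : ℕ → Rn n → ℝ≥0∞) (φ : Rn n → ℝ) : ℝ≥0∞ :=
  lqNorm q (fun k : ℕ =>
    lpNormE p volume (fun x =>
      T (k + 1) x *
        deltaE n l r ((2 : ℝ) ^ (1 - ((k : ℤ) + 1))) (openCube x ((2 : ℝ) ^ (-((k : ℤ) + 1)))) φ)) +
  lpNormE p volume (fun x => T 0 x * eLpNorm φ r (volume.restrict (openCube x 1)))

/-- Quasinorm of `B̃^l_{p,q,r}(ℝⁿ, {t_k})`. -/
def tildeBnorm (n l : ℕ) (p q r : ℝ≥0∞) (t : ℕ → Rn n → ℝ) (φ : Rn n → ℝ) : ℝ≥0∞ :=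
  tildeBnormE n l p q r (fun k x => ENNReal.ofReal (t k x)) φ

/-- Membership in `B̃^l_{p,q,r}(ℝⁿ, {t_k})`. -/
def MemTildeB (n l : ℕ) (p q r : ℝ≥0∞) (t : ℕ → Rn n → ℝ) (φ : Rn n → ℝ) : Prop :=
  MemLrLoc n r φ ∧ tildeBnorm n l p q r t φ < ∞

/-- Quasinorm of `B̄^l_{p,q,r}(ℝⁿ, {t_k})`. -/
def barBnorm (n l : ℕ) (p q r : ℝ≥0∞) (t : ℕ → Rn n → ℝ) (φ : Rn n → ℝ) : ℝ≥0∞ :=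
  lqNorm q (fun k : ℕ =>
    lpNormE p volume (fun x =>
      ENNReal.ofReal (t (k + 1) x) * barDelta n l r ((2 : ℝ) ^ (-((k : ℤ) + 1))) φ x)) +
  lpNormE p volume (fun x => ENNReal.ofReal (t 0 x) * eLpNorm φ r (volume.restrict (openCube x 1)))

/-- Membership in `B̄^l_{p,q,r}(ℝⁿ, {t_k})`. -/
def MemBarB (n l : ℕ) (p q r : ℝ≥0∞) (t : ℕ → Rn n → ℝ) (φ : Rn n → ℝ) : Prop :=
  MemLrLoc n r φ ∧ barBnorm n l p q r t φ < ∞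

/-- The class `A^{loc}_∞`. -/
def MemAlocInfty (n : ℕ) (w : Rn n → ℝ) : Prop :=
  ∃ α : ℝ, α ∈ Set.Ioo (0 : ℝ) 1 ∧ ∃ M : ℝ≥0∞, M < ∞ ∧
    ∀ (c : Rn n) (s : ℝ), 0 < s → s ≤ 1 →
      ∀ F : Set (Rn n), F ⊆ cubeAt c s → MeasurableSet F →
        ENNReal.ofReal α * volume (cubeAt c s) ≤ volume F →
        (∫⁻ x in cubeAt c s, ENNReal.ofReal (w x)) ≤ M * ∫⁻ x in F, ENNReal.ofReal (w x)

/-- The class `A^{loc}_1`. -/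
def MemAloc1 (n : ℕ) (w : Rn n → ℝ) : Prop :=
  ∃ C : ℝ≥0∞, C < ∞ ∧ ∀ (c : Rn n) (s : ℝ), 0 < s → s ≤ 1 →
    ∀ᵐ x ∂volume.restrict (cubeAt c s),
      (∫⁻ y in cubeAt c s, ENNReal.ofReal (w y)) ≤ C * volume (cubeAt c s) * ENNReal.ofReal (w x)

/-- The class `A^{loc}_{p₀}` for `p₀ > 1`. -/
def MemAlocGt (n : ℕ) (p₀ : ℝ) (w : Rn n → ℝ) : Prop :=
  ∃ C : ℝ≥0∞, C < ∞ ∧ ∀ (c : Rn n) (s : ℝ), 0 < s → s ≤ 1 →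
    ((volume (cubeAt c s))⁻¹ * ∫⁻ y in cubeAt c s, ENNReal.ofReal (w y)) *
      ((volume (cubeAt c s))⁻¹ *
        ∫⁻ y in cubeAt c s, ENNReal.ofReal (w y) ^ (-(1 : ℝ) / (p₀ - 1))) ^ (p₀ - 1) ≤ C

/-- The class `A^{loc}_{p₀}` for `p₀ ∈ [1,∞)`. -/
def MemAlocP (n : ℕ) (p₀ : ℝ) (w : Rn n → ℝ) : Prop :=
  if p₀ = 1 then MemAloc1 n w else MemAlocGt n p₀ w

/-- The class `{}^{loc}Y^{α₃}_{α₁,α₂}` of weight sequences of variable smoothness. -/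
def MemLocY (n : ℕ) (α₁ α₂ α₃ : ℝ) (s : ℕ → Rn n → ℝ) : Prop :=
  (∀ k, IsWeight (s k)) ∧
  (∃ C : ℝ, 0 < C ∧ ∀ j k : ℕ, j ≤ k → ∀ x : Rn n,
    C⁻¹ * (2 : ℝ) ^ (α₁ * ((k : ℝ) - (j : ℝ))) ≤ s k x / s j x ∧
      s k x / s j x ≤ C * (2 : ℝ) ^ (α₂ * ((k : ℝ) - (j : ℝ)))) ∧
  (∀ k : ℕ, ∀ x y : Rn n, euclNorm (x - y) ≤ (2 : ℝ) ^ (-(k : ℤ)) →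
    s k x ≤ (2 : ℝ) ^ α₃ * s k y)

/-- The set `Ξ^{d,n}_{k,m} = Q^n_{k,m} × (2^{-k}B^d ∖ 2^{-k-1}B^d) ⊂ ℝ^{n+d}`. -/
def Xi (n d k : ℕ) (m : Fin n → ℤ) : Set (Rn (n + d)) :=
  {z | (fun i => z (Fin.castAdd d i)) ∈ dyadicCube n k m ∧
       euclNorm (fun i : Fin d => z (Fin.natAdd n i)) < (2 : ℝ) ^ (-(k : ℤ)) ∧
       (2 : ℝ) ^ (-(k : ℤ) - 1) ≤ euclNorm (fun i : Fin d => z (Fin.natAdd n i))}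

/-- The multiple sequence `γ̂_{k,m} = ‖γ‖_{L_p(Ξ^{d,n}_{k,m})}` generated by a weight `γ`. -/
def gammaHat (n d : ℕ) (p : ℝ≥0∞) (γ : Rn (n + d) → ℝ) (k : ℕ) (m : Fin n → ℤ) : ℝ≥0∞ :=
  eLpNorm γ p (volume.restrict (Xi n d k m))

def delta1Good (n d : ℕ) (p : ℝ≥0∞) (γ : Rn (n + d) → ℝ) (δ : ℝ) : Prop :=
  ∃ C : ℝ≥0∞, C < ∞ ∧ ∀ k j : ℕ, k ≤ j → ∀ m : Fin n → ℤ,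
    (∑' m' : {m' : Fin n → ℤ // dyadicCube n j m' ⊆ dyadicCube n k m},
        gammaHat n d p γ j m'.1 ^ p.toReal) ≤
      C * (2 : ℝ≥0∞) ^ ((((k : ℝ) - (j : ℝ)) * (d : ℝ)) * δ) * gammaHat n d p γ k m ^ p.toReal

/-- `δ₁(γ,n,d)`. -/
def delta1 (n d : ℕ) (p : ℝ≥0∞) (γ : Rn (n + d) → ℝ) : ℝ :=
  sSup {δ : ℝ | 0 < δ ∧ delta1Good n d p γ δ}

def delta2Good (n d : ℕ) (p : ℝ≥0∞) (γ : Rn (n + d) → ℝ) (δ : ℝ) : Prop :=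
  ∃ C : ℝ≥0∞, C < ∞ ∧ ∀ k j : ℕ, k ≤ j → ∀ m : Fin n → ℤ,
    ∀ G : Set (Fin n → ℤ), (∀ m' ∈ G, dyadicCube n j m' ⊆ dyadicCube n k m) →
      (∑' m' : G, gammaHat n d p γ j m'.1 ^ p.toReal) ≤
        C * (volume (⋃ m' ∈ G, dyadicCube n j m') / volume (dyadicCube n k m)) ^ δ *
          ∑' m' : {m' : Fin n → ℤ // dyadicCube n j m' ⊆ dyadicCube n k m},
            gammaHat n d p γ j m'.1 ^ p.toReal

/-- `δ₂(γ,n,d)`. -/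
def delta2 (n d : ℕ) (p : ℝ≥0∞) (γ : Rn (n + d) → ℝ) : ℝ :=
  sSup {δ : ℝ | 0 < δ ∧ delta2Good n d p γ δ}

/-- The cardinal B-spline of degree `deg` with knots `0, 1, …, deg + 1`. -/
def cardB : ℕ → ℝ → ℝ
  | 0, x => if 0 ≤ x ∧ x < 1 then 1 else 0
  | (d + 1), x => (x / (d + 1)) * cardB d x + (((d : ℝ) + 2 - x) / (d + 1)) * cardB d (x - 1)

/-- The tensor-product B-spline `N^{deg}_{k,m}` on `ℝⁿ`. -/
def Bspl (n deg k : ℕ) (m : Fin n → ℤ) (x : Rn n) : ℝ :=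
  ∏ i, cardB deg (2 ^ k * x i - (m i : ℝ))

/-- The spline `Σ_m β_m N^{deg}_{k,m}`. -/
def splineSum (n deg k : ℕ) (β : (Fin n → ℤ) → ℝ) (x : Rn n) : ℝ :=
  ∑' m, β m * Bspl n deg k m x

/-- A dyadic spline of degree `deg` (an element of `Σ^{deg} = ⋃_k Σ^{deg}_k`). -/
def IsSplineFn (n deg : ℕ) (S : Rn n → ℝ) : Prop :=
  ∃ (k : ℕ) (β : (Fin n → ℤ) → ℝ), S = splineSum n deg k β

/-- The weighted best spline approximation `s_k(φ)` by splines of degree `deg`. -/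
def sApprox (n deg : ℕ) (p r : ℝ≥0∞) (T : ℕ → (Fin n → ℤ) → ℝ≥0∞) (φ : Rn n → ℝ) (k : ℕ) :
    ℝ≥0∞ :=
  ⨅ β : (Fin n → ℤ) → ℝ,
    lqNorm p (fun m => T k m *
      eLpNorm (fun x => φ x - splineSum n deg k β x) r (volume.restrict (dyadicCube n k m)))

/-- `s_j(φ)` for `j ∈ {-1, 0, 1, 2, …}`, including the term `s_{-1}`. -/
def sApproxZ (n deg : ℕ) (p r : ℝ≥0∞) (T : ℕ → (Fin n → ℤ) → ℝ≥0∞) (φ : Rn n → ℝ) (j : ℤ) :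
    ℝ≥0∞ :=
  if j < 0 then
    lqNorm p (fun m => T 0 m * eLpNorm φ r (volume.restrict (dyadicCube n 0 m)))
  else sApprox n deg p r T φ j.toNat

/-- Local best polynomial approximation `E_l(φ,Q)_r` by polynomials of total degree `< l`. -/
def bestApproxE (n l : ℕ) (r : ℝ≥0∞) (φ : Rn n → ℝ) (Q : Set (Rn n)) : ℝ≥0∞ :=
  ⨅ P : {P : MvPolynomial (Fin n) ℝ // P.totalDegree < l},
    eLpNorm (fun x => φ x - MvPolynomial.eval x P.1) r (volume.restrict Q)

/-- The modulus of continuity `ω_l(φ,Q)_r`. -/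
def modulusE (n l : ℕ) (r : ℝ≥0∞) (φ : Rn n → ℝ) (Q : Set (Rn n)) : ℝ≥0∞ :=
  ⨆ h : Rn n, eLpNorm (difflOn l Q h φ) r (volume : Measure (Rn n))

def partialDeriv {N : ℕ} (i : Fin N) (ψ : Rn N → ℝ) : Rn N → ℝ :=
  fun x => fderiv ℝ ψ x (Pi.single i 1)

def iterPD {N : ℕ} : List (Fin N) → (Rn N → ℝ) → Rn N → ℝ
  | [], ψ => ψ
  | i :: L, ψ => partialDeriv i (iterPD L ψ)

def multiIdxList {N : ℕ} (α : Fin N → ℕ) : List (Fin N) :=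
  (List.finRange N).foldr (fun i L => List.replicate (α i) i ++ L) []

/-- Iterated partial derivative `D^α`. -/
def multiDeriv {N : ℕ} (α : Fin N → ℕ) (ψ : Rn N → ℝ) : Rn N → ℝ :=
  iterPD (multiIdxList α) ψ

/-- `g` is the weak (Sobolev) derivative `D^α f`. -/
def IsWeakDeriv {N : ℕ} (α : Fin N → ℕ) (f g : Rn N → ℝ) : Prop :=
  ∀ ψ : Rn N → ℝ, ContDiff ℝ (⊤ : ℕ∞) ψ → HasCompactSupport ψ →
    ∫ x, f x * multiDeriv α ψ x = (-1 : ℝ) ^ (∑ i, α i) * ∫ x, g x * ψ x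

/-- The weighted Sobolev norm `Σ_{|α| ≤ l} ‖γ · D^α f‖_{L_p}` computed from a system `D` of
weak derivatives. -/
def sobNorm (N : ℕ) (p : ℝ≥0∞) (l : ℕ) (γ : Rn N → ℝ) (D : (Fin N → ℕ) → Rn N → ℝ) : ℝ≥0∞ :=
  ∑' α : Fin N → ℕ,
    if (∑ i, α i) ≤ l then eLpNorm (fun x => γ x * D α x) p volume else 0

/-- Membership in the weighted Sobolev space `W^l_p(ℝ^N, γ)`, witnessed by the system `D`
of weak derivatives of `f`. -/
def MemW (N : ℕ) (p : ℝ≥0∞) (l : ℕ) (γ : Rn N → ℝ) (f : Rn N → ℝ)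
    (D : (Fin N → ℕ) → Rn N → ℝ) : Prop :=
  MeasureTheory.LocallyIntegrable f volume ∧ D 0 = f ∧
    (∀ α : Fin N → ℕ, (∑ i, α i) ≤ l →
      MeasureTheory.LocallyIntegrable (D α) volume ∧ IsWeakDeriv α f (D α)) ∧
    sobNorm N p l γ D < ∞

/-- `φ` is the trace of `f` on the plane `y = 0`. -/
def IsTraceSob {n d : ℕ} (f : Rn (n + d) → ℝ) (φ : Rn n → ℝ) : Prop :=
  ∃ f' : Rn (n + d) → ℝ, f' =ᵐ[volume] f ∧
    ∀ (c : Rn n) (s : ℝ), 0 < s →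
      Filter.Tendsto (fun y : Rn d => ∫ x in cubeAt c s, |f' (Fin.append x y) - φ x|)
        (nhds 0) (nhds 0)

/-- The weight sequence `γ_k(x) = 2^{k(l+n/p)} Σ_m χ_{Q̃^n_{k,m}}(x) γ̂_{k,m}`. -/
def gammaSeq (n d : ℕ) (p : ℝ≥0∞) (l : ℕ) (γ : Rn (n + d) → ℝ) (k : ℕ) (x : Rn n) : ℝ≥0∞ :=
  (2 : ℝ≥0∞) ^ ((k : ℝ) * ((l : ℝ) + (n : ℝ) / p.toReal)) *
    ∑' m : Fin n → ℤ, (dyadicCubeHalf n k m).indicator (fun _ => gammaHat n d p γ k m) x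

/-- Conjugate exponent in `ℝ≥0∞`. -/
def conjE (e : ℝ≥0∞) : ℝ≥0∞ := (1 - e⁻¹)⁻¹

/-- The exponent `p_θ`. -/
def pTheta (p θ : ℝ≥0∞) : ℝ≥0∞ := if θ = ∞ ∧ p = ∞ then 1 else p / θ

/-! ## Part A: iterated partial derivatives -/

lemma smooth_partialDeriv {N : ℕ} (i : Fin N) {g : Rn N → ℝ} (hg : ContDiff ℝ (⊤ : ℕ∞) g) :
    ContDiff ℝ (⊤ : ℕ∞) (partialDeriv i g) := by
  have h : ContDiff ℝ (⊤ : ℕ∞) (fderiv ℝ g) := (contDiff_infty_iff_fderiv.1 hg).2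
  exact h.clm_apply contDiff_const

lemma smooth_iterPD {N : ℕ} (L : List (Fin N)) {g : Rn N → ℝ} (hg : ContDiff ℝ (⊤ : ℕ∞) g) :
    ContDiff ℝ (⊤ : ℕ∞) (iterPD L g) := by
  induction L with
  | nil => exact hg
  | cons i L ih => exact smooth_partialDeriv i ih

lemma smooth_differentiable {N : ℕ} {g : Rn N → ℝ} (hg : ContDiff ℝ (⊤ : ℕ∞) g) :
    Differentiable ℝ g := hg.differentiable (by simp)

lemma hcs_partialDeriv {N : ℕ} (i : Fin N) {g : Rn N → ℝ} (hg : HasCompactSupport g) :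
    HasCompactSupport (partialDeriv i g) := hg.fderiv_apply (𝕜 := ℝ) _

lemma hcs_iterPD {N : ℕ} (L : List (Fin N)) {g : Rn N → ℝ} (hg : HasCompactSupport g) :
    HasCompactSupport (iterPD L g) := by
  induction L with
  | nil => exact hg
  | cons i L ih => exact hcs_partialDeriv i ih

lemma tsupport_iterPD {N : ℕ} (L : List (Fin N)) (g : Rn N → ℝ) :
    tsupport (iterPD L g) ⊆ tsupport g := by
  induction L with
  | nil => exact subset_rfl
  | cons i L ih =>
    refine subset_trans ?_ ih
    exact tsupport_fderiv_apply_subset ℝ _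

lemma iterPD_append {N : ℕ} (L₁ L₂ : List (Fin N)) (g : Rn N → ℝ) :
    iterPD (L₁ ++ L₂) g = iterPD L₁ (iterPD L₂ g) := by
  induction L₁ with
  | nil => rfl
  | cons i L ih => simp [iterPD, ih]

lemma iterPD_scale {N : ℕ} (L : List (Fin N)) {g : Rn N → ℝ} (hg : ContDiff ℝ (⊤ : ℕ∞) g)
    (a c : ℝ) :
    iterPD L (fun x => a * g (c • x)) = fun x => a * c ^ L.length * iterPD L g (c • x) := by
  induction L with
  | nil => simp [iterPD]
  | cons i L ih =>
    simp only [iterPD, ih, List.length_cons]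
    funext x
    unfold partialDeriv
    have h1 : HasFDerivAt (iterPD L g) (fderiv ℝ (iterPD L g) (c • x)) (c • x) :=
      (smooth_differentiable (smooth_iterPD L hg) _).hasFDerivAt
    have h2 : HasFDerivAt (fun x : Rn N => c • x) (c • ContinuousLinearMap.id ℝ (Rn N)) x :=
      (hasFDerivAt_id x).const_smul c
    have h3 := (h1.comp x h2).const_mul (a * c ^ L.length)
    have h4 : (fun x => a * c ^ L.length * iterPD L g (c • x)) =
      fun y => a * c ^ L.length * (iterPD L g ∘ fun x => c • x) y := rfl
    rw [h4, h3.fderiv]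
    simp
    ring

lemma iterPD_sum {N : ℕ} (L : List (Fin N)) {g : ℕ → Rn N → ℝ}
    (hg : ∀ j, ContDiff ℝ (⊤ : ℕ∞) (g j)) (s : Finset ℕ) :
    iterPD L (fun x => ∑ j ∈ s, g j x) = fun x => ∑ j ∈ s, iterPD L (g j) x := by
  induction L with
  | nil => rfl
  | cons i L ih =>
    simp only [iterPD, ih]
    funext x
    unfold partialDeriv
    rw [fderiv_fun_sum (fun j _ => smooth_differentiable (smooth_iterPD L (hg j)) x)]
    simp

lemma integral_iterPD {N : ℕ} (L : List (Fin N)) {ψ : Rn N → ℝ}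
    (hψ : ContDiff ℝ (⊤ : ℕ∞) ψ) (hc : HasCompactSupport ψ) :
    ∀ {S : Rn N → ℝ}, ContDiff ℝ (⊤ : ℕ∞) S →
    ∫ x, S x * iterPD L ψ x = (-1 : ℝ) ^ L.length * ∫ x, iterPD L.reverse S x * ψ x := by
  induction L with
  | nil => intro S hS; simp [iterPD]
  | cons i L ih =>
    intro S hS
    have hs := smooth_iterPD L hψ
    have hcs := hcs_iterPD L hc
    have e1 : ∫ x, S x * iterPD (i :: L) ψ x = - ∫ x, partialDeriv i S x * iterPD L ψ x := by
      simp only [iterPD, partialDeriv]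
      apply integral_mul_fderiv_eq_neg_fderiv_mul_of_integrable
      · exact Continuous.integrable_of_hasCompactSupport
          ((smooth_partialDeriv i hS).continuous.mul hs.continuous) hcs.mul_left
      · exact Continuous.integrable_of_hasCompactSupport
          (hS.continuous.mul (smooth_partialDeriv i hs).continuous)
          (hcs_partialDeriv i hcs).mul_left
      · exact Continuous.integrable_of_hasCompactSupport
          (hS.continuous.mul hs.continuous) hcs.mul_left
      · exact fun x _ => smooth_differentiable hS x
      · exact fun x _ => smooth_differentiable hs x
    rw [e1, ih (smooth_partialDeriv i hS), List.reverse_cons, iterPD_append]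
    simp [iterPD, pow_succ]

/-- The first `n` coordinates. -/
def xP {n d : ℕ} (z : Rn (n + d)) : Rn n := fun i => z (Fin.castAdd d i)
/-- The last `d` coordinates. -/
def yP {n d : ℕ} (z : Rn (n + d)) : Rn d := fun i => z (Fin.natAdd n i)

def xPL (n d : ℕ) : Rn (n + d) →L[ℝ] Rn n :=
  ContinuousLinearMap.pi fun i => ContinuousLinearMap.proj (Fin.castAdd d i)
def yPL (n d : ℕ) : Rn (n + d) →L[ℝ] Rn d :=
  ContinuousLinearMap.pi fun i => ContinuousLinearMap.proj (Fin.natAdd n i)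

lemma xPL_apply {n d : ℕ} (z : Rn (n + d)) : xPL n d z = xP z := rfl
lemma yPL_apply {n d : ℕ} (z : Rn (n + d)) : yPL n d z = yP z := rfl

lemma xP_continuous {n d : ℕ} : Continuous (xP : Rn (n + d) → Rn n) := (xPL n d).continuous
lemma yP_continuous {n d : ℕ} : Continuous (yP : Rn (n + d) → Rn d) := (yPL n d).continuous

lemma smooth_tensor {n d : ℕ} {A : Rn n → ℝ} {B : Rn d → ℝ} (hA : ContDiff ℝ (⊤ : ℕ∞) A)
    (hB : ContDiff ℝ (⊤ : ℕ∞) B) :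
    ContDiff ℝ (⊤ : ℕ∞) (fun z : Rn (n + d) => A (xP z) * B (yP z)) :=
  (hA.comp (xPL n d).contDiff).mul (hB.comp (yPL n d).contDiff)

lemma xPL_single_cast {n d : ℕ} (i : Fin n) :
    xPL n d (Pi.single (Fin.castAdd d i) 1) = Pi.single i 1 := by
  ext j; simp [xPL, Pi.single_apply]
lemma yPL_single_cast {n d : ℕ} (i : Fin n) :
    yPL n d (Pi.single (Fin.castAdd d i) 1) = 0 := by
  ext j
  simp only [yPL, ContinuousLinearMap.coe_pi', ContinuousLinearMap.proj_apply, Pi.zero_apply]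
  rw [Pi.single_apply, if_neg]
  intro h; have := congrArg Fin.val h; simp at this; omega
lemma yPL_single_nat {n d : ℕ} (i : Fin d) :
    yPL n d (Pi.single (Fin.natAdd n i) 1) = Pi.single i 1 := by
  ext j; simp [yPL, Pi.single_apply]
lemma xPL_single_nat {n d : ℕ} (i : Fin d) :
    xPL n d (Pi.single (Fin.natAdd n i) 1) = 0 := by
  ext j
  simp only [xPL, ContinuousLinearMap.coe_pi', ContinuousLinearMap.proj_apply, Pi.zero_apply]
  rw [Pi.single_apply, if_neg]
  intro h; have := congrArg Fin.val h; simp at this; omega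

lemma partialDeriv_tensor {n d : ℕ} (i : Fin (n + d)) {A : Rn n → ℝ} {B : Rn d → ℝ}
    (hA : ContDiff ℝ (⊤ : ℕ∞) A) (hB : ContDiff ℝ (⊤ : ℕ∞) B) (z : Rn (n + d)) :
    partialDeriv i (fun z : Rn (n + d) => A (xP z) * B (yP z)) z =
      A (xP z) * fderiv ℝ B (yP z) (yPL n d (Pi.single i 1)) +
      B (yP z) * fderiv ℝ A (xP z) (xPL n d (Pi.single i 1)) := by
  have h1 : HasFDerivAt (fun z : Rn (n + d) => A (xP z))
      ((fderiv ℝ A (xP z)).comp (xPL n d)) z :=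
    (smooth_differentiable hA (xP z)).hasFDerivAt.comp z (xPL n d).hasFDerivAt
  have h2 : HasFDerivAt (fun z : Rn (n + d) => B (yP z))
      ((fderiv ℝ B (yP z)).comp (yPL n d)) z :=
    (smooth_differentiable hB (yP z)).hasFDerivAt.comp z (yPL n d).hasFDerivAt
  unfold partialDeriv
  have h3 : HasFDerivAt (fun z : Rn (n + d) => A (xP z) * B (yP z)) _ z := h1.mul h2
  rw [h3.fderiv]
  simp

lemma iterPD_tensor {n d : ℕ} (L : List (Fin (n + d))) :
    ∃ (L₁ : List (Fin n)) (L₂ : List (Fin d)), L₁.length + L₂.length = L.length ∧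
      ∀ (A : Rn n → ℝ) (B : Rn d → ℝ), ContDiff ℝ (⊤ : ℕ∞) A → ContDiff ℝ (⊤ : ℕ∞) B →
        iterPD L (fun z : Rn (n + d) => A (xP z) * B (yP z)) =
          fun z => iterPD L₁ A (xP z) * iterPD L₂ B (yP z) := by
  induction L with
  | nil => exact ⟨[], [], rfl, fun A B _ _ => rfl⟩
  | cons i L ih =>
    obtain ⟨L₁, L₂, hlen, h⟩ := ih
    refine Fin.addCases (fun j => ?_) (fun j => ?_) i
    · refine ⟨j :: L₁, L₂, by simp; omega, fun A B hA hB => ?_⟩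
      simp only [iterPD, h A B hA hB]
      funext z
      rw [partialDeriv_tensor _ (smooth_iterPD L₁ hA) (smooth_iterPD L₂ hB), yPL_single_cast,
        xPL_single_cast]
      simp [partialDeriv]; ring
    · refine ⟨L₁, j :: L₂, by simp; omega, fun A B hA hB => ?_⟩
      simp only [iterPD, h A B hA hB]
      funext z
      rw [partialDeriv_tensor _ (smooth_iterPD L₁ hA) (smooth_iterPD L₂ hB), yPL_single_nat,
        xPL_single_nat]
      simp [partialDeriv]

/-- Convolution of real functions. -/
def conv {n : ℕ} (κ ρ : Rn n → ℝ) : Rn n → ℝ :=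
  MeasureTheory.convolution κ ρ (ContinuousLinearMap.mul ℝ ℝ) volume

lemma conv_apply {n : ℕ} (κ ρ : Rn n → ℝ) (x : Rn n) :
    conv κ ρ x = ∫ t, κ t * ρ (x - t) := rfl

lemma conv_apply_swap {n : ℕ} (κ ρ : Rn n → ℝ) (x : Rn n) :
    conv κ ρ x = ∫ t, κ (x - t) * ρ t := by
  rw [conv, convolution_eq_swap]; rfl

lemma smooth_conv {n : ℕ} {κ ρ : Rn n → ℝ} (hκ : ContDiff ℝ (⊤ : ℕ∞) κ)
    (hc : HasCompactSupport κ) (hρ : LocallyIntegrable ρ volume) :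
    ContDiff ℝ (⊤ : ℕ∞) (conv κ ρ) :=
  hc.contDiff_convolution_left _ hκ hρ

lemma conv_integrand {n : ℕ} {κ ρ : Rn n → ℝ} (hκ : Continuous κ)
    (hc : HasCompactSupport κ) (hρ : LocallyIntegrable ρ volume) (x : Rn n) :
    Integrable (fun t => κ t * ρ (x - t)) volume :=
  hc.convolutionExists_left (ContinuousLinearMap.mul ℝ ℝ) hκ hρ x

lemma conv_integrand_swap {n : ℕ} {κ ρ : Rn n → ℝ} (hκ : Continuous κ)
    (hc : HasCompactSupport κ) (hρ : LocallyIntegrable ρ volume) (x : Rn n) :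
    Integrable (fun t => κ (x - t) * ρ t) volume := by
  have := (conv_integrand hκ hc hρ x).comp_sub_left x
  simpa using this

lemma partialDeriv_conv {n : ℕ} (i : Fin n) {κ ρ : Rn n → ℝ} (hκ : ContDiff ℝ (⊤ : ℕ∞) κ)
    (hc : HasCompactSupport κ) (hρ : LocallyIntegrable ρ volume) :
    partialDeriv i (conv κ ρ) = conv (partialDeriv i κ) ρ := by
  funext x
  have h1 := hc.hasFDerivAt_convolution_left (ContinuousLinearMap.mul ℝ ℝ)
    (hκ.of_le (by exact_mod_cast le_top)) hρ x
  unfold partialDeriv conv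
  rw [h1.fderiv]
  unfold convolution
  rw [ContinuousLinearMap.integral_apply]
  · simp
  · exact (hc.fderiv ℝ).convolutionExists_left
      ((ContinuousLinearMap.mul ℝ ℝ).precompL (Rn n)) (hκ.continuous_fderiv (by simp)) hρ x

lemma iterPD_conv {n : ℕ} (L : List (Fin n)) {κ ρ : Rn n → ℝ} (hκ : ContDiff ℝ (⊤ : ℕ∞) κ)
    (hc : HasCompactSupport κ) (hρ : LocallyIntegrable ρ volume) :
    iterPD L (conv κ ρ) = conv (iterPD L κ) ρ := by
  induction L with
  | nil => rfl
  | cons i L ih =>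
    simp only [iterPD, ih]
    exact partialDeriv_conv i (smooth_iterPD L hκ) (hcs_iterPD L hc) hρ

/-! ## Part B: Muckenhoupt weights -/

lemma holder_weight {N : ℕ} {p₀ : ℝ} (hp₀ : 1 < p₀) {w : Rn N → ℝ} (hw : IsWeight w)
    {F : Rn N → ℝ≥0∞} (hF : Measurable F) (P : Set (Rn N)) :
    (∫⁻ z in P, F z) ^ p₀ ≤ (∫⁻ z in P, F z ^ p₀ * ENNReal.ofReal (w z)) *
      (∫⁻ z in P, ENNReal.ofReal (w z) ^ (-(1 : ℝ) / (p₀ - 1))) ^ (p₀ - 1) := by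
  have hp0 : 0 < p₀ := by linarith
  have hW : Measurable (fun z => ENNReal.ofReal (w z)) := hw.1.ennreal_ofReal
  have hWpos : ∀ z, ENNReal.ofReal (w z) ≠ 0 := fun z => by simpa using hw.2 z
  have hq : p₀.HolderConjugate (p₀ / (p₀ - 1)) := Real.HolderConjugate.conjExponent hp₀
  have h1 := ENNReal.lintegral_mul_le_Lp_mul_Lq (volume.restrict P) hq
    (f := fun z => F z * ENNReal.ofReal (w z) ^ (1 / p₀))
    (g := fun z => ENNReal.ofReal (w z) ^ (-(1 / p₀)))
    (hF.mul (hW.pow_const _)).aemeasurable (hW.pow_const _).aemeasurable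
  have e1 : ∀ z, ((fun z => F z * ENNReal.ofReal (w z) ^ (1 / p₀)) *
      (fun z => ENNReal.ofReal (w z) ^ (-(1 / p₀)))) z = F z := by
    intro z
    simp only [Pi.mul_apply]
    rw [mul_assoc, ← ENNReal.rpow_add _ _ (hWpos z) ENNReal.ofReal_ne_top]
    simp
  have e2 : ∀ z, (F z * ENNReal.ofReal (w z) ^ (1 / p₀)) ^ p₀ =
      F z ^ p₀ * ENNReal.ofReal (w z) := by
    intro z
    rw [ENNReal.mul_rpow_of_nonneg _ _ hp0.le, ← ENNReal.rpow_mul,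
      one_div_mul_cancel hp0.ne', ENNReal.rpow_one]
  have e3 : ∀ z, (ENNReal.ofReal (w z) ^ (-(1 / p₀))) ^ (p₀ / (p₀ - 1)) =
      ENNReal.ofReal (w z) ^ (-(1 : ℝ) / (p₀ - 1)) := by
    intro z
    rw [← ENNReal.rpow_mul]
    congr 1
    have : p₀ - 1 ≠ 0 := by linarith
    field_simp
  simp only [e1, e2, e3] at h1
  calc _ ≤ _ := ENNReal.rpow_le_rpow h1 hp0.le
    _ = _ := by
      rw [ENNReal.mul_rpow_of_nonneg _ _ hp0.le, ← ENNReal.rpow_mul, ← ENNReal.rpow_mul,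
        one_div_mul_cancel hp0.ne', ENNReal.rpow_one]
      congr 2
      have : p₀ - 1 ≠ 0 := by linarith
      field_simp

lemma cubeAt_isOpen {N : ℕ} (c : Rn N) (s : ℝ) : IsOpen (cubeAt c s) := by
  have : cubeAt c s = ⋂ i, {x : Rn N | c i < x i ∧ x i < c i + s} := by
    ext x; simp [cubeAt]
  rw [this]
  refine isOpen_iInter_of_finite fun i => ?_
  exact (isOpen_lt continuous_const (continuous_apply i)).inter
    (isOpen_lt (continuous_apply i) continuous_const)

lemma volume_affine {N : ℕ} (c : Rn N) {s : ℝ} (hs : 0 < s) (E : Set (Rn N)) :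
    volume {z : Rn N | s⁻¹ • (z - c) ∈ E} = ENNReal.ofReal (s ^ N) * volume E := by
  have : {z : Rn N | s⁻¹ • (z - c) ∈ E} = (fun z => z + (-c)) ⁻¹' ((fun z => s⁻¹ • z) ⁻¹' E) := by
    ext z; simp [sub_eq_add_neg]
  rw [this, measure_preimage_add_right, Measure.addHaar_preimage_smul _ (inv_ne_zero hs.ne')]
  congr 2
  simp [abs_of_pos hs]

lemma cubeAt_affine {N : ℕ} (c : Rn N) {s : ℝ} (hs : 0 < s) :
    cubeAt c s = {z : Rn N | s⁻¹ • (z - c) ∈ cubeAt (0 : Rn N) 1} := by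
  ext z
  simp only [cubeAt, Set.mem_ofPred_eq, Pi.smul_apply, Pi.sub_apply, smul_eq_mul, Pi.zero_apply,
    zero_add]
  refine forall_congr' fun i => ?_
  rw [inv_mul_lt_iff₀ hs, lt_inv_mul_iff₀ hs]
  constructor
  · rintro ⟨a, b⟩; constructor <;> linarith
  · rintro ⟨a, b⟩; constructor <;> linarith

lemma volume_cubeAt_one {N : ℕ} : volume (cubeAt (0 : Rn N) 1) = 1 := by
  have : cubeAt (0 : Rn N) 1 = Set.univ.pi fun _ => Set.Ioo (0 : ℝ) 1 := by
    ext z; simp [cubeAt]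
  rw [this, Real.volume_pi_Ioo]; simp

lemma volume_cubeAt {N : ℕ} (c : Rn N) {s : ℝ} (hs : 0 < s) :
    volume (cubeAt c s) = ENNReal.ofReal (s ^ N) := by
  rw [cubeAt_affine c hs, volume_affine c hs, volume_cubeAt_one, mul_one]

/-- The measure with density `w`. -/
def wMeas {N : ℕ} (w : Rn N → ℝ) : Measure (Rn N) :=
  volume.withDensity (fun z => ENNReal.ofReal (w z))

lemma weight_finite {N : ℕ} {p₀ : ℝ} (hp₀ : 1 < p₀) {w : Rn N → ℝ} (hw : IsWeight w)
    (hA : MemAlocGt N p₀ w) (c : Rn N) {s : ℝ} (hs : 0 < s) (hs1 : s ≤ 1) :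
    (∫⁻ y in cubeAt c s, ENNReal.ofReal (w y)) < ∞ ∧
    (∫⁻ y in cubeAt c s, ENNReal.ofReal (w y) ^ (-(1 : ℝ) / (p₀ - 1))) < ∞ := by
  obtain ⟨C, hC, h⟩ := hA
  have h := h c s hs hs1
  have hW : Measurable (fun z => ENNReal.ofReal (w z)) := hw.1.ennreal_ofReal
  have hV : volume (cubeAt c s) ≠ 0 := by
    rw [volume_cubeAt c hs]; simpa using pow_pos hs N
  have hVt : volume (cubeAt c s) ≠ ∞ := by
    rw [volume_cubeAt c hs]; simp
  have pos : ∀ f : Rn N → ℝ≥0∞, Measurable f → (∀ z, f z ≠ 0) → (∫⁻ y in cubeAt c s, f y) ≠ 0 := by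
    intro f hf h0 h1
    rw [lintegral_eq_zero_iff hf] at h1
    have : ∀ᵐ x ∂(volume.restrict (cubeAt c s)), False := by
      filter_upwards [h1] with x hx using h0 x hx
    simp [Measure.restrict_eq_zero] at this
    exact hV this
  have p1 := pos _ hW (fun z => by simpa using hw.2 z)
  have p2 := pos _ (hW.pow_const (-(1 : ℝ) / (p₀ - 1))) (fun z => by
    simp only [ne_eq, ENNReal.rpow_eq_zero_iff, not_or, not_and]
    refine ⟨fun h => ?_, fun h => absurd h (by simp)⟩
    exact absurd h (by simpa using hw.2 z))
  have hpp : 0 < p₀ - 1 := by linarith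
  constructor
  · rw [lt_top_iff_ne_top]
    intro ht
    rw [ht] at h
    rw [ENNReal.mul_top (by simpa using hVt), ENNReal.top_mul] at h
    · exact absurd hC (by simp [top_le_iff.1 h])
    · simp [ENNReal.rpow_eq_zero_iff, hpp, hVt, p2, not_lt.2 hpp.le]
  · rw [lt_top_iff_ne_top]
    intro ht
    rw [ht] at h
    rw [ENNReal.mul_top (by simpa using hVt), ENNReal.top_rpow_of_pos hpp, ENNReal.mul_top] at h
    · exact absurd hC (by simp [top_le_iff.1 h])
    · simp [hVt, p1]

lemma weight_doubling {N : ℕ} {p₀ : ℝ} (hp₀ : 1 < p₀) {w : Rn N → ℝ} (hw : IsWeight w)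
    (hA : MemAlocGt N p₀ w) {E : Set (Rn N)} (hE : MeasurableSet E)
    (hEs : E ⊆ cubeAt (0 : Rn N) 1) (hE0 : volume E ≠ 0) :
    ∃ M : ℝ≥0∞, M < ∞ ∧ ∀ (c : Rn N) (s : ℝ), 0 < s → s ≤ 1 →
      wMeas w (cubeAt c s) ≤ M * wMeas w {z : Rn N | s⁻¹ • (z - c) ∈ E} := by
  obtain ⟨C, hC, hA'⟩ := id hA
  have hp0 : 0 < p₀ := by linarith
  have hpp : 0 < p₀ - 1 := by linarith
  have hEt : volume E ≠ ∞ := ne_top_of_le_ne_top (by simp [volume_cubeAt_one]) (measure_mono hEs)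
  refine ⟨C / (volume E) ^ p₀, ?_, fun c s hs hs1 => ?_⟩
  · exact ENNReal.div_lt_top hC.ne (by simp [ENNReal.rpow_eq_zero_iff, hE0, hEt])
  set P := cubeAt c s
  set E' := {z : Rn N | s⁻¹ • (z - c) ∈ E} with hE'
  have hmE' : MeasurableSet E' := by
    have : Measurable (fun z : Rn N => s⁻¹ • (z - c)) := by fun_prop
    exact this hE
  have hsub : E' ⊆ P := by
    intro z hz
    rw [show P = _ from cubeAt_affine c hs]; exact hEs hz
  have hPm : MeasurableSet P := (cubeAt_isOpen c s).measurableSet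
  set σ := ∫⁻ y in P, ENNReal.ofReal (w y) ^ (-(1 : ℝ) / (p₀ - 1))
  have hV : volume P = ENNReal.ofReal (s ^ N) := volume_cubeAt c hs
  have hVE : volume E' = volume P * volume E := by rw [hV]; exact volume_affine c hs E
  have hP0 : volume P ≠ 0 := by rw [hV]; simpa using pow_pos hs N
  have hPt : volume P ≠ ∞ := by rw [hV]; simp
  have eP : wMeas w P = ∫⁻ y in P, ENNReal.ofReal (w y) := withDensity_apply _ hPm
  have eE : wMeas w E' = ∫⁻ y in E', ENNReal.ofReal (w y) := withDensity_apply _ hmE'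
  have h1 : volume E' ^ p₀ ≤ wMeas w E' * σ ^ (p₀ - 1) := by
    have := holder_weight hp₀ hw (F := E'.indicator 1) (measurable_one.indicator hmE') P
    have a1 : ∫⁻ z in P, E'.indicator (1 : Rn N → ℝ≥0∞) z = volume E' := by
      rw [lintegral_indicator_one hmE', Measure.restrict_apply hmE',
        Set.inter_eq_left.2 hsub]
    have a2 : ∫⁻ z in P, E'.indicator (1 : Rn N → ℝ≥0∞) z ^ p₀ * ENNReal.ofReal (w z)
        = wMeas w E' := by
      have : ∀ z, E'.indicator (1 : Rn N → ℝ≥0∞) z ^ p₀ * ENNReal.ofReal (w z) =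
          E'.indicator (fun z => ENNReal.ofReal (w z)) z := by
        intro z
        by_cases hz : z ∈ E' <;> simp [hz, hp0]
      simp only [this]
      rw [lintegral_indicator hmE', eE, Measure.restrict_restrict hmE', Set.inter_eq_left.2 hsub]
    rw [a1, a2] at this
    exact this
  have h2 : wMeas w P * σ ^ (p₀ - 1) ≤ C * volume P ^ p₀ := by
    have := hA' c s hs hs1
    rw [← eP] at this
    calc wMeas w P * σ ^ (p₀ - 1) =
        (((volume P)⁻¹ * wMeas w P) * ((volume P)⁻¹ * σ) ^ (p₀ - 1)) * volume P ^ p₀ := by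
          rw [ENNReal.mul_rpow_of_nonneg _ _ hpp.le, ENNReal.inv_rpow]
          have e1 : volume P ^ p₀ = volume P * volume P ^ (p₀ - 1) := by
            nth_rewrite 2 [← ENNReal.rpow_one (volume P)]
            rw [← ENNReal.rpow_add _ _ hP0 hPt]; congr 1; ring
          rw [e1]
          have e2 : (volume P)⁻¹ * volume P = 1 := ENNReal.inv_mul_cancel hP0 hPt
          have e3 : (volume P ^ (p₀ - 1))⁻¹ * volume P ^ (p₀ - 1) = 1 :=
            ENNReal.inv_mul_cancel (by simp [ENNReal.rpow_eq_zero_iff, hP0, hPt])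
              (by simp [ENNReal.rpow_eq_top_iff, hP0, hPt])
          calc _ = ((volume P)⁻¹ * volume P) * ((volume P ^ (p₀ - 1))⁻¹ * volume P ^ (p₀ - 1)) *
              (wMeas w P * σ ^ (p₀ - 1)) := by rw [e2, e3]; simp
            _ = _ := by ring
      _ ≤ _ := by gcongr
  have h3 : wMeas w P * (volume E) ^ p₀ * volume P ^ p₀ ≤ C * wMeas w E' * volume P ^ p₀ := by
    calc wMeas w P * (volume E) ^ p₀ * volume P ^ p₀ = wMeas w P * volume E' ^ p₀ := by
          rw [hVE, ENNReal.mul_rpow_of_nonneg _ _ hp0.le]; ring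
      _ ≤ wMeas w P * (wMeas w E' * σ ^ (p₀ - 1)) := by gcongr
      _ = (wMeas w P * σ ^ (p₀ - 1)) * wMeas w E' := by ring
      _ ≤ (C * volume P ^ p₀) * wMeas w E' := by gcongr
      _ = _ := by ring
  have h4 : wMeas w P * (volume E) ^ p₀ ≤ C * wMeas w E' :=
    (ENNReal.mul_le_mul_iff_left (by simp [ENNReal.rpow_eq_zero_iff, hP0, hPt])
      (by simp [ENNReal.rpow_eq_top_iff, hP0, hPt])).1 h3
  rw [ENNReal.div_eq_inv_mul, mul_assoc, ← ENNReal.div_eq_inv_mul]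
  rw [ENNReal.le_div_iff_mul_le (Or.inl (by simp [ENNReal.rpow_eq_zero_iff, hE0, hEt]))
    (Or.inl (by simp [ENNReal.rpow_eq_top_iff, hE0, hEt]))]
  exact h4

/-! ## Part C: dyadic cells -/

/-- Index of the half-open dyadic cube of level `j` containing `x`. -/
def fl {n : ℕ} (j : ℕ) (x : Rn n) : Fin n → ℤ := fun i => ⌊(2 : ℝ) ^ j * x i⌋

lemma fl_eq_iff {n : ℕ} (j : ℕ) (x : Rn n) (m : Fin n → ℤ) :
    fl j x = m ↔ ∀ i, (m i : ℝ) / 2 ^ j ≤ x i ∧ x i < ((m i : ℝ) + 1) / 2 ^ j := by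
  have h2 : (0 : ℝ) < 2 ^ j := by positivity
  constructor
  · rintro rfl i
    simp only [fl]
    rw [div_le_iff₀' h2, lt_div_iff₀' h2]
    exact ⟨Int.floor_le _, Int.lt_floor_add_one _⟩
  · intro h
    funext i
    have := h i
    rw [div_le_iff₀' h2, lt_div_iff₀' h2] at this
    exact Int.floor_eq_iff.2 this

lemma mem_half_iff {n : ℕ} (j : ℕ) (x : Rn n) (m : Fin n → ℤ) :
    x ∈ dyadicCubeHalf n j m ↔ fl j x = m := (fl_eq_iff j x m).symm

lemma fl_anc {n : ℕ} (j i : ℕ) (x : Rn n) :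
    fl j x = fun a => fl (j + i) x a / (2 : ℤ) ^ i := by
  funext a
  simp only [fl]
  have : (2 : ℝ) ^ j * x a = (2 : ℝ) ^ (j + i) * x a / ((2 ^ i : ℕ) : ℝ) := by
    push_cast; rw [pow_add]; field_simp
  rw [this, Int.floor_div_natCast]
  push_cast; rfl

/-- Parent index. -/
def par {n : ℕ} (m : Fin n → ℤ) : Fin n → ℤ := fun a => m a / 2

lemma fl_par {n : ℕ} (j : ℕ) (x : Rn n) : fl j x = par (fl (j + 1) x) := by
  rw [fl_anc j 1 x]; rfl

lemma fl_measurable {n : ℕ} (j : ℕ) : Measurable (fl j : Rn n → Fin n → ℤ) := by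
  refine measurable_pi_lambda _ fun i => ?_
  exact Int.measurable_floor.comp ((measurable_pi_apply i).const_mul _)

lemma tsum_half_indicator {n : ℕ} (k : ℕ) (T : (Fin n → ℤ) → ℝ≥0∞) (x : Rn n) :
    ∑' m : Fin n → ℤ, (dyadicCubeHalf n k m).indicator (fun _ => T m) x = T (fl k x) := by
  rw [tsum_eq_single (fl k x)]
  · rw [Set.indicator_of_mem ((mem_half_iff k x _).2 rfl)]
  · intro m hm
    rw [Set.indicator_of_notMem]
    rw [mem_half_iff]; exact fun h => hm h.symm

/-- The slab `|y| < 2^{-k-2}` (sup-norm). -/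
def slab (n d k : ℕ) : Set (Rn (n + d)) := {z | ‖yP z‖ < ((2 : ℝ) ^ (k + 2))⁻¹}

lemma slab_measurable (n d k : ℕ) : MeasurableSet (slab n d k) :=
  (isOpen_lt yP_continuous.norm continuous_const).measurableSet

lemma slab_anti (n d k : ℕ) : slab n d (k + 1) ⊆ slab n d k := by
  intro z hz
  simp only [slab, Set.mem_ofPred_eq] at *
  refine hz.trans_le ?_
  gcongr <;> norm_num

def cell (n d q : ℕ) (m : Fin n → ℤ) : Set (Rn (n + d)) := {z | fl q (xP z) = m}

lemma flx_measurable (n d q : ℕ) : Measurable (fun z : Rn (n + d) => fl q (xP z)) :=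
  (fl_measurable q).comp xP_continuous.measurable

lemma cell_measurable (n d q : ℕ) (m : Fin n → ℤ) : MeasurableSet (cell n d q m) :=
  flx_measurable n d q (measurableSet_singleton m)

lemma wMeas_null {N : ℕ} {w : Rn N → ℝ} {s : Set (Rn N)} (h : volume s = 0) : wMeas w s = 0 :=
  withDensity_absolutelyContinuous _ _ h

lemma volume_hyper {N : ℕ} (i : Fin N) (a : ℝ) : volume {z : Rn N | z i = a} = 0 := by
  rw [volume_pi]; exact Measure.pi_hyperplane (fun _ : Fin N => (volume : Measure ℝ)) i a

lemma volume_faces {n d : ℕ} (a : Fin n → ℝ) :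
    volume {z : Rn (n + d) | ∃ i, xP z i = a i} = 0 := by
  have : {z : Rn (n + d) | ∃ i, xP z i = a i} =
      ⋃ i, {z : Rn (n + d) | z (Fin.castAdd d i) = a i} := by
    ext z; simp [xP]
  rw [this]
  exact measure_iUnion_null fun i => volume_hyper _ _

lemma euclNorm_smul {d : ℕ} {s : ℝ} (hs : 0 ≤ s) (v : Rn d) :
    euclNorm (fun i => s * v i) = s * euclNorm v := by
  unfold euclNorm
  have : ∑ i, (s * v i) ^ 2 = s ^ 2 * ∑ i, v i ^ 2 := by
    rw [Finset.mul_sum]; exact Finset.sum_congr rfl fun i _ => by ring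
  rw [this, Real.sqrt_mul (sq_nonneg s), Real.sqrt_sq hs]

lemma euclNorm_continuous {d : ℕ} : Continuous (euclNorm : Rn d → ℝ) := by
  unfold euclNorm
  fun_prop

lemma cell_doubling {n d : ℕ} (hd : 0 < d) {p₀ : ℝ} (hp₀ : 1 < p₀) {w : Rn (n + d) → ℝ}
    (hw : IsWeight w) (hA : MemAlocGt (n + d) p₀ w) :
    ∃ M : ℝ≥0∞, M < ∞ ∧ ∀ (k : ℕ) (m : Fin n → ℤ),
      wMeas w (slab n d k ∩ cell n d (k + 1) m) ≤
        M * wMeas w ((slab n d k \ slab n d (k + 1)) ∩ cell n d (k + 1) m) := by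
  set i0 : Fin (n + d) := Fin.natAdd n ⟨0, hd⟩ with hi0
  set E : Set (Rn (n + d)) := cubeAt 0 1 ∩ {z | 3 / 4 < z i0} with hEdef
  have hEo : IsOpen E :=
    (cubeAt_isOpen _ _).inter (isOpen_lt continuous_const (continuous_apply i0))
  have hEne : E.Nonempty := by
    refine ⟨fun _ => 7 / 8, ?_, ?_⟩
    · intro i; norm_num
    · simp only [Set.mem_ofPred_eq]; norm_num
  obtain ⟨M, hM, h⟩ := weight_doubling hp₀ hw hA hEo.measurableSet Set.inter_subset_left
    (hEo.measure_pos volume hEne).ne'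
  refine ⟨M, hM, fun k m => ?_⟩
  set s : ℝ := ((2 : ℝ) ^ (k + 1))⁻¹ with hs
  have hspos : 0 < s := by positivity
  have hs1 : s ≤ 1 := inv_le_one_of_one_le₀ (one_le_pow₀ (by norm_num))
  have hs2 : ((2 : ℝ) ^ (k + 2))⁻¹ = s / 2 := by
    rw [hs, pow_succ (2 : ℝ) (k + 1)]; field_simp
  have hs3 : ((2 : ℝ) ^ (k + 1 + 2))⁻¹ = s / 4 := by
    rw [hs, show k + 1 + 2 = (k + 1) + 2 from rfl, pow_add]; field_simp; norm_num
  set c : Rn (n + d) := Fin.append (fun i => (m i : ℝ) / 2 ^ (k + 1)) (fun _ => -(s / 2)) with hc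
  have cx : ∀ i, c (Fin.castAdd d i) = (m i : ℝ) * s := by
    intro i; rw [hc, Fin.append_left, hs]; rfl
  have cy : ∀ i, c (Fin.natAdd n i) = -(s / 2) := by
    intro i; rw [hc, Fin.append_right]
  have h := h c s hspos hs1
  have ms : ∀ i, ((m i : ℝ) + 1) / 2 ^ (k + 1) = m i * s + s := by
    intro i; rw [hs, div_eq_mul_inv]; ring
  have ms' : ∀ i, (m i : ℝ) / 2 ^ (k + 1) = m i * s := by
    intro i; rw [hs, div_eq_mul_inv]
  calc wMeas w (slab n d k ∩ cell n d (k + 1) m)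
      ≤ wMeas w (cubeAt c s ∪ {z : Rn (n + d) | ∃ i, xP z i = m i * s}) := by
        refine measure_mono fun z hz => ?_
        by_cases hf : ∃ i, xP z i = m i * s
        · exact Or.inr hf
        · left
          obtain ⟨h1, h2⟩ := hz
          push Not at hf
          simp only [slab, Set.mem_ofPred_eq, hs2] at h1
          simp only [cell, Set.mem_ofPred_eq, fl_eq_iff, ms, ms'] at h2
          intro i
          refine Fin.addCases (fun i => ?_) (fun i => ?_) i
          · rw [cx]
            exact ⟨lt_of_le_of_ne (h2 i).1 (hf i).symm, (h2 i).2⟩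
          · rw [cy]
            have := (norm_le_pi_norm (yP z) i).trans_lt h1
            rw [Real.norm_eq_abs, abs_lt] at this
            simp only [yP] at this
            constructor <;> linarith
    _ ≤ wMeas w (cubeAt c s) := by
        refine (measure_union_le _ _).trans ?_
        rw [wMeas_null (volume_faces _), add_zero]
    _ ≤ M * wMeas w {z : Rn (n + d) | s⁻¹ • (z - c) ∈ E} := h
    _ ≤ _ := by
        gcongr
        intro z hz
        have hz1 : z ∈ cubeAt c s := by rw [cubeAt_affine c hspos]; exact hz.1
        have hz2 : 3 / 4 < s⁻¹ * (z i0 - c i0) := hz.2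
        rw [lt_inv_mul_iff₀ hspos, hi0, cy] at hz2
        refine ⟨⟨?_, ?_⟩, ?_⟩
        · simp only [slab, Set.mem_ofPred_eq, hs2]
          rw [pi_norm_lt_iff (by positivity)]
          intro i
          have := hz1 (Fin.natAdd n i)
          rw [cy] at this
          rw [Real.norm_eq_abs, abs_lt]
          simp only [yP]
          constructor <;> linarith
        · simp only [slab, Set.mem_ofPred_eq, hs3, not_lt]
          refine le_trans ?_ (norm_le_pi_norm (yP z) ⟨0, hd⟩)
          refine le_trans ?_ (le_abs_self _)
          simp only [yP]
          linarith
        · simp only [cell, Set.mem_ofPred_eq, fl_eq_iff, ms, ms']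
          intro i
          have := hz1 (Fin.castAdd d i)
          rw [cx] at this
          exact ⟨this.1.le, this.2⟩

lemma cell_Xi {n d : ℕ} (hd : 0 < d) {p₀ : ℝ} (hp₀ : 1 < p₀) {w : Rn (n + d) → ℝ}
    (hw : IsWeight w) (hA : MemAlocGt (n + d) p₀ w) :
    ∃ M : ℝ≥0∞, M < ∞ ∧ ∀ (k : ℕ) (m : Fin n → ℤ),
      wMeas w (slab n d k ∩ cell n d (k + 1) m) ≤ M * wMeas w (Xi n d k (par m)) := by
  set f : Rn (n + d) → ℝ := fun z => euclNorm (fun i => yP z i - 1 / 4) with hf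
  have hfc : Continuous f := by
    refine euclNorm_continuous.comp ?_
    have := (yP_continuous : Continuous (yP : Rn (n + d) → Rn d))
    fun_prop
  set E : Set (Rn (n + d)) := cubeAt 0 1 ∩ ({z | 1 / 2 < f z} ∩ {z | f z < 1}) with hEdef
  have hEo : IsOpen E :=
    (cubeAt_isOpen _ _).inter ((isOpen_lt continuous_const hfc).inter
      (isOpen_lt hfc continuous_const))
  have hEne : E.Nonempty := by
    set z0 : Rn (n + d) := Fin.append (fun _ => 1 / 2)
      (fun i => if i = ⟨0, hd⟩ then 7 / 8 else 1 / 4) with hz0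
    have hfz : f z0 = 5 / 8 := by
      have : (fun i => yP z0 i - 1 / 4) = fun i : Fin d => if i = ⟨0, hd⟩ then (5 / 8 : ℝ) else 0 := by
        funext i
        simp only [yP, hz0, Fin.append_right]
        split_ifs <;> norm_num
      change euclNorm (fun i => yP z0 i - 1 / 4) = _
      rw [this, euclNorm]
      have h2 : ∀ i : Fin d, (if i = ⟨0, hd⟩ then (5 / 8 : ℝ) else 0) ^ 2 =
        if i = ⟨0, hd⟩ then (5 / 8 : ℝ) ^ 2 else 0 := by
        intro i; split_ifs <;> norm_num
      simp only [h2, Finset.sum_ite_eq', Finset.mem_univ, if_true]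
      rw [Real.sqrt_sq (by norm_num)]
    refine ⟨z0, ?_, ?_, ?_⟩
    · intro i
      refine Fin.addCases (fun i => ?_) (fun i => ?_) i
      · rw [hz0, Fin.append_left]; norm_num
      · rw [hz0, Fin.append_right]; split_ifs <;> norm_num
    · simp only [Set.mem_ofPred_eq, hfz]; norm_num
    · simp only [Set.mem_ofPred_eq, hfz]; norm_num
  obtain ⟨M, hM, h⟩ := weight_doubling hp₀ hw hA hEo.measurableSet Set.inter_subset_left
    (hEo.measure_pos volume hEne).ne'
  refine ⟨M, hM, fun k m' => ?_⟩
  set m := par m' with hm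
  set s : ℝ := ((2 : ℝ) ^ k)⁻¹ with hs
  have hspos : 0 < s := by positivity
  have hs1 : s ≤ 1 := inv_le_one_of_one_le₀ (one_le_pow₀ (by norm_num))
  have hs2 : ((2 : ℝ) ^ (k + 2))⁻¹ = s / 4 := by
    rw [hs, pow_add]; field_simp; norm_num
  set c : Rn (n + d) := Fin.append (fun i => (m i : ℝ) / 2 ^ k) (fun _ => -(s / 4)) with hc
  have cx : ∀ i, c (Fin.castAdd d i) = (m i : ℝ) * s := by
    intro i; rw [hc, Fin.append_left, hs]; rfl
  have cy : ∀ i, c (Fin.natAdd n i) = -(s / 4) := by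
    intro i; rw [hc, Fin.append_right]
  have h := h c s hspos hs1
  have ms : ∀ i, ((m i : ℝ) + 1) / 2 ^ k = m i * s + s := by
    intro i; rw [hs, div_eq_mul_inv]; ring
  have ms' : ∀ i, (m i : ℝ) / 2 ^ k = m i * s := by
    intro i; rw [hs, div_eq_mul_inv]
  calc wMeas w (slab n d k ∩ cell n d (k + 1) m')
      ≤ wMeas w (cubeAt c s ∪ {z : Rn (n + d) | ∃ i, xP z i = m i * s}) := by
        refine measure_mono fun z hz => ?_
        by_cases hf : ∃ i, xP z i = m i * s
        · exact Or.inr hf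
        · left
          obtain ⟨h1, h2⟩ := hz
          push Not at hf
          simp only [slab, Set.mem_ofPred_eq, hs2] at h1
          have h2 : fl k (xP z) = m := by
            rw [fl_par, show fl (k + 1) (xP z) = m' from h2]
          simp only [fl_eq_iff, ms, ms'] at h2
          intro i
          refine Fin.addCases (fun i => ?_) (fun i => ?_) i
          · rw [cx]
            exact ⟨lt_of_le_of_ne (h2 i).1 (hf i).symm, (h2 i).2⟩
          · rw [cy]
            have := (norm_le_pi_norm (yP z) i).trans_lt h1
            rw [Real.norm_eq_abs, abs_lt] at this
            simp only [yP] at this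
            constructor <;> linarith
    _ ≤ wMeas w (cubeAt c s) := by
        refine (measure_union_le _ _).trans ?_
        rw [wMeas_null (volume_faces _), add_zero]
    _ ≤ M * wMeas w {z : Rn (n + d) | s⁻¹ • (z - c) ∈ E} := h
    _ ≤ _ := by
        gcongr
        intro z hz
        have hz1 : z ∈ cubeAt c s := by rw [cubeAt_affine c hspos]; exact hz.1
        have hfe : f (s⁻¹ • (z - c)) = s⁻¹ * euclNorm (yP z) := by
          rw [← euclNorm_smul (by positivity)]
          change euclNorm (fun i => yP (s⁻¹ • (z - c)) i - 1 / 4) = _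
          congr 1
          funext i
          simp only [yP, Pi.smul_apply, Pi.sub_apply, cy, smul_eq_mul]
          field_simp; ring
        have hz2 : 1 / 2 < s⁻¹ * euclNorm (yP z) := by rw [← hfe]; exact hz.2.1
        have hz3 : s⁻¹ * euclNorm (yP z) < 1 := by rw [← hfe]; exact hz.2.2
        rw [lt_inv_mul_iff₀ hspos] at hz2
        rw [inv_mul_lt_iff₀ hspos] at hz3
        refine ⟨?_, ?_, ?_⟩
        · intro i
          rw [ms, ms', ← cx]
          exact hz1 (Fin.castAdd d i)
        · change euclNorm (yP z) < _
          rw [zpow_neg, zpow_natCast]; linarith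
        · change _ ≤ euclNorm (yP z)
          rw [zpow_sub₀ (by norm_num), zpow_neg, zpow_natCast]
          rw [← hs]; simp; linarith

lemma lintegral_cells {n d : ℕ} (μ : Measure (Rn (n + d))) (A : Set (Rn (n + d)))
    (q : ℕ) (b : (Fin n → ℤ) → ℝ≥0∞) :
    ∫⁻ z in A, b (fl q (xP z)) ∂μ = ∑' m, b m * μ (A ∩ cell n d q m) := by
  have h1 := lintegral_map (μ := μ.restrict A) (measurable_of_countable b) (flx_measurable n d q)
  rw [← h1, lintegral_countable']
  congr 1
  funext m
  rw [Measure.map_apply (flx_measurable n d q) (measurableSet_singleton m),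
    Measure.restrict_apply (flx_measurable n d q (measurableSet_singleton m)), Set.inter_comm]
  rfl

lemma slab_decay {n d : ℕ} (hd : 0 < d) {p₀ : ℝ} (hp₀ : 1 < p₀) {w : Rn (n + d) → ℝ}
    (hw : IsWeight w) (hA : MemAlocGt (n + d) p₀ w) :
    ∃ θ : ℝ≥0∞, θ < 1 ∧ ∀ (j : ℕ) (b : (Fin n → ℤ) → ℝ≥0∞),
      (∫⁻ z in slab n d j, b (fl (j + 1) (xP z)) ∂(wMeas w)) < ∞ → ∀ i,
      (∫⁻ z in slab n d (j + i), b (fl (j + 1) (xP z)) ∂(wMeas w)) ≤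
        θ ^ i * ∫⁻ z in slab n d j, b (fl (j + 1) (xP z)) ∂(wMeas w) := by
  obtain ⟨M', hM', h⟩ := cell_doubling hd hp₀ hw hA
  set M := M' + 1 with hMdef
  have hM : M < ∞ := by simp [hMdef, hM']
  have hM1 : 1 ≤ M := by simp [hMdef]
  have hM0 : M ≠ 0 := (one_pos.trans_le hM1).ne'
  have step : ∀ (j : ℕ) (b : (Fin n → ℤ) → ℝ≥0∞) (i : ℕ),
      (∫⁻ z in slab n d (j + i), b (fl (j + 1) (xP z)) ∂(wMeas w)) < ∞ →
      (∫⁻ z in slab n d (j + i + 1), b (fl (j + 1) (xP z)) ∂(wMeas w)) ≤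
        ((M - 1) / M) * ∫⁻ z in slab n d (j + i), b (fl (j + 1) (xP z)) ∂(wMeas w) := by
    intro j b i hfin
    set V := ∫⁻ z in slab n d (j + i), b (fl (j + 1) (xP z)) ∂(wMeas w) with hV
    set V' := ∫⁻ z in slab n d (j + i + 1), b (fl (j + 1) (xP z)) ∂(wMeas w) with hV'
    set U := ∫⁻ z in slab n d (j + i) \ slab n d (j + i + 1), b (fl (j + 1) (xP z)) ∂(wMeas w)
      with hU
    have e1 : V = U + V' := by
      rw [hV, hU, hV', add_comm (lintegral _ _)]
      have := lintegral_inter_add_sdiff (μ := wMeas w)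
        (fun z => b (fl (j + 1) (xP z))) (slab n d (j + i)) (slab_measurable n d (j + i + 1))
      rw [Set.inter_eq_right.2 (slab_anti n d (j + i))] at this
      exact this.symm
    have e2 : V ≤ M * U := by
      obtain ⟨b', hb⟩ : ∃ b' : (Fin n → ℤ) → ℝ≥0∞, ∀ z : Rn (n + d),
          b (fl (j + 1) (xP z)) = b' (fl (j + i + 1) (xP z)) := by
        refine ⟨fun m' => b (fun a => m' a / (2 : ℤ) ^ i), fun z => ?_⟩
        simp only
        rw [fl_anc (j + 1) i, show j + 1 + i = j + i + 1 by ring]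
      rw [hV, hU]
      rw [lintegral_congr hb, lintegral_congr hb, lintegral_cells, lintegral_cells, ← ENNReal.tsum_mul_left]
      refine ENNReal.tsum_le_tsum fun m => ?_
      rw [mul_left_comm]
      gcongr
      refine (h (j + i) m).trans ?_
      gcongr
      simp [hMdef]
    have e3 : M * V' + V ≤ M * V := by
      calc M * V' + V ≤ M * V' + M * U := by gcongr
        _ = M * V := by rw [e1]; ring
    have e4 : M * V' ≤ (M - 1) * V := by
      rw [ENNReal.sub_mul (fun _ _ => hfin.ne), one_mul]
      exact ENNReal.le_sub_of_add_le_right hfin.ne e3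
    rw [ENNReal.div_eq_inv_mul, mul_assoc, ← ENNReal.div_eq_inv_mul,
      ENNReal.le_div_iff_mul_le (Or.inl hM0) (Or.inl hM.ne), mul_comm]
    exact e4
  refine ⟨(M - 1) / M, ?_, fun j b hfin i => ?_⟩
  · rw [ENNReal.div_lt_iff (Or.inl hM0) (Or.inl hM.ne), one_mul]
    exact ENNReal.sub_lt_self hM.ne hM0 one_ne_zero
  · induction i with
    | zero => simp
    | succ i ih =>
      have hle : (M - 1) / M ≤ 1 := by
        refine ENNReal.div_le_of_le_mul ?_
        simp
      have hf' : (∫⁻ z in slab n d (j + i), b (fl (j + 1) (xP z)) ∂(wMeas w)) < ∞ := by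
        refine ih.trans_lt (ENNReal.mul_lt_top (ENNReal.pow_lt_top (hle.trans_lt one_lt_top)) hfin)
      calc _ ≤ _ := step j b i hf'
        _ ≤ (M - 1) / M * (((M - 1) / M) ^ i * _) := by gcongr
        _ = _ := by rw [pow_succ]; ring

/-! ## Part D: the Hardy type estimate -/

lemma minkowski_tsum {α : Type*} [MeasurableSpace α] (μ : Measure α) {p : ℝ} (hp : 1 ≤ p)
    (H : ℕ → α → ℝ≥0∞) (hH : ∀ i, Measurable (H i)) :
    (∫⁻ z, (∑' i, H i z) ^ p ∂μ) ^ (1 / p) ≤ ∑' i, (∫⁻ z, H i z ^ p ∂μ) ^ (1 / p) := by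
  have hp0 : 0 < p := by linarith
  have hfin : ∀ N, (∫⁻ z, (∑ i ∈ Finset.range N, H i z) ^ p ∂μ) ^ (1 / p) ≤
      ∑ i ∈ Finset.range N, (∫⁻ z, H i z ^ p ∂μ) ^ (1 / p) := by
    intro N
    induction N with
    | zero => simp [hp0, hp0.ne']
    | succ N ih =>
      simp only [Finset.sum_range_succ]
      refine (ENNReal.lintegral_Lp_add_le
        (Finset.measurable_fun_sum _ fun i _ => hH i).aemeasurable (hH N).aemeasurable hp).trans ?_
      gcongr
  have ht : Tendsto (fun N => ∫⁻ z, (∑ i ∈ Finset.range N, H i z) ^ p ∂μ) atTop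
      (nhds (∫⁻ z, (∑' i, H i z) ^ p ∂μ)) := by
    refine lintegral_tendsto_of_tendsto_of_monotone
      (fun N => ((Finset.measurable_fun_sum _ fun i _ => hH i).pow_const _).aemeasurable) ?_ ?_
    · refine ae_of_all _ fun z => ?_
      intro a b hab
      simp only
      gcongr
    · refine ae_of_all _ fun z => ?_
      exact ((ENNReal.continuous_rpow_const (y := p)).tendsto _).comp
        ENNReal.summable.hasSum.tendsto_sum_nat
  have ht2 := ((ENNReal.continuous_rpow_const (y := 1 / p)).tendsto _).comp ht
  refine le_of_tendsto' ht2 fun N => (hfin N).trans ?_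
  exact ENNReal.sum_le_tsum _

/-- The majorant. -/
def maj {n : ℕ} (d : ℕ) (b : ℕ → (Fin n → ℤ) → ℝ≥0∞) (z : Rn (n + d)) : ℝ≥0∞ :=
  ∑' j, (slab n d j).indicator (fun z => b j (fl (j + 1) (xP z))) z

lemma b_measurable {n d : ℕ} (j : ℕ) (b : (Fin n → ℤ) → ℝ≥0∞) :
    Measurable (fun z : Rn (n + d) => b (fl j (xP z))) :=
  (measurable_of_countable b).comp (flx_measurable n d j)

lemma maj_measurable {n d : ℕ} (b : ℕ → (Fin n → ℤ) → ℝ≥0∞) : Measurable (maj d b) :=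
  Measurable.tsum fun j => (b_measurable (j + 1) (b j)).indicator (slab_measurable n d j)

def annu (n d k : ℕ) : Set (Rn (n + d)) := slab n d k \ slab n d (k + 1)

lemma annu_measurable (n d k : ℕ) : MeasurableSet (annu n d k) :=
  (slab_measurable n d k).diff (slab_measurable n d (k + 1))

lemma slab_antitone (n d : ℕ) : Antitone (slab n d) := antitone_nat_of_succ_le (slab_anti n d)

lemma annu_exists {n d : ℕ} {z : Rn (n + d)} (hz : yP z ≠ 0) {j : ℕ} (h : z ∈ slab n d j) :
    ∃ i, z ∈ annu n d (j + i) := by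
  have hex : ∃ k, z ∉ slab n d k := by
    obtain ⟨k, hk⟩ := exists_pow_lt_of_lt_one (norm_pos_iff.2 hz) (by norm_num : (1 / 2 : ℝ) < 1)
    refine ⟨k, ?_⟩
    simp only [slab, Set.mem_ofPred_eq, not_lt]
    refine le_trans ?_ hk.le
    rw [one_div, inv_pow]
    gcongr <;> norm_num
  have hs := Nat.find_spec hex
  have hm : ∀ m, m < Nat.find hex → z ∈ slab n d m := fun m hm => by
    have := Nat.find_min hex hm; tauto
  have hj : j < Nat.find hex := by
    by_contra hc
    exact hs (slab_antitone n d (not_lt.1 hc) h)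
  refine ⟨Nat.find hex - 1 - j, ?_⟩
  rw [show j + (Nat.find hex - 1 - j) = Nat.find hex - 1 by omega]
  refine ⟨hm _ (by omega), ?_⟩
  rw [show Nat.find hex - 1 + 1 = Nat.find hex by omega]
  exact hs

lemma annu_unique {n d : ℕ} {z : Rn (n + d)} {k k' : ℕ} (h : z ∈ annu n d k)
    (h' : z ∈ annu n d k') : k = k' := by
  rcases lt_trichotomy k k' with hl | hl | hl
  · exact absurd (slab_antitone n d (show k + 1 ≤ k' from hl) h'.1) h.2
  · exact hl
  · exact absurd (slab_antitone n d (show k' + 1 ≤ k from hl) h.1) h'.2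

lemma volume_yzero {n d : ℕ} (hd : 0 < d) : volume {z : Rn (n + d) | yP z = 0} = 0 := by
  refine measure_mono_null (fun z hz => ?_) (volume_hyper (Fin.natAdd n ⟨0, hd⟩) 0)
  exact congrFun (show yP z = 0 from hz) ⟨0, hd⟩

lemma maj_bound {n d : ℕ} (hd : 0 < d) {p₀ p : ℝ} (hp₀ : 1 < p₀) (hp : 1 ≤ p)
    {w : Rn (n + d) → ℝ} (hw : IsWeight w) (hA : MemAlocGt (n + d) p₀ w) :
    ∃ C : ℝ≥0∞, C < ∞ ∧ ∀ b : ℕ → (Fin n → ℤ) → ℝ≥0∞,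
      (∫⁻ z, maj d b z ^ p ∂(wMeas w)) ^ (1 / p) ≤
        C * (∑' j, ∑' m, b j m ^ p * wMeas w (Xi n d j (par m))) ^ (1 / p) := by
  have hp0 : 0 < p := by linarith
  obtain ⟨M, hM, hX⟩ := cell_Xi hd hp₀ hw hA
  obtain ⟨θ, hθ, hdec⟩ := slab_decay hd hp₀ hw hA
  set μ := wMeas w with hμ
  have hθ' : θ ^ (1 / p) < 1 := ENNReal.rpow_lt_one hθ (by positivity)
  refine ⟨(1 - θ ^ (1 / p))⁻¹ * (M + 1) ^ (1 / p), ?_, fun b => ?_⟩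
  · refine ENNReal.mul_lt_top ?_ ?_
    · simpa using hθ'
    · exact ENNReal.rpow_lt_top_of_nonneg (by positivity) (by simp [hM.ne])
  set S := ∑' j, ∑' m, b j m ^ p * μ (Xi n d j (par m)) with hS
  by_cases hSt : S = ∞
  · rw [hSt, ENNReal.top_rpow_of_pos (by positivity), ENNReal.mul_top]
    · exact le_top
    · refine mul_ne_zero ?_ ?_
      · simp
      · have : (1 : ℝ≥0∞) ≤ (M + 1) ^ (1 / p) := ENNReal.one_le_rpow (by simp) (by positivity)
        exact (one_pos.trans_le this).ne'
  -- bound of V_j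
  have hV : ∀ j, (∫⁻ z in slab n d j, b j (fl (j + 1) (xP z)) ^ p ∂μ) ≤
      (M + 1) * ∑' m, b j m ^ p * μ (Xi n d j (par m)) := by
    intro j
    rw [lintegral_cells μ (slab n d j) (j + 1) (fun m => b j m ^ p), ← ENNReal.tsum_mul_left]
    refine ENNReal.tsum_le_tsum fun m => ?_
    rw [mul_left_comm]
    gcongr
    refine (hX j m).trans ?_
    gcongr
    simp
  have hVS : (∑' j, ∫⁻ z in slab n d j, b j (fl (j + 1) (xP z)) ^ p ∂μ) ≤ (M + 1) * S := by
    rw [hS, ← ENNReal.tsum_mul_left]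
    exact ENNReal.tsum_le_tsum hV
  have hVf : ∀ j, (∫⁻ z in slab n d j, b j (fl (j + 1) (xP z)) ^ p ∂μ) < ∞ := fun j =>
    ((ENNReal.le_tsum j).trans hVS).trans_lt
      (ENNReal.mul_lt_top (by simp [hM]) (lt_top_iff_ne_top.2 hSt))
  set H : ℕ → Rn (n + d) → ℝ≥0∞ := fun i z =>
    ∑' j, (annu n d (j + i)).indicator (fun z => b j (fl (j + 1) (xP z))) z with hH
  have hHm : ∀ i, Measurable (H i) := fun i =>
    Measurable.tsum fun j => (b_measurable (j + 1) (b j)).indicator (annu_measurable n d (j + i))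
  have hHp : ∀ i z, H i z ^ p =
      ∑' j, (annu n d (j + i)).indicator (fun z => b j (fl (j + 1) (xP z)) ^ p) z := by
    intro i z
    by_cases hz : ∃ j, z ∈ annu n d (j + i)
    · obtain ⟨j, hj⟩ := hz
      have hne : ∀ j', j' ≠ j → z ∉ annu n d (j' + i) := fun j' hj' hc =>
        hj' (by have := annu_unique hj hc; omega)
      simp only [hH]
      rw [tsum_eq_single j fun j' hj' => Set.indicator_of_notMem (hne j' hj') _,
        tsum_eq_single j fun j' hj' => Set.indicator_of_notMem (hne j' hj') _,
        Set.indicator_of_mem hj, Set.indicator_of_mem hj]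
    · push Not at hz
      simp only [hH]
      rw [ENNReal.tsum_eq_zero.2 fun j => Set.indicator_of_notMem (hz j) _,
        ENNReal.tsum_eq_zero.2 fun j => Set.indicator_of_notMem (hz j) _,
        ENNReal.zero_rpow_of_pos hp0]
  have hHi : ∀ i, ∫⁻ z, H i z ^ p ∂μ ≤ θ ^ i * ((M + 1) * S) := by
    intro i
    calc ∫⁻ z, H i z ^ p ∂μ
        = ∑' j, ∫⁻ z in annu n d (j + i), b j (fl (j + 1) (xP z)) ^ p ∂μ := by
          simp_rw [hHp]
          rw [lintegral_tsum]
          · refine tsum_congr fun j => ?_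
            rw [lintegral_indicator (annu_measurable n d (j + i))]
          · intro j
            exact (((b_measurable (j + 1) (b j)).pow_const p).indicator
              (annu_measurable n d (j + i))).aemeasurable
      _ ≤ ∑' j, θ ^ i * ∫⁻ z in slab n d j, b j (fl (j + 1) (xP z)) ^ p ∂μ := by
          refine ENNReal.tsum_le_tsum fun j => ?_
          exact (lintegral_mono_set Set.sdiff_subset).trans
            (hdec j (fun m => b j m ^ p) (hVf j) i)
      _ ≤ _ := by rw [ENNReal.tsum_mul_left]; gcongr
  have hmaj : ∀ᵐ z ∂μ, maj d b z = ∑' i, H i z := by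
    have : ∀ᵐ z ∂(volume : Measure (Rn (n + d))), yP z ≠ 0 := by
      rw [ae_iff]; simpa using volume_yzero hd
    refine (withDensity_absolutelyContinuous _ _).ae_le (this.mono fun z hz => ?_)
    simp only [hH, maj]
    rw [ENNReal.tsum_comm]
    refine tsum_congr fun j => ?_
    by_cases hj : z ∈ slab n d j
    · obtain ⟨i, hi⟩ := annu_exists hz hj
      rw [tsum_eq_single i fun i' hi' => Set.indicator_of_notMem
        (fun hc => hi' (by have := annu_unique hi hc; omega)) _,
        Set.indicator_of_mem hj, Set.indicator_of_mem hi]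
    · rw [Set.indicator_of_notMem hj, eq_comm, ENNReal.tsum_eq_zero]
      intro i
      exact Set.indicator_of_notMem (fun hc => hj (slab_antitone n d (by omega) hc.1)) _
  calc (∫⁻ z, maj d b z ^ p ∂μ) ^ (1 / p) = (∫⁻ z, (∑' i, H i z) ^ p ∂μ) ^ (1 / p) := by
        congr 1
        exact lintegral_congr_ae (hmaj.mono fun z hz => by simp only [hz])
    _ ≤ ∑' i, (∫⁻ z, H i z ^ p ∂μ) ^ (1 / p) := minkowski_tsum μ hp H hHm
    _ ≤ ∑' i : ℕ, (θ ^ (1 / p)) ^ i * ((M + 1) * S) ^ (1 / p) := by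
        refine ENNReal.tsum_le_tsum fun i => ?_
        refine (ENNReal.rpow_le_rpow (hHi i) (by positivity)).trans ?_
        rw [ENNReal.mul_rpow_of_nonneg _ _ (by positivity), ← ENNReal.rpow_natCast,
          ← ENNReal.rpow_natCast, ← ENNReal.rpow_mul, ← ENNReal.rpow_mul, mul_comm (i : ℝ)]
    _ = _ := by
        rw [ENNReal.tsum_mul_right, ENNReal.tsum_geometric,
          ENNReal.mul_rpow_of_nonneg _ _ (by positivity), mul_assoc]

/-! ## Part E: assembling a Sobolev function from a series -/

lemma length_multiIdxList {N : ℕ} (α : Fin N → ℕ) : (multiIdxList α).length = ∑ i, α i := by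
  rw [Fin.sum_univ_def]
  unfold multiIdxList
  induction List.finRange N with
  | nil => simp
  | cons a L ih =>
    rw [List.foldr_cons, List.length_append, ih, List.length_replicate, List.map_cons,
      List.sum_cons]

lemma multiIdxList_zero {N : ℕ} : multiIdxList (0 : Fin N → ℕ) = [] := by
  rw [← List.length_eq_zero_iff, length_multiIdxList]; simp

def serD {N : ℕ} (F : ℕ → Rn N → ℝ) (α : Fin N → ℕ) : Rn N → ℝ :=
  fun z => ∑' j, iterPD (multiIdxList α).reverse (F j) z

lemma serD_zero {N : ℕ} (F : ℕ → Rn N → ℝ) : serD F 0 = fun z => ∑' j, F j z := by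
  unfold serD; rw [multiIdxList_zero]; rfl

lemma serD_measurable {N : ℕ} {F : ℕ → Rn N → ℝ} (hF : ∀ j, ContDiff ℝ (⊤ : ℕ∞) (F j))
    (α : Fin N → ℕ) : Measurable (serD F α) :=
  Measurable.tsum fun j => (smooth_iterPD _ (hF j)).continuous.measurable

lemma serD_bound {N : ℕ} {F : ℕ → Rn N → ℝ} {a : ℕ → Rn N → ℝ≥0∞} {C : ℝ≥0∞} (α : Fin N → ℕ)
    (h : ∀ j z, ‖iterPD (multiIdxList α).reverse (F j) z‖ₑ ≤ C * a j z) (z : Rn N) :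
    ‖serD F α z‖ₑ ≤ C * ∑' j, a j z := by
  unfold serD
  refine enorm_tsum_le_tsum_enorm.trans ?_
  rw [← ENNReal.tsum_mul_left]
  exact ENNReal.tsum_le_tsum fun j => h j z

lemma serD_locInt {N : ℕ} {F : ℕ → Rn N → ℝ} (hF : ∀ j, ContDiff ℝ (⊤ : ℕ∞) (F j))
    {a : ℕ → Rn N → ℝ≥0∞} {C : ℝ≥0∞} (hC : C < ∞)
    (hG : ∀ x : Rn N, ∃ U ∈ nhds x, ∫⁻ z in U, ∑' j, a j z < ∞) (α : Fin N → ℕ)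
    (h : ∀ j z, ‖iterPD (multiIdxList α).reverse (F j) z‖ₑ ≤ C * a j z) :
    LocallyIntegrable (serD F α) volume := by
  intro x
  obtain ⟨U, hU, hUf⟩ := hG x
  refine ⟨U, hU, (serD_measurable hF α).aestronglyMeasurable, ?_⟩
  unfold HasFiniteIntegral
  calc ∫⁻ z in U, ‖serD F α z‖ₑ ≤ ∫⁻ z in U, C * ∑' j, a j z :=
        lintegral_mono fun z => serD_bound α h z
    _ = C * ∫⁻ z in U, ∑' j, a j z := lintegral_const_mul' _ _ hC.ne
    _ < ∞ := ENNReal.mul_lt_top hC hUf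

lemma lintegral_compact_lt_top {N : ℕ} {G : Rn N → ℝ≥0∞}
    (hG : ∀ x : Rn N, ∃ U ∈ nhds x, ∫⁻ z in U, G z < ∞) {K : Set (Rn N)} (hK : IsCompact K) :
    ∫⁻ z in K, G z < ∞ := by
  refine hK.induction_on (p := fun K => ∫⁻ z in K, G z < ∞) ?_ ?_ ?_ ?_
  · simp
  · intro s t hst ht
    exact (lintegral_mono_set hst).trans_lt ht
  · intro s t hs ht
    exact (lintegral_union_le _ _ _).trans_lt (ENNReal.add_lt_top.2 ⟨hs, ht⟩)
  · intro x _
    obtain ⟨U, hU, h⟩ := hG x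
    exact ⟨U, mem_nhdsWithin_of_mem_nhds hU, h⟩

lemma integral_ser {N : ℕ} {F : ℕ → Rn N → ℝ} (hF : ∀ j, Continuous (F j))
    {a : ℕ → Rn N → ℝ≥0∞} {C : ℝ≥0∞} (hC : C < ∞)
    (hG : ∀ x : Rn N, ∃ U ∈ nhds x, ∫⁻ z in U, ∑' j, a j z < ∞)
    (h : ∀ j z, ‖F j z‖ₑ ≤ C * a j z)
    {ψ : Rn N → ℝ} (hψ : Continuous ψ) (hψc : HasCompactSupport ψ) :
    ∫ z, (∑' j, F j z) * ψ z = ∑' j, ∫ z, F j z * ψ z := by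
  simp_rw [← tsum_mul_right]
  refine integral_tsum (fun j => ((hF j).mul hψ).aestronglyMeasurable) ?_
  obtain ⟨B, hB⟩ := hψ.bounded_above_of_compact_support hψc
  rw [← lintegral_tsum (f := fun j z => ‖F j z * ψ z‖ₑ)
    fun j => ((hF j).mul hψ).enorm.measurable.aemeasurable]
  have hK : IsCompact (tsupport ψ) := hψc
  refine ne_of_lt ?_
  calc ∫⁻ z, ∑' j, ‖F j z * ψ z‖ₑ
      ≤ ∫⁻ z, (tsupport ψ).indicator (fun z => C * ENNReal.ofReal B * ∑' j, a j z) z := by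
        refine lintegral_mono fun z => ?_
        by_cases hz : z ∈ tsupport ψ
        · rw [Set.indicator_of_mem hz, ← ENNReal.tsum_mul_left]
          refine ENNReal.tsum_le_tsum fun j => ?_
          rw [enorm_mul, mul_right_comm]
          gcongr
          · exact h j z
          · rw [← ofReal_norm_eq_enorm]; exact ENNReal.ofReal_le_ofReal (hB z)
        · rw [Set.indicator_of_notMem hz]
          simp [image_eq_zero_of_notMem_tsupport hz]
    _ = C * ENNReal.ofReal B * ∫⁻ z in tsupport ψ, ∑' j, a j z := by
        rw [lintegral_indicator (isClosed_tsupport ψ).measurableSet, lintegral_const_mul']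
        exact (ENNReal.mul_lt_top hC ofReal_lt_top).ne
    _ < ∞ := ENNReal.mul_lt_top (ENNReal.mul_lt_top hC ofReal_lt_top)
        (lintegral_compact_lt_top hG hK)

lemma serD_weak {N : ℕ} {F : ℕ → Rn N → ℝ} (hF : ∀ j, ContDiff ℝ (⊤ : ℕ∞) (F j))
    {a : ℕ → Rn N → ℝ≥0∞} {C C' : ℝ≥0∞} (hC : C < ∞) (hC' : C' < ∞)
    (hG : ∀ x : Rn N, ∃ U ∈ nhds x, ∫⁻ z in U, ∑' j, a j z < ∞) (α : Fin N → ℕ)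
    (h : ∀ j z, ‖F j z‖ₑ ≤ C * a j z)
    (h' : ∀ j z, ‖iterPD (multiIdxList α).reverse (F j) z‖ₑ ≤ C' * a j z) :
    IsWeakDeriv α (serD F 0) (serD F α) := by
  intro ψ hψ hψc
  rw [serD_zero]
  unfold serD multiDeriv
  rw [integral_ser (fun j => (hF j).continuous) hC hG h
    (smooth_iterPD _ hψ).continuous (hcs_iterPD _ hψc),
    integral_ser (fun j => (smooth_iterPD _ (hF j)).continuous) hC' hG h' hψ.continuous hψc,
    ← tsum_mul_left]
  refine tsum_congr fun j => ?_
  rw [integral_iterPD _ hψ hψc (hF j), length_multiIdxList]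

lemma serD_norm {N : ℕ} {F : ℕ → Rn N → ℝ} {γ : Rn N → ℝ} (hγ : IsWeight γ)
    {p : ℝ≥0∞} (hp1 : 1 < p) (hp : p < ∞)
    {a : ℕ → Rn N → ℝ≥0∞} (ha : Measurable (fun z => ∑' j, a j z)) {C : ℝ≥0∞} (hC : C < ∞)
    (α : Fin N → ℕ)
    (h : ∀ j z, ‖iterPD (multiIdxList α).reverse (F j) z‖ₑ ≤ C * a j z) :
    eLpNorm (fun x => γ x * serD F α x) p volume ≤
      C * (∫⁻ z, (∑' j, a j z) ^ p.toReal ∂(wMeas fun x => γ x ^ p.toReal)) ^ (1 / p.toReal) := by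
  have hp0 : p ≠ 0 := (zero_lt_one.trans hp1).ne'
  have hpr : 0 < p.toReal := ENNReal.toReal_pos hp0 hp.ne
  rw [eLpNorm_eq_lintegral_rpow_enorm_toReal hp0 hp.ne]
  have h2 : C = (C ^ p.toReal) ^ (1 / p.toReal) := by
    rw [← ENNReal.rpow_mul, mul_one_div_cancel hpr.ne', ENNReal.rpow_one]
  rw [h2, ← ENNReal.mul_rpow_of_nonneg _ _ (by positivity)]
  refine ENNReal.rpow_le_rpow ?_ (by positivity)
  have hm : Measurable (fun x => ENNReal.ofReal (γ x ^ p.toReal)) :=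
    (hγ.1.pow_const _).ennreal_ofReal
  rw [wMeas, lintegral_withDensity_eq_lintegral_mul _ hm (ha.pow_const _),
    ← lintegral_const_mul _ (hm.mul (ha.pow_const _))]
  refine lintegral_mono fun z => ?_
  simp only [Pi.mul_apply]
  rw [enorm_mul, ENNReal.mul_rpow_of_nonneg _ _ hpr.le, mul_left_comm]
  have e1 : ‖γ z‖ₑ ^ p.toReal = ENNReal.ofReal (γ z ^ p.toReal) := by
    rw [Real.enorm_eq_ofReal (hγ.2 z).le, ENNReal.ofReal_rpow_of_pos (hγ.2 z)]
  rw [e1, ← ENNReal.mul_rpow_of_nonneg _ _ hpr.le]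
  gcongr
  exact serD_bound α h z

/-- Assembly. -/
lemma ser_assemble {N l : ℕ} {γ : Rn N → ℝ} (hγ : IsWeight γ)
    {p : ℝ≥0∞} (hp1 : 1 < p) (hp : p < ∞) {C : List (Fin N) → ℝ≥0∞} (hC : ∀ L, C L < ∞) :
    ∃ C' : ℝ≥0∞, C' < ∞ ∧ ∀ (F : ℕ → Rn N → ℝ) (a : ℕ → Rn N → ℝ≥0∞),
      (∀ j, ContDiff ℝ (⊤ : ℕ∞) (F j)) → Measurable (fun z => ∑' j, a j z) →
      (∀ x : Rn N, ∃ U ∈ nhds x, ∫⁻ z in U, ∑' j, a j z < ∞) →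
      (∀ L : List (Fin N), L.length ≤ l → ∀ j z, ‖iterPD L (F j) z‖ₑ ≤ C L * a j z) →
      (∫⁻ z, (∑' j, a j z) ^ p.toReal ∂(wMeas fun x => γ x ^ p.toReal)) ^ (1 / p.toReal) < ∞ →
      MemW N p l γ (serD F 0) (serD F) ∧ sobNorm N p l γ (serD F) ≤
        C' * (∫⁻ z, (∑' j, a j z) ^ p.toReal ∂(wMeas fun x => γ x ^ p.toReal)) ^
          (1 / p.toReal) := by
  set C' : ℝ≥0∞ := ∑' α : Fin N → ℕ, if (∑ i, α i) ≤ l then C (multiIdxList α).reverse else 0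
    with hC'
  have hC't : C' < ∞ := by
    have hfin : {α : Fin N → ℕ | (∑ i, α i) ≤ l}.Finite := by
      refine (Set.finite_Iic (fun _ : Fin N => l)).subset fun α hα i => ?_
      exact (Finset.single_le_sum (fun i _ => Nat.zero_le (α i)) (Finset.mem_univ i)).trans hα
    rw [hC', tsum_eq_sum (s := hfin.toFinset)]
    · refine ENNReal.sum_lt_top.2 fun α _ => ?_
      split_ifs
      · exact hC _
      · simp
    · intro α hα
      rw [if_neg]
      simpa using hα
  refine ⟨C', hC't, fun F a hF ha hG hb hfin => ?_⟩
  have hlen : ∀ α : Fin N → ℕ, (∑ i, α i) ≤ l → (multiIdxList α).reverse.length ≤ l := by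
    intro α hα; rw [List.length_reverse, length_multiIdxList]; exact hα
  have hnorm : sobNorm N p l γ (serD F) ≤
        C' * (∫⁻ z, (∑' j, a j z) ^ p.toReal ∂(wMeas fun x => γ x ^ p.toReal)) ^
          (1 / p.toReal) := by
    rw [hC', ← ENNReal.tsum_mul_right]
    unfold sobNorm
    refine ENNReal.tsum_le_tsum fun α => ?_
    split_ifs with hα
    · exact serD_norm hγ hp1 hp ha (hC _) α (hb _ (hlen α hα))
    · simp
  have hloc : ∀ α : Fin N → ℕ, (∑ i, α i) ≤ l → LocallyIntegrable (serD F α) volume :=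
    fun α hα => serD_locInt hF (hC _) hG α (hb _ (hlen α hα))
  refine ⟨⟨hloc 0 (by simp), rfl, fun α hα => ⟨hloc α hα, ?_⟩, ?_⟩, hnorm⟩
  · exact serD_weak hF (hC []) (hC _) hG α (hb [] (by simp)) (hb _ (hlen α hα))
  · exact hnorm.trans_lt (ENNReal.mul_lt_top hC't hfin)

lemma maj_local {N : ℕ} {p₀ p : ℝ} (hp₀ : 1 < p₀) (hp : p₀ ≤ p) {w : Rn N → ℝ} (hw : IsWeight w)
    (hA : MemAlocGt N p₀ w) {G : Rn N → ℝ≥0∞} (hG : Measurable G)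
    (hf : ∫⁻ z, G z ^ p ∂(wMeas w) < ∞) (x : Rn N) :
    ∃ U ∈ nhds x, ∫⁻ z in U, G z < ∞ := by
  refine ⟨cubeAt (fun i => x i - 1 / 2) 1, (cubeAt_isOpen _ _).mem_nhds ?_, ?_⟩
  · intro i; constructor <;> linarith
  set P := cubeAt (fun i => x i - 1 / 2) 1
  obtain ⟨h1, h2⟩ := weight_finite hp₀ hw hA (fun i => x i - 1 / 2) one_pos le_rfl
  have hH := holder_weight hp₀ hw hG P
  have hm : Measurable (fun z => ENNReal.ofReal (w z)) := hw.1.ennreal_ofReal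
  rw [wMeas, lintegral_withDensity_eq_lintegral_mul _ hm (hG.pow_const _)] at hf
  have hlt : (∫⁻ z in P, G z) ^ p₀ < ∞ := by
    refine hH.trans_lt (ENNReal.mul_lt_top ?_
      (ENNReal.rpow_lt_top_of_nonneg (by linarith) h2.ne))
    calc ∫⁻ z in P, G z ^ p₀ * ENNReal.ofReal (w z)
        ≤ ∫⁻ z in P, (ENNReal.ofReal (w z) + ENNReal.ofReal (w z) * G z ^ p) := by
          refine lintegral_mono fun z => ?_
          have : G z ^ p₀ ≤ 1 + G z ^ p := by
            rcases le_total (G z) 1 with hz | hz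
            · exact (ENNReal.rpow_le_one hz (by linarith)).trans le_self_add
            · exact (ENNReal.rpow_le_rpow_of_exponent_le hz hp).trans le_add_self
          calc G z ^ p₀ * ENNReal.ofReal (w z) ≤ (1 + G z ^ p) * ENNReal.ofReal (w z) := by gcongr
            _ = _ := by ring
      _ = (∫⁻ z in P, ENNReal.ofReal (w z)) + ∫⁻ z in P, ENNReal.ofReal (w z) * G z ^ p :=
          lintegral_add_left hm _
      _ < ∞ := by
          refine ENNReal.add_lt_top.2 ⟨h1, lt_of_le_of_lt (setLIntegral_le_lintegral _ _) ?_⟩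
          exact hf
  by_contra hc
  rw [not_lt_top_iff] at hc
  rw [hc, ENNReal.top_rpow_of_pos (by linarith)] at hlt
  exact lt_irrefl _ hlt

/-! ## Part F: convolution kernels -/

/-- Smooth kernels supported in the cube of half-side `ε`. -/
def Ker {n : ℕ} (ε : ℝ) (κ : Rn n → ℝ) : Prop :=
  ContDiff ℝ (⊤ : ℕ∞) κ ∧ HasCompactSupport κ ∧ ∀ u, ε ≤ ‖u‖ → κ u = 0

def sc {n : ℕ} (j : ℕ) (κ : Rn n → ℝ) : Rn n → ℝ := fun u => ((2 : ℝ) ^ j) ^ n * κ ((2 : ℝ) ^ j • u)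

lemma hcs_of_supp {n : ℕ} {ε : ℝ} {κ : Rn n → ℝ} (h : ∀ u, ε ≤ ‖u‖ → κ u = 0) :
    HasCompactSupport κ := by
  refine HasCompactSupport.intro (isCompact_closedBall 0 ε) fun x hx => h x ?_
  simp only [Metric.mem_closedBall, dist_zero_right, not_le] at hx
  exact hx.le

lemma Ker.mk' {n : ℕ} {ε : ℝ} {κ : Rn n → ℝ} (h0 : ContDiff ℝ (⊤ : ℕ∞) κ)
    (h : ∀ u, ε ≤ ‖u‖ → κ u = 0) : Ker ε κ := ⟨h0, hcs_of_supp h, h⟩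

lemma Ker.mono {n : ℕ} {ε ε' : ℝ} {κ : Rn n → ℝ} (h : Ker ε κ) (he : ε ≤ ε') : Ker ε' κ :=
  ⟨h.1, h.2.1, fun u hu => h.2.2 u (he.trans hu)⟩

lemma sc_ker {n : ℕ} {ε : ℝ} {κ : Rn n → ℝ} (h : Ker ε κ) (j : ℕ) :
    Ker (ε / 2 ^ j) (sc j κ) := by
  have h2 : (0 : ℝ) < 2 ^ j := by positivity
  refine Ker.mk' ?_ fun u hu => ?_
  · exact contDiff_const.mul (h.1.comp (contDiff_const_smul _))
  · unfold sc
    rw [h.2.2, mul_zero]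
    rw [norm_smul, Real.norm_of_nonneg h2.le]
    rwa [div_le_iff₀' h2] at hu

lemma Ker.add {n : ℕ} {ε : ℝ} {κ κ' : Rn n → ℝ} (h : Ker ε κ) (h' : Ker ε κ') :
    Ker ε (fun u => κ u + κ' u) :=
  Ker.mk' (h.1.add h'.1) fun u hu => by rw [h.2.2 u hu, h'.2.2 u hu, add_zero]

lemma Ker.iterPD_zero {n : ℕ} {ε : ℝ} {κ : Rn n → ℝ} (h : Ker ε κ) (L : List (Fin n)) {ε' : ℝ}
    (hε : ε < ε') :
    ∀ u, ε' ≤ ‖u‖ → iterPD L κ u = 0 := by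
  intro u hu
  refine image_eq_zero_of_notMem_tsupport fun hc => ?_
  have h1 := tsupport_iterPD L κ hc
  have h2 : tsupport κ ⊆ Metric.closedBall 0 ε := by
    refine closure_minimal (fun v hv => ?_) Metric.isClosed_closedBall
    simp only [Metric.mem_closedBall, dist_zero_right]
    by_contra hc
    exact hv (h.2.2 v (not_le.1 hc).le)
  have := h2 h1
  simp only [Metric.mem_closedBall, dist_zero_right] at this
  linarith

lemma mem_openCube {n : ℕ} {x y : Rn n} {s : ℝ} (hs : 0 < s) : y ∈ openCube x s ↔ ‖y - x‖ < s := by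
  unfold openCube
  rw [pi_norm_lt_iff hs]
  simp

lemma openCube_eq_ball {n : ℕ} (x : Rn n) {s : ℝ} (hs : 0 < s) :
    openCube x s = Metric.ball x s := by
  ext y; rw [mem_openCube hs, mem_ball_iff_norm]

lemma openCube_measurable {n : ℕ} (x : Rn n) {s : ℝ} (hs : 0 < s) :
    MeasurableSet (openCube x s) := by
  rw [openCube_eq_ball x hs]; exact measurableSet_ball

lemma openCube_volume {n : ℕ} (x : Rn n) {s : ℝ} (hs : 0 < s) :
    volume (openCube x s) = ENNReal.ofReal ((2 * s) ^ n) := by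
  rw [openCube_eq_ball x hs, Real.volume_pi_ball _ hs]; simp

lemma openCube_mono {n : ℕ} {x x' : Rn n} {s s' : ℝ} (hs : 0 < s) (h : ‖x - x'‖ + s ≤ s') :
    openCube x s ⊆ openCube x' s' := by
  intro y hy
  have hs' : 0 < s' := by have := norm_nonneg (x - x'); linarith
  rw [mem_openCube hs] at hy
  rw [mem_openCube hs']
  calc ‖y - x'‖ = ‖(y - x) + (x - x')‖ := by congr 1; abel
    _ ≤ ‖y - x‖ + ‖x - x'‖ := norm_add_le _ _
    _ < s' := by linarith

/-- Pointwise bound for a convolution. -/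
lemma conv_enorm_le {n : ℕ} {κ ρ : Rn n → ℝ} {s B : ℝ} (hs : 0 < s)
    (h0 : ∀ u, s ≤ ‖u‖ → κ u = 0) (hB : ∀ u, |κ u| ≤ B) (x : Rn n) :
    ‖conv κ ρ x‖ₑ ≤ ENNReal.ofReal B * ∫⁻ t in openCube x s, ‖ρ t‖ₑ := by
  rw [conv_apply_swap]
  refine (enorm_integral_le_lintegral_enorm _).trans ?_
  rw [← lintegral_const_mul' _ _ ofReal_ne_top, ← lintegral_indicator (openCube_measurable x hs)]
  refine lintegral_mono fun t => ?_
  by_cases ht : t ∈ openCube x s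
  · rw [Set.indicator_of_mem ht, enorm_mul]
    gcongr
    rw [← ofReal_norm]
    exact ENNReal.ofReal_le_ofReal (hB _)
  · rw [Set.indicator_of_notMem ht]
    rw [mem_openCube hs, not_lt, norm_sub_rev] at ht
    simp [h0 _ ht]

lemma iterPD_conv_sc {n : ℕ} {ε ε' : ℝ} {κ : Rn n → ℝ} (hκ : Ker ε κ) (hε' : 0 < ε')
    (hε : ε < ε') (L : List (Fin n)) :
    ∃ C : ℝ≥0∞, C < ∞ ∧ ∀ (ρ : Rn n → ℝ), LocallyIntegrable ρ volume → ∀ (j : ℕ) (x : Rn n),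
      ‖iterPD L (conv (sc j κ) ρ) x‖ₑ ≤
        C * ((2 : ℝ≥0∞) ^ j) ^ (L.length + n) * ∫⁻ t in openCube x (ε' / 2 ^ j), ‖ρ t‖ₑ := by
  obtain ⟨B, hB⟩ := (smooth_iterPD L hκ.1).continuous.bounded_above_of_compact_support
    (hcs_iterPD L hκ.2.1)
  have hB0 : 0 ≤ B := (norm_nonneg _).trans (hB 0)
  refine ⟨ENNReal.ofReal B, ofReal_lt_top, fun ρ hρ j x => ?_⟩
  have hk := sc_ker hκ j
  rw [iterPD_conv L hk.1 hk.2.1 hρ]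
  have h2 : (0 : ℝ) < 2 ^ j := by positivity
  have e : iterPD L (sc j κ) = fun u => ((2 : ℝ) ^ j) ^ n * ((2 : ℝ) ^ j) ^ L.length *
      iterPD L κ ((2 : ℝ) ^ j • u) := iterPD_scale L hκ.1 _ _
  refine (conv_enorm_le (s := ε' / 2 ^ j) (B := B * ((2 : ℝ) ^ j) ^ (L.length + n))
    (by positivity) (hk.iterPD_zero L (by gcongr)) (fun u => ?_) x).trans ?_
  · rw [e]
    simp only
    rw [abs_mul, abs_of_nonneg (by positivity), mul_comm, ← pow_add, add_comm n]
    gcongr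
    exact hB _
  · rw [ENNReal.ofReal_mul hB0, ENNReal.ofReal_pow h2.le, ENNReal.ofReal_pow (by norm_num)]
    simp

lemma ofReal_two_pow (j : ℕ) : ENNReal.ofReal ((2 : ℝ) ^ j) = 2 ^ j := by
  rw [ENNReal.ofReal_pow (by norm_num)]; simp

/-- L¹ bound of a convolution on cubes. -/
lemma conv_L1 {n : ℕ} {κ ρ : Rn n → ℝ} {s : ℝ} (hs : 0 < s) (hκ : Ker s κ) (hρ : Measurable ρ)
    {x : Rn n} {R : ℝ} (hR : 0 < R) :
    ∫⁻ t in openCube x R, ‖conv κ ρ t‖ₑ ≤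
      (∫⁻ u, ‖κ u‖ₑ) * ∫⁻ t in openCube x (R + s), ‖ρ t‖ₑ := by
  have hm : Measurable κ := hκ.1.continuous.measurable
  calc ∫⁻ t in openCube x R, ‖conv κ ρ t‖ₑ
      ≤ ∫⁻ t in openCube x R, ∫⁻ u, ‖κ u‖ₑ * ‖ρ (t - u)‖ₑ := by
        refine lintegral_mono fun t => ?_
        rw [conv_apply]
        refine (enorm_integral_le_lintegral_enorm _).trans (le_of_eq ?_)
        simp_rw [enorm_mul]
    _ = ∫⁻ u, ∫⁻ t in openCube x R, ‖κ u‖ₑ * ‖ρ (t - u)‖ₑ := by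
        rw [lintegral_lintegral_swap]
        refine Measurable.aemeasurable ?_
        fun_prop
    _ ≤ ∫⁻ u, ‖κ u‖ₑ * ∫⁻ t in openCube x (R + s), ‖ρ t‖ₑ := by
        refine lintegral_mono fun u => ?_
        simp only
        rw [lintegral_const_mul' _ _ enorm_ne_top]
        by_cases hu : s ≤ ‖u‖
        · simp [hκ.2.2 u hu]
        gcongr ‖κ u‖ₑ * ?_
        rw [← lintegral_indicator (openCube_measurable x hR),
          ← lintegral_indicator (openCube_measurable x (add_pos hR hs)),
          ← lintegral_sub_right_eq_self ((openCube x (R + s)).indicator fun t => ‖ρ t‖ₑ) u]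
        refine lintegral_mono fun t => ?_
        by_cases ht : t ∈ openCube x R
        · rw [Set.indicator_of_mem ht, Set.indicator_of_mem]
          rw [mem_openCube hR] at ht
          rw [mem_openCube (add_pos hR hs)]
          calc ‖t - u - x‖ = ‖(t - x) - u‖ := by congr 1; abel
            _ ≤ ‖t - x‖ + ‖u‖ := norm_sub_le _ _
            _ < R + s := by linarith
        · rw [Set.indicator_of_notMem ht]; simp
    _ = _ := lintegral_mul_const _ hm.enorm

lemma sc_L1 {n : ℕ} (κ : Rn n → ℝ) (j : ℕ) :
    ∫⁻ u, ‖sc j κ u‖ₑ = ∫⁻ u, ‖κ u‖ₑ := by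
  have h2 : (0 : ℝ) < 2 ^ j := by positivity
  unfold sc
  simp_rw [enorm_mul]
  rw [lintegral_const_mul' _ _ enorm_ne_top]
  have e := lintegral_map_equiv (μ := (volume : Measure (Rn n))) (fun u => ‖κ u‖ₑ)
    (MeasurableEquiv.smul₀ ((2 : ℝ) ^ j) h2.ne')
  simp only [MeasurableEquiv.coe_smul₀] at e
  rw [← e, Measure.map_addHaar_smul _ h2.ne', lintegral_smul_measure]
  rw [smul_eq_mul, ← mul_assoc]
  simp only [Module.finrank_fintype_fun_eq_card, Fintype.card_fin]
  rw [Real.enorm_eq_ofReal (by positivity), ← ENNReal.ofReal_mul (by positivity),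
    abs_of_pos (by positivity), mul_inv_cancel₀ (by positivity)]
  simp

lemma conv_assoc' {n : ℕ} {ε ε' : ℝ} {κ κ' ρ : Rn n → ℝ} (hκ : Ker ε κ) (hκ' : Ker ε' κ')
    (hρ : LocallyIntegrable ρ volume) :
    conv (conv κ κ') ρ = conv κ (conv κ' ρ) := by
  funext x
  have hc : Continuous κ := hκ.1.continuous
  have hc' : Continuous κ' := hκ'.1.continuous
  have hn : LocallyIntegrable (fun x => ‖ρ x‖) volume :=
    fun x => (hρ x).norm
  refine convolution_assoc _ _ _ _ (fun a b c => ?_) hc.aestronglyMeasurable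
    hc'.aestronglyMeasurable hρ.aestronglyMeasurable ?_ ?_ ?_
  · simp [mul_assoc]
  · exact ae_of_all _ fun y =>
      hκ.2.1.convolutionExists_left (ContinuousLinearMap.mul ℝ ℝ) hc hc'.locallyIntegrable y
  · exact ae_of_all _ fun y =>
      hκ'.2.1.norm.convolutionExists_left (ContinuousLinearMap.mul ℝ ℝ) hc'.norm hn y
  · refine hκ.2.1.norm.convolutionExists_left (ContinuousLinearMap.mul ℝ ℝ) hc.norm ?_ x
    exact (hκ'.2.1.norm.continuous_convolution_left (ContinuousLinearMap.mul ℝ ℝ)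
      hc'.norm hn).locallyIntegrable

lemma conv_comm {n : ℕ} (κ κ' : Rn n → ℝ) : conv κ κ' = conv κ' κ := by
  funext x
  rw [conv_apply, conv_apply_swap]
  simp_rw [mul_comm]

lemma conv_comm_assoc {n : ℕ} {ε ε' : ℝ} {κ κ' ρ : Rn n → ℝ} (hκ : Ker ε κ) (hκ' : Ker ε' κ')
    (hρ : LocallyIntegrable ρ volume) :
    conv κ (conv κ' ρ) = conv κ' (conv κ ρ) := by
  rw [← conv_assoc' hκ hκ' hρ, ← conv_assoc' hκ' hκ hρ, conv_comm κ κ']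

lemma conv_sub {n : ℕ} {ε : ℝ} {κ ρ ρ' : Rn n → ℝ} (hκ : Ker ε κ)
    (hρ : LocallyIntegrable ρ volume) (hρ' : LocallyIntegrable ρ' volume) :
    conv κ (fun x => ρ x - ρ' x) = fun x => conv κ ρ x - conv κ ρ' x := by
  funext x
  simp only [conv_apply]
  rw [← integral_sub (conv_integrand hκ.1.continuous hκ.2.1 hρ x)
    (conv_integrand hκ.1.continuous hκ.2.1 hρ' x)]
  simp_rw [mul_sub]

lemma add_conv {n : ℕ} {ε ε' : ℝ} {κ κ' ρ : Rn n → ℝ} (hκ : Ker ε κ) (hκ' : Ker ε' κ')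
    (hρ : LocallyIntegrable ρ volume) :
    conv (fun x => κ x + κ' x) ρ = fun x => conv κ ρ x + conv κ' ρ x := by
  funext x
  simp only [conv_apply]
  rw [← integral_add (conv_integrand hκ.1.continuous hκ.2.1 hρ x)
    (conv_integrand hκ'.1.continuous hκ'.2.1 hρ x)]
  simp_rw [add_mul]

/-! ## Part G: the mollifiers -/

def etaB (n l : ℕ) : ContDiffBump (0 : Rn n) where
  rIn := 1 / (16 * ((l : ℝ) + 1))
  rOut := 1 / (8 * ((l : ℝ) + 1))
  rIn_pos := by positivity
  rIn_lt_rOut := by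
    apply one_div_lt_one_div_of_lt (by positivity)
    have : (0 : ℝ) ≤ l := Nat.cast_nonneg l
    linarith

def eta (n l : ℕ) : Rn n → ℝ := (etaB n l).normed volume

lemma eta_ker (n l : ℕ) : Ker (1 / (8 * ((l : ℝ) + 1))) (eta n l) := by
  refine Ker.mk' (etaB n l).contDiff_normed fun u hu => ?_
  by_contra hc
  have h1 : u ∈ Function.support (eta n l) := hc
  unfold eta at h1
  rw [(etaB n l).support_normed_eq] at h1
  simp only [Metric.mem_ball, dist_zero_right, etaB] at h1
  linarith

lemma eta_integral (n l : ℕ) : ∫ u, eta n l u = 1 := (etaB n l).integral_normed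

def mcoef (l i : ℕ) : ℝ := -((-1) ^ i * (l.choose i : ℝ))

def mker (n l : ℕ) : Rn n → ℝ := fun u =>
  ∑ i ∈ Finset.range l, mcoef l (i + 1) *
    ((((i : ℝ) + 1) ^ n)⁻¹ * eta n l (((i : ℝ) + 1)⁻¹ • u))

lemma mker_ker (n l : ℕ) : Ker (1 / 8) (mker n l) := by
  refine Ker.mk' ?_ fun u hu => ?_
  · unfold mker
    refine ContDiff.sum fun i _ => contDiff_const.mul (contDiff_const.mul ?_)
    exact (eta_ker n l).1.comp (contDiff_const_smul _)
  · unfold mker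
    refine Finset.sum_eq_zero fun i hi => ?_
    have hi' : (i : ℝ) + 1 ≤ (l : ℝ) + 1 := by
      have := Finset.mem_range.1 hi
      have : (i : ℝ) ≤ l := by exact_mod_cast this.le
      linarith
    have hi0 : (0 : ℝ) < (i : ℝ) + 1 := by positivity
    rw [(eta_ker n l).2.2, mul_zero, mul_zero]
    rw [norm_smul, norm_inv, Real.norm_of_nonneg hi0.le]
    calc 1 / (8 * ((l : ℝ) + 1)) ≤ 1 / (8 * ((i : ℝ) + 1)) := by
          apply one_div_le_one_div_of_le (by positivity)
          linarith
      _ = ((i : ℝ) + 1)⁻¹ * (1 / 8) := by field_simp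
      _ ≤ _ := by gcongr

lemma scale_conv {n : ℕ} {ε : ℝ} {κ φ : Rn n → ℝ} (hκ : Ker ε κ)
    (hφ : LocallyIntegrable φ volume) {a : ℝ} (ha : 0 < a) (x : Rn n) :
    Integrable (fun h => κ h * φ (x - a • h)) volume ∧
    Integrable (fun t => ((a ^ n)⁻¹ * κ (a⁻¹ • t)) * φ (x - t)) volume ∧
    ∫ h, κ h * φ (x - a • h) = ∫ t, ((a ^ n)⁻¹ * κ (a⁻¹ • t)) * φ (x - t) := by
  have hk : Ker (a * ε) (fun t => κ (a⁻¹ • t)) := by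
    refine Ker.mk' (hκ.1.comp (contDiff_const_smul _)) fun u hu => hκ.2.2 _ ?_
    rw [norm_smul, norm_inv, Real.norm_of_nonneg ha.le, le_inv_mul_iff₀ ha]
    exact hu
  have hg : Integrable (fun t => κ (a⁻¹ • t) * φ (x - t)) volume :=
    conv_integrand hk.1.continuous hk.2.1 hφ x
  have e : (fun h => κ h * φ (x - a • h)) =
      fun h => (fun t => κ (a⁻¹ • t) * φ (x - t)) (a • h) := by
    funext h
    simp only [smul_smul, inv_mul_cancel₀ ha.ne', one_smul]
  refine ⟨?_, ?_, ?_⟩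
  · rw [e]; exact hg.comp_smul ha.ne'
  · simp_rw [mul_assoc]; exact hg.const_mul _
  · rw [e, Measure.integral_comp_smul volume (fun t => κ (a⁻¹ • t) * φ (x - t)) a]
    simp_rw [mul_assoc]
    rw [integral_const_mul, smul_eq_mul, abs_of_pos (by positivity)]
    simp

lemma sc_mker {n l j : ℕ} (t : Rn n) : sc j (mker n l) t =
    ∑ i ∈ Finset.range l, mcoef l (i + 1) *
      ((((i : ℝ) + 1) ^ n)⁻¹ * sc j (eta n l) (((i : ℝ) + 1)⁻¹ • t)) := by
  unfold sc mker
  rw [Finset.mul_sum]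
  refine Finset.sum_congr rfl fun i _ => ?_
  rw [smul_comm]
  ring

lemma sc_eta_integral (n l j : ℕ) : ∫ u, sc j (eta n l) u = 1 := by
  unfold sc
  rw [integral_const_mul, Measure.integral_comp_smul, eta_integral, abs_of_pos (by positivity)]
  simp only [Module.finrank_fintype_fun_eq_card, Fintype.card_fin, smul_eq_mul, mul_one]
  exact mul_inv_cancel₀ (by positivity)

/-- The remainder `M_j φ - φ`. -/
lemma remainder_eq {n l j : ℕ} {φ : Rn n → ℝ} (hφ : LocallyIntegrable φ volume) (x : Rn n) :
    conv (sc j (mker n l)) φ x - φ x =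
      -(-1) ^ l * ∫ h, sc j (eta n l) h * diffl l (-h) φ x := by
  have hk := sc_ker (eta_ker n l) j
  have hpos : ∀ i : ℕ, (0 : ℝ) < (i : ℝ) + 1 := fun i => by positivity
  have e1 : conv (sc j (mker n l)) φ x = ∑ i ∈ Finset.range l, mcoef l (i + 1) *
      ∫ h, sc j (eta n l) h * φ (x - ((i : ℝ) + 1) • h) := by
    rw [conv_apply]
    simp_rw [sc_mker, Finset.sum_mul]
    rw [integral_finsetSum]
    · refine Finset.sum_congr rfl fun i _ => ?_
      rw [(scale_conv hk hφ (hpos i) x).2.2, ← integral_const_mul]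
      simp_rw [mul_assoc]
    · intro i _
      have := ((scale_conv hk hφ (hpos i) x).2.1).const_mul (mcoef l (i + 1))
      simpa [mul_assoc] using this
  have hint0 : Integrable (sc j (eta n l)) volume :=
    hk.1.continuous.integrable_of_hasCompactSupport hk.2.1
  have e2 : ∫ h, sc j (eta n l) h * diffl l (-h) φ x =
      (-1) ^ l * φ x + ∑ i ∈ Finset.range l, ((l.choose (i + 1) : ℝ) * (-1) ^ (l + (i + 1))) *
      ∫ h, sc j (eta n l) h * φ (x - ((i : ℝ) + 1) • h) := by
    have e3 : ∀ h, sc j (eta n l) h * diffl l (-h) φ x =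
        (∑ i ∈ Finset.range l, ((l.choose (i + 1) : ℝ) * (-1) ^ (l + (i + 1))) *
        (sc j (eta n l) h * φ (x - ((i : ℝ) + 1) • h))) + (-1) ^ l * φ x * sc j (eta n l) h := by
      intro h
      unfold diffl
      rw [Finset.sum_range_succ', mul_add, Finset.mul_sum]
      congr 1
      · refine Finset.sum_congr rfl fun i _ => ?_
        rw [smul_neg, ← sub_eq_add_neg]
        push_cast
        ring
      · simp; ring
    simp_rw [e3]
    rw [integral_add, integral_const_mul, sc_eta_integral, integral_finsetSum, mul_one, add_comm]
    · congr 1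
      refine Finset.sum_congr rfl fun i _ => ?_
      rw [integral_const_mul]
    · intro i _
      exact ((scale_conv hk hφ (hpos i) x).1).const_mul _
    · refine integrable_finsetSum _ fun i _ => ?_
      exact ((scale_conv hk hφ (hpos i) x).1).const_mul _
    · exact hint0.const_mul _
  have hs : ((-1 : ℝ) ^ l) * (-1) ^ l = 1 := by rw [← mul_pow]; simp
  rw [e1, e2, mul_add, Finset.mul_sum]
  have : -(-1 : ℝ) ^ l * ((-1) ^ l * φ x) = - φ x := by
    rw [← mul_assoc, neg_mul, hs]; ring
  rw [this, add_comm, ← sub_eq_add_neg]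
  congr 1
  refine Finset.sum_congr rfl fun i _ => ?_
  rw [← mul_assoc]
  congr 1
  unfold mcoef
  rw [pow_add (-1 : ℝ) l]
  linear_combination (-(l.choose (i + 1) : ℝ) * (-1) ^ (i + 1)) * (-hs)

lemma remainder_bound (n l : ℕ) : ∃ C : ℝ≥0∞, C < ∞ ∧ ∀ (φ : Rn n → ℝ),
    LocallyIntegrable φ volume → ∀ (j : ℕ) (x : Rn n),
    ‖conv (sc j (mker n l)) φ x - φ x‖ₑ ≤
      C * ((2 : ℝ≥0∞) ^ j) ^ n * ∫⁻ h in openCube (0 : Rn n) (1 / 2 ^ j), ‖diffl l h φ x‖ₑ := by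
  obtain ⟨B, hB⟩ := (eta_ker n l).1.continuous.bounded_above_of_compact_support (eta_ker n l).2.1
  have hB0 : 0 ≤ B := (norm_nonneg _).trans (hB 0)
  refine ⟨ENNReal.ofReal B, ofReal_lt_top, fun φ hφ j x => ?_⟩
  have hk : Ker (1 / 2 ^ j) (sc j (eta n l)) := by
    refine (sc_ker (eta_ker n l) j).mono ?_
    gcongr
    rw [div_le_one (by positivity)]
    have : (0 : ℝ) ≤ l := Nat.cast_nonneg l
    linarith
  have hs : (0 : ℝ) < 1 / 2 ^ j := by positivity
  rw [remainder_eq hφ x, enorm_mul]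
  have h1 : ‖-(-1 : ℝ) ^ l‖ₑ = 1 := by
    rw [enorm_neg, enorm_pow, enorm_neg, enorm_one, one_pow]
  rw [h1, one_mul]
  refine (enorm_integral_le_lintegral_enorm _).trans ?_
  rw [← lintegral_const_mul' _ _ (by finiteness), ← lintegral_indicator (openCube_measurable _ hs),
    ← lintegral_neg_eq_self]
  refine lintegral_mono fun h => ?_
  simp only
  by_cases hh : h ∈ openCube (0 : Rn n) (1 / 2 ^ j)
  · rw [Set.indicator_of_mem hh, neg_neg, enorm_mul]
    gcongr
    rw [← ofReal_two_pow, ← ENNReal.ofReal_pow (by positivity), ← ENNReal.ofReal_mul hB0,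
      ← ofReal_norm]
    refine ENNReal.ofReal_le_ofReal ?_
    unfold sc
    rw [norm_mul, Real.norm_of_nonneg (by positivity), mul_comm]
    gcongr
    exact hB _
  · rw [mem_openCube hs, sub_zero, not_lt] at hh
    rw [hk.2.2 (-h) (by rwa [norm_neg])]
    simp

/-! ## Part H: the building blocks and their bounds -/

def phS (n l : ℕ) (φ : Rn n → ℝ) (j : ℕ) : Rn n → ℝ :=
  conv (sc j (mker n l)) (conv (sc j (mker n l)) φ)

def uS (n l : ℕ) (φ : Rn n → ℝ) : ℕ → Rn n → ℝ
  | 0 => conv (sc 0 (mker n l)) (conv (sc 0 (mker n l)) φ)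
  | (j + 1) => conv (fun u => sc (j + 1) (mker n l) u + sc j (mker n l) u)
      (fun x => conv (sc (j + 1) (mker n l)) φ x - conv (sc j (mker n l)) φ x)

def Dl (n l : ℕ) (r : ℝ≥0∞) (φ : Rn n → ℝ) : ℕ → Rn n → ℝ≥0∞
  | 0, x => eLpNorm φ r (volume.restrict (openCube x 1))
  | (k + 1), x =>
      deltaE n l r ((2 : ℝ) ^ (1 - ((k : ℤ) + 1))) (openCube x ((2 : ℝ) ^ (-((k : ℤ) + 1)))) φ

def kap (n l : ℕ) : Rn n → ℝ := fun u => mker n l u + ((2 : ℝ) ^ n)⁻¹ * mker n l ((2 : ℝ)⁻¹ • u)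

lemma kap_ker (n l : ℕ) : Ker (1 / 4) (kap n l) := by
  refine Ker.add ((mker_ker n l).mono (by norm_num)) ?_
  refine Ker.mk' (contDiff_const.mul ((mker_ker n l).1.comp (contDiff_const_smul _))) fun u hu => ?_
  rw [(mker_ker n l).2.2, mul_zero]
  rw [norm_smul]
  norm_num
  linarith

lemma sc_kap (n l j : ℕ) :
    sc (j + 1) (kap n l) = fun u => sc (j + 1) (mker n l) u + sc j (mker n l) u := by
  funext u
  unfold sc kap
  rw [mul_add, smul_smul, show (2 : ℝ)⁻¹ * 2 ^ (j + 1) = 2 ^ j by rw [pow_succ]; ring]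
  congr 1
  rw [← mul_assoc]
  congr 1
  rw [pow_succ, mul_pow]
  field_simp

lemma conv_locInt {n : ℕ} {ε : ℝ} {κ ρ : Rn n → ℝ} (hκ : Ker ε κ)
    (hρ : LocallyIntegrable ρ volume) : LocallyIntegrable (conv κ ρ) volume :=
  (smooth_conv hκ.1 hκ.2.1 hρ).continuous.locallyIntegrable

lemma conv_cont {n : ℕ} {ε : ℝ} {κ ρ : Rn n → ℝ} (hκ : Ker ε κ)
    (hρ : LocallyIntegrable ρ volume) : Continuous (conv κ ρ) :=
  (smooth_conv hκ.1 hκ.2.1 hρ).continuous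

lemma rho_cont {n l : ℕ} {φ : Rn n → ℝ} (hφ : LocallyIntegrable φ volume) (j : ℕ) :
    Continuous (fun x => conv (sc (j + 1) (mker n l)) φ x - conv (sc j (mker n l)) φ x) :=
  (conv_cont (sc_ker (mker_ker n l) _) hφ).sub (conv_cont (sc_ker (mker_ker n l) _) hφ)

lemma uS_smooth {n l : ℕ} {φ : Rn n → ℝ} (hφ : LocallyIntegrable φ volume) (j : ℕ) :
    ContDiff ℝ (⊤ : ℕ∞) (uS n l φ j) := by
  have hk := fun j => sc_ker (mker_ker n l) j
  cases j with
  | zero => exact smooth_conv (hk 0).1 (hk 0).2.1 (conv_locInt (hk 0) hφ)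
  | succ j =>
    have e : uS n l φ (j + 1) = conv (sc (j + 1) (kap n l))
        (fun x => conv (sc (j + 1) (mker n l)) φ x - conv (sc j (mker n l)) φ x) := by
      rw [sc_kap]; rfl
    rw [e]
    exact smooth_conv (sc_ker (kap_ker n l) _).1 (sc_ker (kap_ker n l) _).2.1
      (rho_cont hφ j).locallyIntegrable

lemma uS_sum {n l : ℕ} {φ : Rn n → ℝ} (hφ : LocallyIntegrable φ volume) (k : ℕ) (x : Rn n) :
    ∑ j ∈ Finset.range (k + 1), uS n l φ j x = phS n l φ k x := by
  have hk := fun j => sc_ker (mker_ker n l) j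
  induction k with
  | zero => simp [uS, phS]
  | succ k ih =>
    rw [Finset.sum_range_succ, ih]
    have e : uS n l φ (k + 1) = conv (fun u => sc (k + 1) (mker n l) u + sc k (mker n l) u)
      (fun x => conv (sc (k + 1) (mker n l)) φ x - conv (sc k (mker n l)) φ x) := rfl
    rw [e]
    rw [add_conv (hk (k + 1)) (hk k) (rho_cont hφ k).locallyIntegrable]
    rw [conv_sub (hk (k + 1)) (conv_locInt (hk _) hφ) (conv_locInt (hk _) hφ),
      conv_sub (hk k) (conv_locInt (hk _) hφ) (conv_locInt (hk _) hφ)]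
    rw [conv_comm_assoc (hk (k + 1)) (hk k) hφ]
    unfold phS
    ring

lemma diffl_measurable {n l : ℕ} {φ : Rn n → ℝ} (hφ : Measurable φ) :
    Measurable (fun hx : Rn n × Rn n => diffl l hx.1 φ hx.2) := by
  unfold diffl
  refine Finset.measurable_fun_sum _ fun i _ => Measurable.const_mul (hφ.comp ?_) _
  fun_prop

lemma L1_Lr {n : ℕ} {r : ℝ≥0∞} (hr1 : 1 ≤ r) (hr : r < ∞) (j : ℕ) (x : Rn n)
    {g : Rn n × Rn n → ℝ} (hg : Measurable g) :
    (((2 : ℝ≥0∞) ^ (j + 1)) ^ n) ^ 2 * eLpNorm g 1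
      ((volume.restrict (openCube (0 : Rn n) (1 / 2 ^ j))).prod
        (volume.restrict (openCube x (1 / 2 ^ (j + 1))))) ≤
    2 ^ (3 * n) * (ENNReal.ofReal (1 / 2 ^ j) ^ (-(2 * (n : ℝ)) / r.toReal) * eLpNorm g r
      ((volume.restrict (openCube (0 : Rn n) (1 / 2 ^ j))).prod
        (volume.restrict (openCube x (1 / 2 ^ (j + 1)))))) := by
  set ν := ((volume.restrict (openCube (0 : Rn n) (1 / 2 ^ j))).prod
        (volume.restrict (openCube x (1 / 2 ^ (j + 1))))) with hν
  have hrr : 1 ≤ r.toReal := by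
    rw [← ENNReal.toReal_one]; exact ENNReal.toReal_mono hr.ne hr1
  set S : ℝ≥0∞ := ENNReal.ofReal (1 / 2 ^ j) with hS
  have hS0 : S ≠ 0 := by rw [hS]; simp
  have hSt : S ≠ ∞ := ofReal_ne_top
  have hV : ν Set.univ = 2 ^ n * S ^ (2 * (n : ℝ)) := by
    rw [hν, ← Set.univ_prod_univ, Measure.prod_prod, Measure.restrict_apply_univ,
      Measure.restrict_apply_univ, openCube_volume _ (by positivity),
      openCube_volume _ (by positivity), mul_pow, ENNReal.ofReal_mul (by positivity),
      show 2 * (1 / 2 ^ (j + 1) : ℝ) = 1 / 2 ^ j by rw [pow_succ]; field_simp,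
      ENNReal.ofReal_pow (by positivity), ENNReal.ofReal_pow (by positivity), ← hS,
      show (2 * (n : ℝ)) = ((2 * n : ℕ) : ℝ) by push_cast; ring, ENNReal.rpow_natCast, two_mul,
      pow_add]
    simp [mul_assoc]
  have h2 : (2 : ℝ≥0∞) ^ (j + 1) = 2 * S⁻¹ := by
    rw [hS, ← ENNReal.ofReal_inv_of_pos (by positivity), one_div, inv_inv, ofReal_two_pow, pow_succ,
      mul_comm]
  have h3 : (((2 : ℝ≥0∞) ^ (j + 1)) ^ n) ^ 2 = 2 ^ (2 * n) * S ^ (-(2 * (n : ℝ))) := by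
    rw [h2, ← pow_mul, mul_pow, mul_comm n 2, ENNReal.rpow_neg,
      show (2 * (n : ℝ)) = ((2 * n : ℕ) : ℝ) by push_cast; ring, ENNReal.rpow_natCast,
      ENNReal.inv_pow]
  have h4 : ν Set.univ ^ (1 / (1 : ℝ≥0∞).toReal - 1 / r.toReal) ≤
      2 ^ n * S ^ (2 * (n : ℝ) - 2 * (n : ℝ) / r.toReal) := by
    have e0 : (0 : ℝ) ≤ 1 - 1 / r.toReal := by
      rw [sub_nonneg, div_le_one (by linarith)]; exact hrr
    rw [hV, ENNReal.toReal_one, div_one, ENNReal.mul_rpow_of_nonneg _ _ e0, ← ENNReal.rpow_mul]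
    have e1 : 2 * (n : ℝ) * (1 - 1 / r.toReal) = 2 * (n : ℝ) - 2 * (n : ℝ) / r.toReal := by ring
    rw [e1]
    gcongr
    calc ((2 : ℝ≥0∞) ^ n) ^ (1 - 1 / r.toReal) ≤ ((2 : ℝ≥0∞) ^ n) ^ (1 : ℝ) := by
          refine ENNReal.rpow_le_rpow_of_exponent_le (one_le_pow₀ (by norm_num)) ?_
          have : 0 ≤ 1 / r.toReal := by positivity
          linarith
      _ = _ := ENNReal.rpow_one _
  calc _ ≤ (((2 : ℝ≥0∞) ^ (j + 1)) ^ n) ^ 2 * (eLpNorm g r ν *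
        ν Set.univ ^ (1 / (1 : ℝ≥0∞).toReal - 1 / r.toReal)) := by
        gcongr
        exact eLpNorm_le_eLpNorm_mul_rpow_measure_univ hr1 hg.aestronglyMeasurable
    _ ≤ 2 ^ (2 * n) * S ^ (-(2 * (n : ℝ))) * (eLpNorm g r ν *
        (2 ^ n * S ^ (2 * (n : ℝ) - 2 * (n : ℝ) / r.toReal))) := by
        rw [h3]; gcongr
    _ = (2 ^ (2 * n) * 2 ^ n) * ((S ^ (-(2 * (n : ℝ))) *
        S ^ (2 * (n : ℝ) - 2 * (n : ℝ) / r.toReal)) * eLpNorm g r ν) := by ring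
    _ = _ := by
        rw [← pow_add, ← ENNReal.rpow_add _ _ hS0 hSt]
        congr 2
        · congr 1; ring
        · congr 2; ring

lemma L1_Lr' {n : ℕ} {r : ℝ≥0∞} (hr1 : 1 ≤ r) (hr : r < ∞) (x : Rn n)
    {g : Rn n → ℝ} (hg : Measurable g) :
    ∫⁻ t in openCube x 1, ‖g t‖ₑ ≤ 2 ^ n * eLpNorm g r (volume.restrict (openCube x 1)) := by
  have hrr : 1 ≤ r.toReal := by
    rw [← ENNReal.toReal_one]; exact ENNReal.toReal_mono hr.ne hr1
  rw [← eLpNorm_one_eq_lintegral_enorm]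
  refine (eLpNorm_le_eLpNorm_mul_rpow_measure_univ hr1 hg.aestronglyMeasurable).trans ?_
  rw [mul_comm]
  gcongr
  rw [Measure.restrict_apply_univ, openCube_volume _ one_pos, ENNReal.toReal_one, div_one, mul_one,
    ofReal_two_pow]
  calc ((2 : ℝ≥0∞) ^ n) ^ (1 - 1 / r.toReal) ≤ ((2 : ℝ≥0∞) ^ n) ^ (1 : ℝ) := by
        refine ENNReal.rpow_le_rpow_of_exponent_le (one_le_pow₀ (by norm_num)) ?_
        have : 0 ≤ 1 / r.toReal := by positivity
        linarith
    _ = _ := ENNReal.rpow_one _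

lemma uS_bound {n l : ℕ} {r : ℝ≥0∞} (hr1 : 1 ≤ r) (hr : r < ∞) (L : List (Fin n)) :
    ∃ C : ℝ≥0∞, C < ∞ ∧ ∀ (φ : Rn n → ℝ), Measurable φ → LocallyIntegrable φ volume →
      ∀ (j : ℕ) (x x' : Rn n), ‖x - x'‖ ≤ 1 / 2 ^ (j + 1) →
      ‖iterPD L (uS n l φ j) x‖ₑ ≤ C * ((2 : ℝ≥0∞) ^ j) ^ L.length * Dl n l r φ j x' := by
  obtain ⟨C₀, hC₀, h0⟩ := iterPD_conv_sc (mker_ker n l) (show (0 : ℝ) < 1 / 4 by norm_num)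
    (by norm_num) L
  obtain ⟨C₁, hC₁, h1⟩ := iterPD_conv_sc (kap_ker n l) (show (0 : ℝ) < 1 / 2 by norm_num)
    (by norm_num) L
  obtain ⟨C₂, hC₂, h2⟩ := remainder_bound n l
  set K : ℝ≥0∞ := ∫⁻ u, ‖mker n l u‖ₑ with hK
  have hKt : K < ∞ := by
    have := (mker_ker n l).1.continuous.integrable_of_hasCompactSupport (μ := volume)
      (mker_ker n l).2.1
    exact this.2
  refine ⟨C₀ * K * 2 ^ n + C₁ * (2 * C₂) * 2 ^ (3 * n), ?_, fun φ hφm hφ j x x' hx => ?_⟩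
  · have := hC₀.ne; have := hC₁.ne; have := hC₂.ne; have := hKt.ne
    finiteness
  have hk := fun j => sc_ker (mker_ker n l) j
  cases j with
  | zero =>
    have hx1 : ‖x - x'‖ ≤ 1 / 2 := by simpa using hx
    have e : uS n l φ 0 = conv (sc 0 (mker n l)) (conv (sc 0 (mker n l)) φ) := rfl
    rw [e]
    refine (h0 _ (conv_locInt (hk 0) hφ) 0 x).trans ?_
    simp only [pow_zero, one_pow, mul_one, div_one, Dl]
    have hk0 : Ker (1 / 4) (sc 0 (mker n l)) := (hk 0).mono (by norm_num)
    calc C₀ * ∫⁻ t in openCube x (1 / 4), ‖conv (sc 0 (mker n l)) φ t‖ₑ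
        ≤ C₀ * (K * ∫⁻ t in openCube x (1 / 4 + 1 / 4), ‖φ t‖ₑ) := by
          gcongr
          refine (conv_L1 (by norm_num) hk0 hφm (by norm_num)).trans ?_
          rw [sc_L1]
      _ ≤ C₀ * (K * ∫⁻ t in openCube x' 1, ‖φ t‖ₑ) := by
          gcongr
          exact openCube_mono (by norm_num) (by linarith)
      _ ≤ C₀ * (K * (2 ^ n * eLpNorm φ r (volume.restrict (openCube x' 1)))) := by
          gcongr
          exact L1_Lr' hr1 hr x' hφm
      _ = C₀ * K * 2 ^ n * eLpNorm φ r (volume.restrict (openCube x' 1)) := by ring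
      _ ≤ _ := by gcongr; exact le_self_add
  | succ j =>
    have e : uS n l φ (j + 1) = conv (sc (j + 1) (kap n l))
        (fun x => conv (sc (j + 1) (mker n l)) φ x - conv (sc j (mker n l)) φ x) := by
      rw [sc_kap]; rfl
    rw [e]
    refine (h1 _ (rho_cont hφ j).locallyIntegrable (j + 1) x).trans ?_
    have hs1 : (2 : ℝ) ^ (1 - ((j : ℤ) + 1)) = 1 / 2 ^ j := by
      rw [show (1 - ((j : ℤ) + 1)) = -(j : ℤ) by ring, zpow_neg, zpow_natCast, one_div]
    have hs2 : (2 : ℝ) ^ (-((j : ℤ) + 1)) = 1 / 2 ^ (j + 1) := by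
      rw [show (-((j : ℤ) + 1)) = -((j + 1 : ℕ) : ℤ) by push_cast; ring, zpow_neg, zpow_natCast,
        one_div]
    simp only [Dl, hs1, hs2, deltaE]
    have hr2 : ∀ t, ‖conv (sc (j + 1) (mker n l)) φ t - conv (sc j (mker n l)) φ t‖ₑ ≤
        2 * C₂ * ((2 : ℝ≥0∞) ^ (j + 1)) ^ n *
          ∫⁻ h in openCube (0 : Rn n) (1 / 2 ^ j), ‖diffl l h φ t‖ₑ := by
      intro t
      have e1 : conv (sc (j + 1) (mker n l)) φ t - conv (sc j (mker n l)) φ t =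
        (conv (sc (j + 1) (mker n l)) φ t - φ t) - (conv (sc j (mker n l)) φ t - φ t) := by ring
      rw [e1]
      refine enorm_sub_le.trans ?_
      have a1 := h2 φ hφ (j + 1) t
      have a2 := h2 φ hφ j t
      have b1 : ∫⁻ h in openCube (0 : Rn n) (1 / 2 ^ (j + 1)), ‖diffl l h φ t‖ₑ ≤
          ∫⁻ h in openCube (0 : Rn n) (1 / 2 ^ j), ‖diffl l h φ t‖ₑ := by
        refine lintegral_mono_set (openCube_mono (by positivity) ?_)
        rw [sub_self, norm_zero, zero_add]
        gcongr <;> norm_num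
      calc _ ≤ C₂ * ((2 : ℝ≥0∞) ^ (j + 1)) ^ n *
            (∫⁻ h in openCube (0 : Rn n) (1 / 2 ^ j), ‖diffl l h φ t‖ₑ) +
            C₂ * ((2 : ℝ≥0∞) ^ (j + 1)) ^ n *
            (∫⁻ h in openCube (0 : Rn n) (1 / 2 ^ j), ‖diffl l h φ t‖ₑ) := by
            refine add_le_add (a1.trans ?_) (a2.trans ?_)
            · gcongr
            · gcongr <;> norm_num
        _ = _ := by ring
    have hsub : openCube x (1 / 2 / 2 ^ (j + 1)) ⊆ openCube x' (1 / 2 ^ (j + 1)) := by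
      refine openCube_mono (by positivity) ?_
      have : (1 : ℝ) / 2 ^ (j + 1 + 1) = 1 / 2 / 2 ^ (j + 1) := by rw [pow_succ]; field_simp
      rw [this] at hx
      calc _ ≤ (1 : ℝ) / 2 / 2 ^ (j + 1) + 1 / 2 / 2 ^ (j + 1) := by gcongr
        _ = _ := by ring
    have hdm := diffl_measurable (l := l) hφm
    set A : ℝ≥0∞ := (2 : ℝ≥0∞) ^ (j + 1) with hA
    have hfin : 2 * C₂ * A ^ n ≠ ∞ := by
      have := hC₂.ne; finiteness
    set X : ℝ≥0∞ := ENNReal.ofReal (1 / 2 ^ j) ^ (-(2 * (n : ℝ)) / r.toReal) * eLpNorm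
            (fun hx : Rn n × Rn n => diffl l hx.1 φ hx.2) r
      ((volume.restrict (openCube (0 : Rn n) (1 / 2 ^ j))).prod
        (volume.restrict (openCube x' (1 / 2 ^ (j + 1))))) with hX
    calc C₁ * A ^ (L.length + n) * ∫⁻ t in openCube x (1 / 2 / 2 ^ (j + 1)),
          ‖conv (sc (j + 1) (mker n l)) φ t - conv (sc j (mker n l)) φ t‖ₑ
        ≤ C₁ * A ^ (L.length + n) * ∫⁻ t in openCube x' (1 / 2 ^ (j + 1)),
          2 * C₂ * A ^ n * ∫⁻ h in openCube (0 : Rn n) (1 / 2 ^ j), ‖diffl l h φ t‖ₑ := by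
          gcongr C₁ * A ^ (L.length + n) * ?_
          refine (lintegral_mono_set hsub).trans ?_
          exact lintegral_mono hr2
      _ = C₁ * (2 * C₂) * A ^ L.length * ((A ^ n) ^ 2 * eLpNorm
            (fun hx : Rn n × Rn n => diffl l hx.1 φ hx.2) 1
            ((volume.restrict (openCube (0 : Rn n) (1 / 2 ^ j))).prod
              (volume.restrict (openCube x' (1 / 2 ^ (j + 1)))))) := by
          rw [lintegral_const_mul' _ _ hfin, eLpNorm_one_eq_lintegral_enorm,
            lintegral_prod_symm _ hdm.enorm.aemeasurable, pow_add]
          ring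
      _ ≤ C₁ * (2 * C₂) * A ^ L.length * (2 ^ (3 * n) * X) := by
          gcongr C₁ * (2 * C₂) * A ^ L.length * ?_
          exact L1_Lr hr1 hr j x' hdm
      _ = (C₁ * (2 * C₂) * 2 ^ (3 * n)) * A ^ L.length * X := by ring
      _ ≤ _ := by
          gcongr ?_ * A ^ L.length * X
          exact le_add_self

/-! ## Part I: convergence of the averages -/

lemma diffl_coef_sum {l : ℕ} (hl : 0 < l) :
    ∑ j ∈ Finset.range (l + 1), ((l.choose j : ℝ) * (-1 : ℝ) ^ (l + j)) = 0 := by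
  have h := Int.alternating_sum_range_choose_of_ne hl.ne'
  have h2 : ∑ j ∈ Finset.range (l + 1), ((-1 : ℝ) ^ j * (l.choose j : ℝ)) = 0 := by
    exact_mod_cast congrArg (Int.cast : ℤ → ℝ) h
  calc _ = (-1 : ℝ) ^ l * ∑ j ∈ Finset.range (l + 1), ((-1 : ℝ) ^ j * (l.choose j : ℝ)) := by
        rw [Finset.mul_sum]
        refine Finset.sum_congr rfl fun j _ => ?_
        rw [pow_add]; ring
    _ = 0 := by rw [h2, mul_zero]

lemma diffl_small {n l : ℕ} (hl : 0 < l) {g : Rn n → ℝ} (hg : UniformContinuous g) {η : ℝ}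
    (hη : 0 < η) : ∃ δ > 0, ∀ (h x : Rn n), ‖h‖ < δ → |diffl l h g x| ≤ 2 ^ l * η := by
  obtain ⟨δ, hδ, H⟩ := Metric.uniformContinuous_iff.1 hg η hη
  refine ⟨δ / (l + 1), by positivity, fun h x hh => ?_⟩
  have e : diffl l h g x = ∑ j ∈ Finset.range (l + 1),
      ((l.choose j : ℝ) * (-1 : ℝ) ^ (l + j)) * (g (x + (j : ℝ) • h) - g x) := by
    simp only [mul_sub, Finset.sum_sub_distrib]
    rw [← Finset.sum_mul, diffl_coef_sum hl, zero_mul, sub_zero]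
    rfl
  rw [e]
  refine (Finset.abs_sum_le_sum_abs _ _).trans ?_
  have e2 : (2 : ℝ) ^ l * η = ∑ j ∈ Finset.range (l + 1), (l.choose j : ℝ) * η := by
    rw [← Finset.sum_mul]
    congr 1
    exact_mod_cast (Nat.sum_range_choose l).symm
  rw [e2]
  refine Finset.sum_le_sum fun j hj => ?_
  rw [abs_mul, abs_mul, abs_pow, abs_neg, abs_one, one_pow, mul_one, Nat.abs_cast]
  gcongr
  have := H (a := x + (j : ℝ) • h) (b := x) ?_
  · exact this.le
  · rw [dist_eq_norm, add_sub_cancel_left, norm_smul, Real.norm_natCast]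
    have hj' : (j : ℝ) ≤ l := by
      exact_mod_cast Nat.lt_succ_iff.1 (Finset.mem_range.1 hj)
    rw [lt_div_iff₀ (by positivity)] at hh
    nlinarith [norm_nonneg h]

lemma avg_unif {n l : ℕ} (hl : 0 < l) {g : Rn n → ℝ} (hg : UniformContinuous g) {η : ℝ≥0∞}
    (hη : 0 < η) : ∀ᶠ j in atTop, ∀ x, ‖conv (sc j (mker n l)) g x - g x‖ₑ ≤ η := by
  obtain ⟨C, hC, hb⟩ := remainder_bound n l
  have hD : C * 2 ^ n * 2 ^ l < ∞ := by have := hC.ne; finiteness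
  obtain ⟨η', hη', hle⟩ : ∃ η' : ℝ, 0 < η' ∧ C * 2 ^ n * 2 ^ l * ENNReal.ofReal η' ≤ η := by
    have ht : Tendsto (fun t : ℝ => C * 2 ^ n * 2 ^ l * ENNReal.ofReal t) (nhdsWithin 0 (Set.Ioi 0))
        (nhds (C * 2 ^ n * 2 ^ l * ENNReal.ofReal 0)) := by
      refine Tendsto.mono_left ?_ nhdsWithin_le_nhds
      exact ENNReal.Tendsto.const_mul (ENNReal.continuous_ofReal.tendsto 0) (Or.inr hD.ne)
    rw [ENNReal.ofReal_zero, mul_zero] at ht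
    obtain ⟨t, h1, h2⟩ := ((ENNReal.tendsto_nhds_zero.1 ht η hη).and self_mem_nhdsWithin).exists
    exact ⟨t, h2, h1⟩
  obtain ⟨δ, hδ, H⟩ := diffl_small hl hg hη'
  have hp : ∀ᶠ j : ℕ in atTop, (1 : ℝ) / 2 ^ j < δ := by
    have : Tendsto (fun j : ℕ => (1 / 2 : ℝ) ^ j) atTop (nhds 0) :=
      tendsto_pow_atTop_nhds_zero_of_lt_one (by norm_num) (by norm_num)
    filter_upwards [this.eventually (gt_mem_nhds hδ)] with j hj
    rwa [one_div, ← inv_pow, ← one_div]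
  filter_upwards [hp] with j hj x
  refine (hb g hg.continuous.locallyIntegrable j x).trans (le_trans ?_ hle)
  have h1 : ∫⁻ h in openCube (0 : Rn n) (1 / 2 ^ j), ‖diffl l h g x‖ₑ ≤
      2 ^ l * ENNReal.ofReal η' * volume (openCube (0 : Rn n) (1 / 2 ^ j)) := by
    refine (setLIntegral_mono measurable_const fun h hh => ?_).trans_eq (setLIntegral_const _ _)
    rw [mem_openCube (by positivity), sub_zero] at hh
    rw [← ofReal_norm, Real.norm_eq_abs, ← ofReal_two_pow, ← ENNReal.ofReal_mul (by positivity)]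
    exact ENNReal.ofReal_le_ofReal (H h x (hh.trans hj))
  refine (mul_le_mul' le_rfl h1).trans_eq ?_
  rw [openCube_volume _ (by positivity), mul_pow, ENNReal.ofReal_mul (by positivity),
    ofReal_two_pow]
  have h2 : ((2 : ℝ≥0∞) ^ j) ^ n * ENNReal.ofReal ((1 / 2 ^ j) ^ n) = 1 := by
    rw [← ofReal_two_pow, ← ENNReal.ofReal_pow (by positivity), ← ENNReal.ofReal_mul (by positivity),
      ← mul_pow, mul_one_div_cancel (by positivity), one_pow, ENNReal.ofReal_one]
  calc _ = C * 2 ^ n * 2 ^ l * ENNReal.ofReal η' *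
        (((2 : ℝ≥0∞) ^ j) ^ n * ENNReal.ofReal ((1 / 2 ^ j) ^ n)) := by ring
    _ = _ := by rw [h2, mul_one]

lemma sc_ker1 (n l j : ℕ) : Ker 1 (sc j (mker n l)) := by
  refine (sc_ker (mker_ker n l) j).mono ?_
  rw [div_le_iff₀ (by positivity)]
  have : (1 : ℝ) ≤ 2 ^ j := one_le_pow₀ (by norm_num)
  linarith

lemma mker_L1 (n l : ℕ) : ∫⁻ u, ‖mker n l u‖ₑ < ∞ :=
  ((mker_ker n l).1.continuous.integrable_of_hasCompactSupport (μ := volume) (mker_ker n l).2.1).2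

lemma cube_integrable {n : ℕ} {φ : Rn n → ℝ} (hφ : LocallyIntegrable φ volume) {R : ℝ}
    (hR : 0 < R) : IntegrableOn φ (openCube 0 R) volume := by
  rw [openCube_eq_ball _ hR]
  exact (hφ.integrableOn_isCompact (isCompact_closedBall 0 R)).mono_set Metric.ball_subset_closedBall

lemma avg_L1 {n l : ℕ} (hl : 0 < l) {φ : Rn n → ℝ} (hφm : Measurable φ)
    (hφ : LocallyIntegrable φ volume) {R : ℝ} (hR : 0 < R) :
    Tendsto (fun j => ∫⁻ x in openCube (0 : Rn n) R, ‖conv (sc j (mker n l)) φ x - φ x‖ₑ)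
      atTop (nhds 0) := by
  rw [ENNReal.tendsto_nhds_zero]
  intro ε hε
  set K : ℝ≥0∞ := ∫⁻ u, ‖mker n l u‖ₑ with hK
  have hKt : K < ∞ := mker_L1 n l
  set V : ℝ≥0∞ := volume (openCube (0 : Rn n) R) with hV
  have hVt : V < ∞ := by rw [hV, openCube_volume _ hR]; exact ofReal_lt_top
  have hDt : K + 1 + V ≠ ∞ := by have := hKt.ne; have := hVt.ne; finiteness
  set η : ℝ≥0∞ := min 1 (ε / (K + 1 + V)) with hη
  have hη0 : 0 < η := lt_min one_pos (ENNReal.div_pos hε.ne' hDt)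
  have hηe : (K + 1 + V) * η ≤ ε :=
    (mul_le_mul' le_rfl (min_le_right _ _)).trans ENNReal.mul_div_le
  set B := openCube (0 : Rn n) (R + 1) with hB
  have hBm : MeasurableSet B := openCube_measurable _ (by linarith)
  obtain ⟨g, hgs, hgi, hgc, -⟩ := ((integrable_indicator_iff hBm).2
    (cube_integrable hφ (by linarith : 0 < R + 1))).exists_hasCompactSupport_lintegral_sub_le hη0.ne'
  have hgu : UniformContinuous g := hgs.uniformContinuous_of_continuous hgc
  have hgl : LocallyIntegrable g volume := hgc.locallyIntegrable
  have hBi : ∫⁻ x in B, ‖φ x - g x‖ₑ ≤ η := by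
    refine le_trans ?_ ((setLIntegral_le_lintegral B _).trans hgi)
    refine (setLIntegral_congr_fun hBm fun x hx => ?_).le
    simp only [Set.indicator_of_mem hx]
  have hsub : openCube (0 : Rn n) R ⊆ B := openCube_mono hR (by simp)
  filter_upwards [avg_unif (n := n) hl hgu hη0] with j hj
  have hk := sc_ker1 n l j
  have hs : (conv (sc j (mker n l)) fun x => φ x - g x) = _ := conv_sub hk hφ hgl
  have hm1 : Measurable (fun x => ‖φ x - g x‖ₑ) := (hφm.sub hgc.measurable).enorm
  calc ∫⁻ x in openCube (0 : Rn n) R, ‖conv (sc j (mker n l)) φ x - φ x‖ₑ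
      ≤ ∫⁻ x in openCube (0 : Rn n) R,
        (‖conv (sc j (mker n l)) (fun x => φ x - g x) x‖ₑ + (‖φ x - g x‖ₑ + η)) := by
        refine lintegral_mono fun x => ?_
        have e : conv (sc j (mker n l)) φ x - φ x =
          conv (sc j (mker n l)) (fun x => φ x - g x) x +
            ((-(φ x - g x)) + (conv (sc j (mker n l)) g x - g x)) := by
          rw [hs]; ring
        simp only
        rw [e]
        refine (enorm_add_le _ _).trans (add_le_add le_rfl ((enorm_add_le _ _).trans ?_))
        rw [enorm_neg]
        exact add_le_add le_rfl (hj x)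
    _ = (∫⁻ x in openCube (0 : Rn n) R, ‖conv (sc j (mker n l)) (fun x => φ x - g x) x‖ₑ) +
        ((∫⁻ x in openCube (0 : Rn n) R, ‖φ x - g x‖ₑ) + η * V) := by
        have hm2 : Measurable (fun x => ‖φ x - g x‖ₑ + η) := hm1.add measurable_const
        rw [lintegral_add_right _ hm2, lintegral_add_left hm1, setLIntegral_const]
    _ ≤ K * η + (η + η * V) := by
        refine add_le_add ?_ (add_le_add ?_ le_rfl)
        · refine (conv_L1 one_pos hk (hφm.sub hgc.measurable) hR).trans ?_
          rw [sc_L1]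
          exact mul_le_mul' le_rfl hBi
        · exact (lintegral_mono_set hsub).trans hBi
    _ = (K + 1 + V) * η := by ring
    _ ≤ ε := hηe

lemma phS_cont {n l : ℕ} {φ : Rn n → ℝ} (hφ : LocallyIntegrable φ volume) (j : ℕ) :
    Continuous (phS n l φ j) :=
  conv_cont (sc_ker (mker_ker n l) j) (conv_locInt (sc_ker (mker_ker n l) j) hφ)

lemma phS_L1 {n l : ℕ} (hl : 0 < l) {φ : Rn n → ℝ} (hφm : Measurable φ)
    (hφ : LocallyIntegrable φ volume) {R : ℝ} (hR : 0 < R) :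
    Tendsto (fun j => ∫⁻ x in openCube (0 : Rn n) R, ‖phS n l φ j x - φ x‖ₑ)
      atTop (nhds 0) := by
  set K : ℝ≥0∞ := ∫⁻ u, ‖mker n l u‖ₑ with hK
  have hKt : K < ∞ := mker_L1 n l
  have h1 := avg_L1 hl hφm hφ (by linarith : 0 < R + 1)
  have h2 := (ENNReal.Tendsto.const_mul h1 (Or.inr hKt.ne)).add (avg_L1 hl hφm hφ hR)
  rw [mul_zero, add_zero] at h2
  refine tendsto_of_tendsto_of_tendsto_of_le_of_le tendsto_const_nhds h2 (fun _ => zero_le)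
    fun j => ?_
  have hk := sc_ker1 n l j
  have hc := conv_cont hk hφ
  have hs : (conv (sc j (mker n l)) fun x => conv (sc j (mker n l)) φ x - φ x) = _ :=
    conv_sub hk (conv_locInt hk hφ) hφ
  have hm : Measurable (fun x => conv (sc j (mker n l)) φ x - φ x) := hc.measurable.sub hφm
  calc ∫⁻ x in openCube (0 : Rn n) R, ‖phS n l φ j x - φ x‖ₑ
      ≤ ∫⁻ x in openCube (0 : Rn n) R,
        (‖conv (sc j (mker n l)) (fun x => conv (sc j (mker n l)) φ x - φ x) x‖ₑ +
          ‖conv (sc j (mker n l)) φ x - φ x‖ₑ) := by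
        refine lintegral_mono fun x => ?_
        have e : phS n l φ j x - φ x =
          conv (sc j (mker n l)) (fun x => conv (sc j (mker n l)) φ x - φ x) x +
            (conv (sc j (mker n l)) φ x - φ x) := by
          rw [hs]; unfold phS; ring
        simp only
        rw [e]
        exact enorm_add_le _ _
    _ = _ := lintegral_add_right _ hm.enorm
    _ ≤ _ := by
        refine add_le_add ?_ le_rfl
        refine (conv_L1 one_pos hk hm hR).trans ?_
        rw [sc_L1]

/-! ## Part J: coefficients of the majorant and the Besov norm -/

def avS (n l : ℕ) (r : ℝ≥0∞) (p : ℝ) (φ : Rn n → ℝ) (j : ℕ) (m : Fin n → ℤ) : ℝ≥0∞ :=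
  (((2 : ℝ≥0∞) ^ (j + 1)) ^ n * ∫⁻ x in dyadicCubeHalf n (j + 1) m, Dl n l r φ j x ^ p) ^ (1 / p)

def bS (n l : ℕ) (r : ℝ≥0∞) (p : ℝ) (φ : Rn n → ℝ) (j : ℕ) (m : Fin n → ℤ) : ℝ≥0∞ :=
  ((2 : ℝ≥0∞) ^ j) ^ l * avS n l r p φ j m

lemma half_eq_pi (n k : ℕ) (m : Fin n → ℤ) : dyadicCubeHalf n k m =
    Set.pi Set.univ (fun i => Set.Ico ((m i : ℝ) / 2 ^ k) (((m i : ℝ) + 1) / 2 ^ k)) := by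
  ext x; simp [dyadicCubeHalf]

lemma half_measurable (n k : ℕ) (m : Fin n → ℤ) : MeasurableSet (dyadicCubeHalf n k m) := by
  rw [half_eq_pi]
  exact MeasurableSet.univ_pi fun _ => measurableSet_Ico

lemma half_volume (n k : ℕ) (m : Fin n → ℤ) :
    ((2 : ℝ≥0∞) ^ k) ^ n * volume (dyadicCubeHalf n k m) = 1 := by
  rw [half_eq_pi, volume_pi_pi]
  have : ∀ i : Fin n, volume (Set.Ico ((m i : ℝ) / 2 ^ k) (((m i : ℝ) + 1) / 2 ^ k)) =
      ENNReal.ofReal (1 / 2 ^ k) := by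
    intro i
    rw [Real.volume_Ico]
    congr 1
    ring
  rw [Finset.prod_congr rfl fun i _ => this i, Finset.prod_const, Finset.card_univ,
    Fintype.card_fin, ← mul_pow, ← ofReal_two_pow, ← ENNReal.ofReal_mul (by positivity),
    mul_one_div_cancel (by positivity), ENNReal.ofReal_one, one_pow]

lemma half_dist {n k : ℕ} {m : Fin n → ℤ} {x x' : Rn n} (hx : x ∈ dyadicCubeHalf n k m)
    (hx' : x' ∈ dyadicCubeHalf n k m) : ‖x - x'‖ ≤ 1 / 2 ^ k := by
  rw [pi_norm_le_iff_of_nonneg (by positivity)]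
  intro i
  have h1 := hx i
  have h2 := hx' i
  rw [add_div] at h1 h2
  rw [Pi.sub_apply, Real.norm_eq_abs, abs_le]
  constructor <;> linarith [h1.1, h1.2, h2.1, h2.2]

lemma le_avS {n l : ℕ} {r : ℝ≥0∞} {p : ℝ} (hp : 1 ≤ p) {φ : Rn n → ℝ} {j : ℕ} {m : Fin n → ℤ}
    {a c : ℝ≥0∞} (hc : c ≠ ∞) (h : ∀ x' ∈ dyadicCubeHalf n (j + 1) m, a ≤ c * Dl n l r φ j x') :
    a ≤ c * avS n l r p φ j m := by
  have hp0 : 0 < p := by linarith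
  unfold avS
  rw [← ENNReal.rpow_le_rpow_iff hp0, ENNReal.mul_rpow_of_nonneg _ _ hp0.le, ← ENNReal.rpow_mul,
    one_div_mul_cancel hp0.ne', ENNReal.rpow_one]
  have hcp : c ^ p ≠ ∞ := ENNReal.rpow_ne_top_of_nonneg hp0.le hc
  calc a ^ p = (((2 : ℝ≥0∞) ^ (j + 1)) ^ n * volume (dyadicCubeHalf n (j + 1) m)) * a ^ p := by
        rw [half_volume, one_mul]
    _ = ((2 : ℝ≥0∞) ^ (j + 1)) ^ n * ∫⁻ x in dyadicCubeHalf n (j + 1) m, a ^ p := by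
        rw [setLIntegral_const]; ring
    _ ≤ ((2 : ℝ≥0∞) ^ (j + 1)) ^ n * ∫⁻ x in dyadicCubeHalf n (j + 1) m,
          c ^ p * Dl n l r φ j x ^ p := by
        refine mul_le_mul' le_rfl (setLIntegral_mono' (half_measurable _ _ _) fun x hx => ?_)
        rw [← ENNReal.mul_rpow_of_nonneg _ _ hp0.le]
        exact ENNReal.rpow_le_rpow (h x hx) hp0.le
    _ = _ := by rw [lintegral_const_mul' _ _ hcp]; ring

lemma uS_av {n l : ℕ} {r : ℝ≥0∞} (hr1 : 1 ≤ r) (hr : r < ∞) {p : ℝ} (hp : 1 ≤ p)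
    (L : List (Fin n)) :
    ∃ C : ℝ≥0∞, C < ∞ ∧ ∀ (φ : Rn n → ℝ), Measurable φ → LocallyIntegrable φ volume →
      ∀ (j : ℕ) (x : Rn n),
      ‖iterPD L (uS n l φ j) x‖ₑ ≤
        C * ((2 : ℝ≥0∞) ^ j) ^ L.length * avS n l r p φ j (fl (j + 1) x) := by
  obtain ⟨C, hC, h⟩ := uS_bound (n := n) (l := l) hr1 hr L
  refine ⟨C, hC, fun φ hφm hφ j x => le_avS hp ?_ fun x' hx' => ?_⟩
  · have := hC.ne; finiteness
  · refine h φ hφm hφ j x x' (half_dist (m := fl (j + 1) x) ?_ hx')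
    rw [mem_half_iff]

lemma gammaHat_pow {n d : ℕ} {p : ℝ≥0∞} (hp0 : p ≠ 0) (hp : p ≠ ∞) {γ : Rn (n + d) → ℝ}
    (hγ : IsWeight γ) (k : ℕ) (m : Fin n → ℤ) (hX : MeasurableSet (Xi n d k m)) :
    gammaHat n d p γ k m ^ p.toReal = wMeas (fun x => γ x ^ p.toReal) (Xi n d k m) := by
  have hp' : 0 < p.toReal := ENNReal.toReal_pos hp0 hp
  unfold gammaHat wMeas
  rw [eLpNorm_eq_lintegral_rpow_enorm_toReal hp0 hp, ← ENNReal.rpow_mul,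
    one_div_mul_cancel hp'.ne', ENNReal.rpow_one, withDensity_apply _ hX]
  refine lintegral_congr fun x => ?_
  rw [← ofReal_norm, Real.norm_of_nonneg (hγ.2 x).le,
    ENNReal.ofReal_rpow_of_nonneg (hγ.2 x).le hp'.le]

lemma Xi_measurable (n d k : ℕ) (m : Fin n → ℤ) : MeasurableSet (Xi n d k m) := by
  have h1 : MeasurableSet {z : Rn (n + d) | (fun i => z (Fin.castAdd d i)) ∈ dyadicCube n k m} := by
    have : dyadicCube n k m = Set.pi Set.univ
        (fun i => Set.Ioo ((m i : ℝ) / 2 ^ k) (((m i : ℝ) + 1) / 2 ^ k)) := by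
      ext x; simp [dyadicCube]
    rw [this]
    have hm : Measurable (fun (z : Rn (n + d)) (i : Fin n) => z (Fin.castAdd d i)) := by fun_prop
    exact hm (MeasurableSet.univ_pi fun _ => measurableSet_Ioo)
  have hc : Measurable (fun z : Rn (n + d) => euclNorm (fun i : Fin d => z (Fin.natAdd n i))) := by
    refine euclNorm_continuous.measurable.comp ?_
    fun_prop
  exact h1.inter ((measurableSet_lt hc measurable_const).inter
    (measurableSet_le measurable_const hc))

lemma bS_term {n d l : ℕ} {p r : ℝ≥0∞} (hp1 : 1 < p) (hp : p < ∞) {γ : Rn (n + d) → ℝ}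
    (hγ : IsWeight γ) (φ : Rn n → ℝ) (j : ℕ) (m : Fin n → ℤ) :
    bS n l r p.toReal φ j m ^ p.toReal * wMeas (fun x => γ x ^ p.toReal) (Xi n d j (par m)) ≤
      2 ^ n * ∫⁻ x in dyadicCubeHalf n (j + 1) m,
        (gammaSeq n d p l γ j x * Dl n l r φ j x) ^ p.toReal := by
  have hp0 : p ≠ 0 := (zero_lt_one.trans hp1).ne'
  have hp' : 0 < p.toReal := ENNReal.toReal_pos hp0 hp.ne
  set P := p.toReal with hP
  set G := wMeas (fun x => γ x ^ P) (Xi n d j (par m)) with hG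
  have hgs : ∀ x ∈ dyadicCubeHalf n (j + 1) m, gammaSeq n d p l γ j x ^ P =
      (((2 : ℝ≥0∞) ^ j) ^ l) ^ P * ((2 : ℝ≥0∞) ^ j) ^ n * G := by
    intro x hx
    rw [mem_half_iff] at hx
    unfold gammaSeq
    rw [tsum_half_indicator, fl_par, hx, ENNReal.mul_rpow_of_nonneg _ _ hp'.le,
      gammaHat_pow hp0 hp.ne hγ _ _ (Xi_measurable _ _ _ _)]
    congr 1
    rw [← ENNReal.rpow_mul, ← ENNReal.rpow_natCast, ← ENNReal.rpow_natCast, ← ENNReal.rpow_natCast,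
      ← ENNReal.rpow_mul, ← ENNReal.rpow_mul, ← ENNReal.rpow_mul,
      ← ENNReal.rpow_add _ _ (by norm_num) (by norm_num)]
    congr 1
    rw [← hP]
    field_simp
  have e1 : bS n l r P φ j m ^ P = (((2 : ℝ≥0∞) ^ j) ^ l) ^ P * (((2 : ℝ≥0∞) ^ (j + 1)) ^ n *
      ∫⁻ x in dyadicCubeHalf n (j + 1) m, Dl n l r φ j x ^ P) := by
    unfold bS avS
    rw [ENNReal.mul_rpow_of_nonneg _ _ hp'.le, ← ENNReal.rpow_mul _ (1 / P),
      one_div_mul_cancel hp'.ne', ENNReal.rpow_one]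
  calc bS n l r P φ j m ^ P * G = 2 ^ n * (((((2 : ℝ≥0∞) ^ j) ^ l) ^ P * ((2 : ℝ≥0∞) ^ j) ^ n * G) *
        ∫⁻ x in dyadicCubeHalf n (j + 1) m, Dl n l r φ j x ^ P) := by
        rw [e1, pow_succ, mul_pow]; ring
    _ ≤ 2 ^ n * ∫⁻ x in dyadicCubeHalf n (j + 1) m,
          ((((2 : ℝ≥0∞) ^ j) ^ l) ^ P * ((2 : ℝ≥0∞) ^ j) ^ n * G) * Dl n l r φ j x ^ P :=
        mul_le_mul' le_rfl (lintegral_const_mul_le _ _)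
    _ = _ := by
        congr 1
        refine setLIntegral_congr_fun (half_measurable _ _ _) fun x hx => ?_
        rw [ENNReal.mul_rpow_of_nonneg _ _ hp'.le, hgs x hx]

lemma bS_sum {n d l : ℕ} {p r : ℝ≥0∞} (hp1 : 1 < p) (hp : p < ∞) {γ : Rn (n + d) → ℝ}
    (hγ : IsWeight γ) (φ : Rn n → ℝ) :
    (∑' j, ∑' m, bS n l r p.toReal φ j m ^ p.toReal *
      wMeas (fun x => γ x ^ p.toReal) (Xi n d j (par m))) ^ (1 / p.toReal) ≤
      (2 ^ n * 2) ^ (1 / p.toReal) * tildeBnormE n l p p r (gammaSeq n d p l γ) φ := by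
  have hp0 : p ≠ 0 := (zero_lt_one.trans hp1).ne'
  have hp' : 0 < p.toReal := ENNReal.toReal_pos hp0 hp.ne
  set P := p.toReal with hP
  set I : ℕ → ℝ≥0∞ := fun j => ∫⁻ x, (gammaSeq n d p l γ j x * Dl n l r φ j x) ^ P with hI
  have h1 : ∀ j, ∑' m, bS n l r P φ j m ^ P * wMeas (fun x => γ x ^ P) (Xi n d j (par m)) ≤
      2 ^ n * I j := by
    intro j
    refine (ENNReal.tsum_le_tsum fun m => bS_term hp1 hp hγ φ j m).trans ?_
    rw [ENNReal.tsum_mul_left, ← lintegral_iUnion (fun m => half_measurable _ _ m)]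
    · exact mul_le_mul' le_rfl (setLIntegral_le_lintegral _ _)
    · intro m m' hne
      refine Set.disjoint_left.2 fun x hx hx' => hne ?_
      rw [mem_half_iff] at hx hx'
      rw [← hx, ← hx']
  have hroot : ∀ X : ℝ≥0∞, (X ^ (1 / P)) ^ P = X := by
    intro X
    rw [← ENNReal.rpow_mul, one_div_mul_cancel hp'.ne', ENNReal.rpow_one]
  have h2 : ∑' j, I j ≤ 2 * tildeBnormE n l p p r (gammaSeq n d p l γ) φ ^ P := by
    rw [tsum_eq_zero_add' ENNReal.summable]
    unfold tildeBnormE lqNorm lpNormE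
    simp only [if_neg hp.ne]
    rw [← hP]
    simp only [hroot]
    rw [two_mul]
    refine add_le_add ?_ ?_
    · conv_lhs => rw [← hroot (I 0)]
      exact ENNReal.rpow_le_rpow le_add_self hp'.le
    · conv_lhs => rw [← hroot (∑' k, I (k + 1))]
      exact ENNReal.rpow_le_rpow le_self_add hp'.le
  have hr2 : ∀ X : ℝ≥0∞, (X ^ P) ^ (1 / P) = X := by
    intro X
    rw [← ENNReal.rpow_mul, mul_one_div_cancel hp'.ne', ENNReal.rpow_one]
  have hP' : 0 ≤ 1 / P := by positivity
  calc _ ≤ ((2 ^ n * 2) * tildeBnormE n l p p r (gammaSeq n d p l γ) φ ^ P) ^ (1 / P) := by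
        refine ENNReal.rpow_le_rpow ((ENNReal.tsum_le_tsum h1).trans ?_) hP'
        rw [ENNReal.tsum_mul_left, mul_assoc]
        exact mul_le_mul' le_rfl h2
    _ = _ := by rw [ENNReal.mul_rpow_of_nonneg _ _ hP', hr2]

/-! ## Part K: the extension and its trace -/

def chiB (d : ℕ) : ContDiffBump (0 : Rn d) := ⟨1 / 8, 3 / 16, by norm_num, by norm_num⟩

def chi (d : ℕ) : Rn d → ℝ := fun y => chiB d y

lemma chi_smooth (d : ℕ) : ContDiff ℝ (⊤ : ℕ∞) (chi d) := (chiB d).contDiff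

lemma chi_hcs (d : ℕ) : HasCompactSupport (chi d) := (chiB d).hasCompactSupport

lemma chi_one {d : ℕ} {y : Rn d} (hy : ‖y‖ ≤ 1 / 8) : chi d y = 1 :=
  (chiB d).one_of_mem_closedBall (by rw [mem_closedBall_zero_iff]; exact hy)

lemma iterPD_chi_zero {d : ℕ} (L : List (Fin d)) {y : Rn d} (hy : 1 / 4 ≤ ‖y‖) :
    iterPD L (chi d) y = 0 := by
  by_contra hne
  have h := tsupport_iterPD L (chi d) (subset_tsupport _ hne)
  have e : tsupport (chi d) = Metric.closedBall 0 (3 / 16) := (chiB d).tsupport_eq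
  rw [e, mem_closedBall_zero_iff] at h
  linarith

lemma chi_mem (d : ℕ) (y : Rn d) : 0 ≤ chi d y ∧ chi d y ≤ 1 := ⟨(chiB d).nonneg, (chiB d).le_one⟩

def FS (n d l : ℕ) (φ : Rn n → ℝ) (j : ℕ) (z : Rn (n + d)) : ℝ :=
  uS n l φ j (xP z) * (1 * chi d ((2 : ℝ) ^ j • yP z))

lemma chis_smooth (d j : ℕ) :
    ContDiff ℝ (⊤ : ℕ∞) (fun y : Rn d => 1 * chi d ((2 : ℝ) ^ j • y)) :=
  contDiff_const.mul ((chi_smooth d).comp (contDiff_const_smul _))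

lemma FS_smooth {n d l : ℕ} {φ : Rn n → ℝ} (hφ : LocallyIntegrable φ volume) (j : ℕ) :
    ContDiff ℝ (⊤ : ℕ∞) (FS n d l φ j) :=
  smooth_tensor (B := fun y : Rn d => 1 * chi d ((2 : ℝ) ^ j • y)) (uS_smooth hφ j) (chis_smooth d j)

lemma norm_scale {d j : ℕ} (y : Rn d) : ‖(2 : ℝ) ^ j • y‖ = 2 ^ j * ‖y‖ := by
  rw [norm_smul, norm_pow, Real.norm_ofNat]

lemma FS_bound {n d l : ℕ} {r : ℝ≥0∞} (hr1 : 1 ≤ r) (hr : r < ∞) {p : ℝ} (hp : 1 ≤ p)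
    (L : List (Fin (n + d))) :
    ∃ C : ℝ≥0∞, C < ∞ ∧ ∀ (φ : Rn n → ℝ), Measurable φ → LocallyIntegrable φ volume →
      L.length ≤ l → ∀ (j : ℕ) (z : Rn (n + d)),
      ‖iterPD L (FS n d l φ j) z‖ₑ ≤
        C * (slab n d j).indicator (fun z => bS n l r p φ j (fl (j + 1) (xP z))) z := by
  obtain ⟨L₁, L₂, hlen, ht⟩ := iterPD_tensor (n := n) (d := d) L
  obtain ⟨C₁, hC₁, h1⟩ := uS_av (n := n) (l := l) hr1 hr hp L₁
  obtain ⟨c, hc⟩ := (hcs_iterPD L₂ (chi_hcs d)).exists_bound_of_continuous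
    (smooth_iterPD L₂ (chi_smooth d)).continuous
  refine ⟨C₁ * ENNReal.ofReal c, ENNReal.mul_lt_top hC₁ ofReal_lt_top,
    fun φ hφm hφ hLl j z => ?_⟩
  have e : iterPD L (FS n d l φ j) z = iterPD L₁ (uS n l φ j) (xP z) *
      (1 * ((2 : ℝ) ^ j) ^ L₂.length * iterPD L₂ (chi d) ((2 : ℝ) ^ j • yP z)) := by
    have := congrFun (ht (uS n l φ j) (fun y => 1 * chi d ((2 : ℝ) ^ j • y)) (uS_smooth hφ j)
      (chis_smooth d j)) z
    rw [iterPD_scale L₂ (chi_smooth d) 1 (2 ^ j)] at this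
    exact this
  rw [e]
  by_cases hz : z ∈ slab n d j
  · rw [Set.indicator_of_mem hz, enorm_mul, enorm_mul, one_mul, enorm_pow, enorm_pow]
    have e2 : ‖(2 : ℝ)‖ₑ = 2 := by rw [← ofReal_norm, Real.norm_ofNat]; simp
    have e3 : ‖iterPD L₂ (chi d) ((2 : ℝ) ^ j • yP z)‖ₑ ≤ ENNReal.ofReal c := by
      rw [← ofReal_norm]; exact ENNReal.ofReal_le_ofReal (hc _)
    rw [e2]
    calc _ ≤ (C₁ * ((2 : ℝ≥0∞) ^ j) ^ L₁.length * avS n l r p φ j (fl (j + 1) (xP z))) *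
          (((2 : ℝ≥0∞) ^ j) ^ L₂.length * ENNReal.ofReal c) :=
          mul_le_mul' (h1 φ hφm hφ j _) (mul_le_mul' le_rfl e3)
      _ = C₁ * ENNReal.ofReal c * (((2 : ℝ≥0∞) ^ j) ^ L.length *
          avS n l r p φ j (fl (j + 1) (xP z))) := by rw [← hlen, pow_add]; ring
      _ ≤ _ := by
          unfold bS
          refine mul_le_mul' le_rfl (mul_le_mul' ?_ le_rfl)
          exact pow_le_pow_right₀ (one_le_pow₀ (by norm_num)) hLl
  · have h0 : iterPD L₂ (chi d) ((2 : ℝ) ^ j • yP z) = 0 := by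
      refine iterPD_chi_zero L₂ ?_
      rw [norm_scale]
      have : ¬ ‖yP z‖ < (2 ^ (j + 2))⁻¹ := hz
      push Not at this
      calc (1 : ℝ) / 4 = 2 ^ j * (2 ^ (j + 2))⁻¹ := by rw [pow_add]; field_simp; norm_num
        _ ≤ _ := by gcongr
    rw [h0, mul_zero, mul_zero, enorm_zero]
    exact zero_le

lemma FS_sum {n d l : ℕ} {φ : Rn n → ℝ} (hφ : LocallyIntegrable φ volume) {i : ℕ}
    {z : Rn (n + d)} (hz : z ∈ annu n d (i + 1)) (a : ℝ) :
    ‖(∑' j, FS n d l φ j z) - a‖ₑ ≤ ‖phS n l φ i (xP z) - a‖ₑ + ‖phS n l φ (i + 1) (xP z) - a‖ₑ := by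
  have h1 : ‖yP z‖ < (2 ^ (i + 1 + 2))⁻¹ := hz.1
  have h2 : (2 ^ (i + 1 + 1 + 2))⁻¹ ≤ ‖yP z‖ := not_lt.1 hz.2
  have hbig : ∀ j, j ∉ Finset.range (i + 1 + 1) → FS n d l φ j z = 0 := by
    intro j hj
    have hj' : i + 1 + 1 ≤ j := by simpa using hj
    have : chi d ((2 : ℝ) ^ j • yP z) = 0 := by
      refine iterPD_chi_zero [] ?_
      rw [norm_scale]
      calc (1 : ℝ) / 4 = 2 ^ (i + 1 + 1) * (2 ^ (i + 1 + 1 + 2))⁻¹ := by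
            rw [pow_add _ (i + 1 + 1) 2]; field_simp; norm_num
        _ ≤ 2 ^ j * ‖yP z‖ := by gcongr; norm_num
    unfold FS
    rw [this]; simp
  have hsmall : ∀ j ∈ Finset.range (i + 1), FS n d l φ j z = uS n l φ j (xP z) := by
    intro j hj
    have hj' : j ≤ i := Nat.lt_succ_iff.1 (Finset.mem_range.1 hj)
    have : chi d ((2 : ℝ) ^ j • yP z) = 1 := by
      refine chi_one ?_
      rw [norm_scale]
      calc 2 ^ j * ‖yP z‖ ≤ (2 : ℝ) ^ i * (2 ^ (i + 1 + 2))⁻¹ := by gcongr; norm_num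
        _ = 1 / 8 := by rw [add_assoc, pow_add]; field_simp; norm_num
    unfold FS
    rw [this]; simp
  have hu : uS n l φ (i + 1) (xP z) = phS n l φ (i + 1) (xP z) - phS n l φ i (xP z) := by
    have := uS_sum (l := l) hφ (i + 1) (xP z)
    rw [Finset.sum_range_succ, uS_sum hφ] at this
    linarith
  rw [tsum_eq_sum hbig, Finset.sum_range_succ, Finset.sum_congr rfl hsmall, uS_sum hφ]
  obtain ⟨c0, c1⟩ := chi_mem d ((2 : ℝ) ^ (i + 1) • yP z)
  unfold FS
  rw [hu]
  set c := chi d ((2 : ℝ) ^ (i + 1) • yP z)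
  rw [← ofReal_norm, ← ofReal_norm, ← ofReal_norm, ← ENNReal.ofReal_add (norm_nonneg _)
    (norm_nonneg _)]
  refine ENNReal.ofReal_le_ofReal ?_
  have e : phS n l φ i (xP z) + (phS n l φ (i + 1) (xP z) - phS n l φ i (xP z)) * (1 * c) - a =
    (1 - c) * (phS n l φ i (xP z) - a) + c * (phS n l φ (i + 1) (xP z) - a) := by ring
  rw [e]
  refine (norm_add_le _ _).trans (add_le_add ?_ ?_)
  · rw [norm_mul]
    refine mul_le_of_le_one_left (norm_nonneg _) ?_
    rw [Real.norm_eq_abs, abs_le]; constructor <;> linarith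
  · rw [norm_mul]
    refine mul_le_of_le_one_left (norm_nonneg _) ?_
    rw [Real.norm_eq_abs, abs_le]; constructor <;> linarith

lemma xP_append {n d : ℕ} (x : Rn n) (y : Rn d) : xP (Fin.append x y) = x := by
  funext i; simp [xP]

lemma yP_append {n d : ℕ} (x : Rn n) (y : Rn d) : yP (Fin.append x y) = y := by
  funext i; simp [yP]

lemma cubeAt_sub {n : ℕ} (c : Rn n) {s : ℝ} (hs : 0 < s) :
    cubeAt c s ⊆ openCube 0 (‖c‖ + s + 1) := by
  intro x hx i
  have h := hx i
  have hc : |c i| ≤ ‖c‖ := norm_le_pi_norm c i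
  rw [abs_le] at hc
  rw [Pi.zero_apply, sub_zero, abs_lt]
  constructor <;> linarith [h.1, h.2, hc.1, hc.2]

lemma FS_trace {n d l : ℕ} (hd : 0 < d) (hl : 0 < l) {φ : Rn n → ℝ} (hφm : Measurable φ)
    (hφ : LocallyIntegrable φ volume) : IsTraceSob (fun z => ∑' j, FS n d l φ j z) φ := by
  refine ⟨fun z => if yP z = 0 then φ (xP z) else ∑' j, FS n d l φ j z, ?_, fun c s hs => ?_⟩
  · have : ∀ᵐ z : Rn (n + d) ∂volume, ¬ yP z = 0 := by
      rw [ae_iff]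
      simpa using volume_yzero (n := n) hd
    filter_upwards [this] with z hz
    rw [if_neg hz]
  · set R := ‖c‖ + s + 1 with hR
    have hR0 : 0 < R := by positivity
    have hsub : cubeAt c s ⊆ openCube 0 R := cubeAt_sub c hs
    have hlim := phS_L1 hl hφm hφ hR0
    rw [Metric.tendsto_nhds]
    intro ε hε
    have hε4 : 0 < ENNReal.ofReal (ε / 4) := by simpa using hε
    obtain ⟨J, hJ⟩ := eventually_atTop.1 (ENNReal.tendsto_nhds_zero.1 hlim _ hε4)
    have hnb : Metric.ball (0 : Rn d) ((2 ^ (J + 1 + 2))⁻¹) ∈ nhds 0 :=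
      Metric.ball_mem_nhds _ (by positivity)
    filter_upwards [hnb] with y hy
    rw [mem_ball_zero_iff] at hy
    rw [dist_zero_right]
    by_cases hy0 : y = 0
    · simp [xP_append, yP_append, hy0, hε]
    · have hyz : yP (Fin.append (0 : Rn n) y) ≠ 0 := by rwa [yP_append]
      have hsl : Fin.append (0 : Rn n) y ∈ slab n d (J + 1) := by
        change ‖yP (Fin.append (0 : Rn n) y)‖ < _
        rwa [yP_append]
      obtain ⟨i, hi⟩ := annu_exists hyz hsl
      have hann : ∀ x : Rn n, Fin.append x y ∈ annu n d (J + i + 1) := by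
        intro x
        have e : J + 1 + i = J + i + 1 := by ring
        rw [e] at hi
        have h1 : ‖yP (Fin.append (0 : Rn n) y)‖ < (2 ^ (J + i + 1 + 2))⁻¹ := hi.1
        have h2 : ¬ ‖yP (Fin.append (0 : Rn n) y)‖ < (2 ^ (J + i + 1 + 1 + 2))⁻¹ := hi.2
        rw [yP_append] at h1 h2
        constructor
        · change ‖yP (Fin.append x y)‖ < _
          rwa [yP_append]
        · change ¬ ‖yP (Fin.append x y)‖ < _
          rwa [yP_append]
      have hb : ‖∫ x in cubeAt c s, |(if yP (Fin.append x y) = 0 then φ (xP (Fin.append x y))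
          else ∑' j, FS n d l φ j (Fin.append x y)) - φ x|‖ₑ ≤ ENNReal.ofReal (ε / 2) := by
        refine (enorm_integral_le_lintegral_enorm _).trans ?_
        calc _ ≤ ∫⁻ x in cubeAt c s, (‖phS n l φ (J + i) x - φ x‖ₑ +
              ‖phS n l φ (J + i + 1) x - φ x‖ₑ) := by
              refine lintegral_mono fun x => ?_
              have h := FS_sum (l := l) hφ (hann x) (φ x)
              rw [xP_append] at h
              have hn : ¬ yP (Fin.append x y) = 0 := by rwa [yP_append]
              rw [if_neg hn, ← Real.norm_eq_abs, enorm_norm]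
              exact h
          _ ≤ ∫⁻ x in openCube 0 R, (‖phS n l φ (J + i) x - φ x‖ₑ +
              ‖phS n l φ (J + i + 1) x - φ x‖ₑ) := lintegral_mono_set hsub
          _ = (∫⁻ x in openCube 0 R, ‖phS n l φ (J + i) x - φ x‖ₑ) +
              ∫⁻ x in openCube 0 R, ‖phS n l φ (J + i + 1) x - φ x‖ₑ :=
              lintegral_add_left (((phS_cont hφ _).measurable.sub hφm).enorm) _
          _ ≤ ENNReal.ofReal (ε / 4) + ENNReal.ofReal (ε / 4) :=
              add_le_add (hJ _ (by omega)) (hJ _ (by omega))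
          _ = _ := by
              rw [← ENNReal.ofReal_add (by positivity) (by positivity)]
              congr 1; ring
      rw [← ofReal_norm] at hb
      have := (ENNReal.ofReal_le_ofReal_iff (by positivity)).1 hb
      exact this.trans_lt (by linarith)

lemma locInt_of_MemLrLoc {n : ℕ} {r : ℝ≥0∞} (hr1 : 1 ≤ r) {φ : Rn n → ℝ} (h : MemLrLoc n r φ) :
    LocallyIntegrable φ volume := by
  rw [locallyIntegrable_iff]
  intro K hK
  haveI : IsFiniteMeasure (volume.restrict K) := ⟨by
    rw [Measure.restrict_apply_univ]; exact hK.measure_lt_top⟩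
  exact (MemLp.integrable hr1 ⟨h.1.aestronglyMeasurable, h.2 K hK⟩)

/-- **Theorem 3.1, converse part: extension from `B̃^l_{p,p,r}(ℝⁿ,{γ_k})` into the weighted
Sobolev space.** -/
theorem sobolev_extension (n d : ℕ) (hn : 0 < n) (hd : 0 < d) (p r : ℝ≥0∞)
    (hp1 : 1 < p) (hp : p < ∞) (hr1 : 1 ≤ r) (hrp : r < p) (l : ℕ)
    (hl : (d : ℝ) / r.toReal < l)
    (γ : Rn (n + d) → ℝ) (hγ : IsWeight γ)
    (hA : MemAlocP (n + d) (p.toReal / r.toReal) (fun x => γ x ^ p.toReal)) :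
    ∃ C : ℝ≥0∞, 0 < C ∧ C < ∞ ∧
      ∀ φ : Rn n → ℝ, MemLrLoc n r φ →
        tildeBnormE n l p p r (gammaSeq n d p l γ) φ < ∞ →
        ∃ (f : Rn (n + d) → ℝ) (D : (Fin (n + d) → ℕ) → Rn (n + d) → ℝ),
          MemW (n + d) p l γ f D ∧ IsTraceSob f φ ∧
          sobNorm (n + d) p l γ D ≤ C * tildeBnormE n l p p r (gammaSeq n d p l γ) φ := by
  have hrt : r < ∞ := hrp.trans hp
  have hr1' : 1 ≤ r.toReal := by
    rw [← ENNReal.toReal_one]; exact ENNReal.toReal_mono hrt.ne hr1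
  have hrp' : r.toReal < p.toReal := (ENNReal.toReal_lt_toReal hrt.ne hp.ne).2 hrp
  have hp0 : 1 < p.toReal / r.toReal := by rw [lt_div_iff₀ (by linarith)]; linarith
  have hp0p : p.toReal / r.toReal ≤ p.toReal := div_le_self (by linarith) hr1'
  have hpP : 1 ≤ p.toReal := by linarith
  have hl0 : 0 < l := by
    have : (0 : ℝ) ≤ (d : ℝ) / r.toReal := by positivity
    exact_mod_cast this.trans_lt hl
  have hw : IsWeight (fun x => γ x ^ p.toReal) :=
    ⟨hγ.1.pow_const _, fun x => Real.rpow_pos_of_pos (hγ.2 x) _⟩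
  unfold MemAlocP at hA
  rw [if_neg hp0.ne'] at hA
  choose CL hCL hFB using fun L => FS_bound (n := n) (d := d) (l := l) hr1 hrt hpP L
  obtain ⟨C', hC', hser⟩ := ser_assemble (l := l) hγ hp1 hp hCL
  obtain ⟨C₁, hC₁, hmaj⟩ := maj_bound (n := n) hd hp0 hpP hw hA
  set C₂ : ℝ≥0∞ := (2 ^ n * 2) ^ (1 / p.toReal) with hC₂
  have hC₂t : C₂ < ∞ :=
    ENNReal.rpow_lt_top_of_nonneg (by positivity) (by finiteness)
  refine ⟨C' * (C₁ * C₂) + 1, by simp, ?_, fun φ hφ hN => ?_⟩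
  · have := hC'.ne; have := hC₁.ne; have := hC₂t.ne; finiteness
  have hφl := locInt_of_MemLrLoc hr1 hφ
  set N := tildeBnormE n l p p r (gammaSeq n d p l γ) φ with hNdef
  set b := bS n l r p.toReal φ with hb
  have hMb : (∫⁻ z, maj d b z ^ p.toReal ∂wMeas fun x => γ x ^ p.toReal) ^ (1 / p.toReal) ≤
      C₁ * C₂ * N := by
    refine (hmaj b).trans ?_
    rw [mul_assoc]
    exact mul_le_mul' le_rfl (bS_sum hp1 hp hγ φ)
  have hMt : (∫⁻ z, maj d b z ^ p.toReal ∂wMeas fun x => γ x ^ p.toReal) ^ (1 / p.toReal) < ∞ :=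
    hMb.trans_lt (ENNReal.mul_lt_top (ENNReal.mul_lt_top hC₁ hC₂t) hN)
  have hMt' : ∫⁻ z, maj d b z ^ p.toReal ∂wMeas (fun x => γ x ^ p.toReal) < ∞ := by
    by_contra hc
    rw [not_lt, top_le_iff] at hc
    rw [hc, ENNReal.top_rpow_of_pos (by positivity)] at hMt
    exact lt_irrefl _ hMt
  obtain ⟨hW, hS⟩ := hser (FS n d l φ)
    (fun j z => (slab n d j).indicator (fun z => b j (fl (j + 1) (xP z))) z)
    (FS_smooth hφl) (maj_measurable b) (maj_local hp0 hp0p hw hA (maj_measurable b) hMt')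
    (fun L hL => hFB L φ hφ.1 hφl hL) hMt
  refine ⟨_, _, hW, ?_, hS.trans ?_⟩
  · rw [serD_zero]
    exact FS_trace hd hl0 hφ.1 hφl
  · calc _ ≤ C' * (C₁ * C₂ * N) := mul_le_mul' le_rfl hMb
      _ = C' * (C₁ * C₂) * N := by ring
      _ ≤ _ := mul_le_mul' le_self_add le_rfl

end
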